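/- arXiv:1809.06931 — 9 statements merged into one kernel-verified Lean document; each statement's English description precedes it below -/
import Mathlib

section
/- For every odd prime q there exists a (q + 1)-partite hypergraph H with matching number ν(H) = 2 and vertex cover number τ(H) = 2q such that H does not contain two vertex disjoint subhypergraphs each of which is an intersecting (q + 1)-Ryser hypergraph. -/
/-- `B` is a vertex cover of the hypergraph with edge set `E`: it meets every edge. -/
def IsCover {α : Type} [DecidableEq α] (E : Finset (Finset α)) (B : Finset α) : Prop :=
  ∀ e ∈ E, (e ∩ B).Nonempty

/-- `M` is a matching of the hypergraph with edge set `E`: a set of pairwise disjoint edges. -/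
def IsMatching {α : Type} [DecidableEq α] (E : Finset (Finset α)) (M : Finset (Finset α)) : Prop :=
  M ⊆ E ∧ ∀ e ∈ M, ∀ f ∈ M, e ≠ f → Disjoint e f

/-- The vertex cover number `τ`: the minimum size of a vertex cover. -/
noncomputable def coverNumber {α : Type} [DecidableEq α] (E : Finset (Finset α)) : ℕ :=
  sInf {n | ∃ B : Finset α, IsCover E B ∧ B.card = n}

/-- The matching number `ν`: the maximum size of a matching. -/
noncomputable def matchingNumber {α : Type} [DecidableEq α] (E : Finset (Finset α)) : ℕ :=
  sSup {n | ∃ M : Finset (Finset α), IsMatching E M ∧ M.card = n}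

/-- The hypergraph with vertex set `V` and edge set `E` is `r`-partite: `V` is partitioned into
`r` pairwise disjoint sides such that every edge contains exactly one vertex of each side. -/
def IsPartite {α : Type} [DecidableEq α] (r : ℕ) (V : Finset α) (E : Finset (Finset α)) : Prop :=
  (∀ e ∈ E, e ⊆ V) ∧
  ∃ sides : Fin r → Finset α,
    (∀ i j, i ≠ j → Disjoint (sides i) (sides j)) ∧
    V = Finset.univ.biUnion sides ∧
    ∀ e ∈ E, ∀ i, (e ∩ sides i).card = 1

/-- The subhypergraph of `(·, E)` determined by the edge subset `E'` (whose vertex set is the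
union of the edges of `E'`) is an intersecting `r`-Ryser hypergraph: it is `r`-partite, has
matching number `1`, and has vertex cover number at least `(r-1)` times its matching number. -/
def IsIntersectingRyserSub {α : Type} [DecidableEq α] (r : ℕ)
    (E E' : Finset (Finset α)) : Prop :=
  E' ⊆ E ∧ IsPartite r (E'.sup id) E' ∧ matchingNumber E' = 1 ∧
    (r - 1) * matchingNumber E' ≤ coverNumber E'


namespace RyserAux

variable {q : ℕ} [Fact q.Prime]

abbrev Vx (q : ℕ) := Option (ZMod q) × (Bool × ZMod q)
abbrev Fn (q : ℕ) := Option (ZMod q) → Bool × ZMod q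

def kf (u v : ZMod q) : Fn q
  | none => (false, u)
  | some s => (false, u * s + v)
def xf (i : ZMod q) : Fn q
  | none => (true, i)
  | some _ => (false, 0)
def pf (a b : ZMod q) : Fn q
  | none => (true, a + b)
  | some s => (true, (s - a) * (s - b))
def sf : Fn q
  | none => (false, 0)
  | some _ => (true, 0)

/-- the edge functions of the first family -/
def P0 (g : Fn q) : Prop := (∃ u v, u ≠ 0 ∧ g = kf u v) ∨ (∃ i, g = xf i)
/-- the edge functions of the second family -/
def P1 (g : Fn q) : Prop := (∃ a b, g = pf a b) ∨ g = sf

lemma inter_lin {u v u' v' : ZMod q} (h : u ≠ u') : ∃ s : ZMod q, u * s + v = u' * s + v' := by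
  refine ⟨(v' - v) / (u - u'), ?_⟩
  have : u - u' ≠ 0 := sub_ne_zero.mpr h
  field_simp
  ring

lemma P0_inter {g h : Fn q} (hg : P0 g) (hh : P0 h) : ∃ i, g i = h i := by
  rcases hg with ⟨u, v, hu, rfl⟩ | ⟨i, rfl⟩ <;> rcases hh with ⟨u', v', hu', rfl⟩ | ⟨j, rfl⟩
  · by_cases h : u = u'
    · exact ⟨none, by simp [kf, h]⟩
    · obtain ⟨s, hs⟩ := inter_lin (v := v) (v' := v') h
      exact ⟨some s, by simp [kf, hs]⟩
  · refine ⟨some (-v / u), ?_⟩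
    simp only [kf, xf, Prod.mk.injEq, true_and]
    field_simp
    ring
  · refine ⟨some (-v' / u'), ?_⟩
    simp only [kf, xf, Prod.mk.injEq, true_and]
    field_simp
    ring
  · exact ⟨some 0, rfl⟩

lemma P1_inter {g h : Fn q} (hg : P1 g) (hh : P1 h) : ∃ i, g i = h i := by
  rcases hg with ⟨a, b, rfl⟩ | rfl <;> rcases hh with ⟨c, d, rfl⟩ | rfl
  · by_cases h : a + b = c + d
    · exact ⟨none, by simp [pf, h]⟩
    · obtain ⟨s, hs⟩ := inter_lin (v := c * d) (v' := a * b) h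
      refine ⟨some s, ?_⟩
      simp only [pf, Prod.mk.injEq, true_and]
      linear_combination -hs
  · exact ⟨some a, by simp [pf, sf]⟩
  · exact ⟨some c, by simp [pf, sf]⟩
  · exact ⟨none, rfl⟩

lemma L1 (S : Finset (Option (ZMod q) × ZMod q))
    (h : ∀ a b : ZMod q, (none, a + b) ∈ S ∨ ∃ s, (some s, (s - a) * (s - b)) ∈ S) :
    q ≤ S.card := by
  classical
  by_cases hall : ∀ s : ZMod q, (some s, (0 : ZMod q)) ∈ S
  · have := Finset.card_le_card_of_injOn (s := (Finset.univ : Finset (ZMod q))) (t := S)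
      (fun s => (some s, 0)) (fun s _ => hall s) (by intro a _ b _ hab; simpa using hab)
    simpa [ZMod.card] using this
  · push Not at hall
    obtain ⟨a, ha⟩ := hall
    have key : ∀ b : ZMod q, ∃ x ∈ S, (x = (some b, 0)) ∨
        ((some b, (0 : ZMod q)) ∉ S ∧
          (x = (none, a + b) ∨ ∃ s, s ≠ a ∧ s ≠ b ∧ x = (some s, (s - a) * (s - b)))) := by
      intro b
      by_cases hb : (some b, (0 : ZMod q)) ∈ S
      · exact ⟨_, hb, Or.inl rfl⟩
      · rcases h a b with h1 | ⟨s, hs⟩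
        · exact ⟨_, h1, Or.inr ⟨hb, Or.inl rfl⟩⟩
        · refine ⟨_, hs, Or.inr ⟨hb, Or.inr ⟨s, ?_, ?_, rfl⟩⟩⟩
          · rintro rfl; simp at hs; exact ha hs
          · rintro rfl; simp at hs; exact hb hs
    choose f hfS hf using key
    have := Finset.card_le_card_of_injOn (s := (Finset.univ : Finset (ZMod q))) (t := S)
      f (fun s _ => hfS s) (by
        intro b _ c _ hbc
        have nz : ∀ s d : ZMod q, s ≠ a → s ≠ d → (s - a) * (s - d) ≠ 0 := fun s d h1 h2 =>
          mul_ne_zero (sub_ne_zero.mpr h1) (sub_ne_zero.mpr h2)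
        rcases hf b with h1 | ⟨hb, h1 | ⟨s, hsa, hsb, h1⟩⟩ <;>
        rcases hf c with h2 | ⟨hc, h2 | ⟨t, hta, htc, h2⟩⟩ <;>
        rw [h1, h2] at hbc <;> simp only [Prod.mk.injEq, Option.some.injEq, reduceCtorEq,
          false_and, true_and] at hbc
        · exact hbc.1
        · exact absurd hbc.2.symm (nz t c hta htc)
        · exact add_left_cancel hbc
        · exact absurd hbc.2 (nz s b hsa hsb)
        · obtain ⟨rfl, h3⟩ := hbc
          have := mul_left_cancel₀ (sub_ne_zero.mpr hsa) h3
          linear_combination -this)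
    simpa [ZMod.card] using this

lemma L2 (S : Finset (Option (ZMod q) × ZMod q))
    (h : ∀ u v : ZMod q, u ≠ 0 → (none, u) ∈ S ∨ ∃ s, (some s, u * s + v) ∈ S) :
    q ≤ S.card + 1 ∧ (((none, 0) ∈ S ∨ ∃ s, (some s, 0) ∈ S) → q ≤ S.card) := by
  classical
  by_cases hall : ∀ u : ZMod q, u ≠ 0 → (none, u) ∈ S
  · have hsub : (Finset.univ.erase (0 : ZMod q)).image (fun u => (none, u)) ⊆ S := by
      intro x hx
      simp only [Finset.mem_image, Finset.mem_erase, Finset.mem_univ, and_true] at hx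
      obtain ⟨u, hu, rfl⟩ := hx
      exact hall u hu
    have hc : ((Finset.univ.erase (0 : ZMod q)).image
        (fun u => ((none, u) : Option (ZMod q) × ZMod q))).card = q - 1 := by
      rw [Finset.card_image_of_injective _ (by intro a b hab; simpa using hab)]
      simp [ZMod.card]
    have hq := (Fact.out : q.Prime).pos
    refine ⟨?_, ?_⟩
    · have := Finset.card_le_card hsub
      omega
    · intro hx
      obtain ⟨x, hxS, hx⟩ : ∃ x ∈ S, x ∉ (Finset.univ.erase (0 : ZMod q)).image
          (fun u => ((none, u) : Option (ZMod q) × ZMod q)) := by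
        rcases hx with h1 | ⟨s, h1⟩
        · exact ⟨_, h1, by simp⟩
        · exact ⟨_, h1, by simp⟩
      have := Finset.card_lt_card (Finset.ssubset_iff_subset_ne.mpr
        ⟨hsub, fun he => hx (he ▸ hxS)⟩)
      omega
  · push Not at hall
    obtain ⟨u, hu, huS⟩ := hall
    have key : ∀ v : ZMod q, ∃ s, (some s, u * s + v) ∈ S := fun v =>
      (h u v hu).resolve_left huS
    choose f hf using key
    have := Finset.card_le_card_of_injOn (s := (Finset.univ : Finset (ZMod q))) (t := S)
      (fun v => (some (f v), u * f v + v)) (fun s _ => hf s) (by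
        intro a _ b _ hab
        simp only [Prod.mk.injEq, Option.some.injEq] at hab
        obtain ⟨h1, h2⟩ := hab
        rw [h1] at h2
        exact add_left_cancel h2)
    simp [ZMod.card] at this
    exact ⟨by omega, fun _ => this⟩

section
variable (φ : Vx q → ℕ)

def ed (g : Fn q) : Finset ℕ := Finset.univ.image (fun i => φ (i, g i))

open Classical in
noncomputable def EE : Finset (Finset ℕ) :=
  (Finset.univ.filter (fun g : Fn q => P0 g ∨ P1 g)).image (ed φ)

variable {φ}

lemma mem_ed {g : Fn q} {n : ℕ} : n ∈ ed φ g ↔ ∃ i, φ (i, g i) = n := by simp [ed]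

lemma mem_EE {e : Finset ℕ} : e ∈ EE φ ↔ ∃ g : Fn q, (P0 g ∨ P1 g) ∧ ed φ g = e := by
  simp [EE]

lemma not_disj {g h : Fn q} (i) (hi : g i = h i) : ¬ Disjoint (ed φ g) (ed φ h) := by
  rw [Finset.not_disjoint_iff]
  exact ⟨φ (i, g i), mem_ed.mpr ⟨i, rfl⟩, mem_ed.mpr ⟨i, by rw [hi]⟩⟩

lemma disj_ne (hφ : Function.Injective φ) {g h : Fn q} (hh : ¬ Disjoint (ed φ g) (ed φ h)) :
    ∃ i, g i = h i := by
  rw [Finset.not_disjoint_iff] at hh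
  obtain ⟨n, h1, h2⟩ := hh
  obtain ⟨i, rfl⟩ := mem_ed.mp h1
  obtain ⟨j, hj⟩ := mem_ed.mp h2
  have := hφ hj
  simp only [Prod.mk.injEq] at this
  obtain ⟨rfl, h3⟩ := this
  exact ⟨j, h3.symm⟩

lemma hit {g : Fn q} {B : Finset ℕ} : (ed φ g ∩ B).Nonempty ↔ ∃ i, φ (i, g i) ∈ B := by
  constructor
  · rintro ⟨n, hn⟩
    obtain ⟨h1, h2⟩ := Finset.mem_inter.mp hn
    obtain ⟨i, rfl⟩ := mem_ed.mp h1
    exact ⟨i, h2⟩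
  · rintro ⟨i, hi⟩
    exact ⟨_, Finset.mem_inter.mpr ⟨mem_ed.mpr ⟨i, rfl⟩, hi⟩⟩

lemma matching_le {E M : Finset (Finset ℕ)} (h : IsMatching E M) : M.card ≤ matchingNumber E := by
  apply le_csSup
  · exact ⟨E.card, by rintro n ⟨M, hM, rfl⟩; exact Finset.card_le_card hM.1⟩
  · exact ⟨M, h, rfl⟩

lemma cover_ge {E : Finset (Finset ℕ)} {B : Finset ℕ} (h : IsCover E B) :
    coverNumber E ≤ B.card := Nat.sInf_le ⟨B, h, rfl⟩

lemma partite (hφ : Function.Injective φ) : ∃ V, IsPartite (q + 1) V (EE φ) := by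
  classical
  have hc : Fintype.card (Fin (q + 1)) = Fintype.card (Option (ZMod q)) := by
    simp [ZMod.card]
  let e := Fintype.equivOfCardEq hc
  let sides : Fin (q + 1) → Finset ℕ := fun i => Finset.univ.image (fun x => φ (e i, x))
  refine ⟨Finset.univ.biUnion sides, ?_, sides, ?_, rfl, ?_⟩
  · intro E hE n hn
    obtain ⟨g, -, rfl⟩ := mem_EE.mp hE
    obtain ⟨i, rfl⟩ := mem_ed.mp hn
    simp only [Finset.mem_biUnion, Finset.mem_univ, true_and, sides, Finset.mem_image]
    exact ⟨e.symm i, g i, by simp⟩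
  · intro i j hij
    rw [Finset.disjoint_left]
    intro n h1 h2
    simp only [sides, Finset.mem_image, Finset.mem_univ, true_and] at h1 h2
    obtain ⟨x, rfl⟩ := h1
    obtain ⟨y, hy⟩ := h2
    have := hφ hy
    simp only [Prod.mk.injEq] at this
    exact hij (e.injective this.1.symm)
  · intro E hE i
    obtain ⟨g, -, rfl⟩ := mem_EE.mp hE
    rw [Finset.card_eq_one]
    refine ⟨φ (e i, g (e i)), ?_⟩
    ext n
    simp only [Finset.mem_inter, mem_ed, sides, Finset.mem_image, Finset.mem_univ, true_and,
      Finset.mem_singleton]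
    constructor
    · rintro ⟨⟨j, rfl⟩, x, hx⟩
      have := hφ hx
      simp only [Prod.mk.injEq] at this
      rw [← this.1]
    · rintro rfl
      exact ⟨⟨_, rfl⟩, _, rfl⟩

lemma same_inter {g h : Fn q} (H : (P0 g ∧ P0 h) ∨ (P1 g ∧ P1 h)) :
    ¬ Disjoint (ed φ g) (ed φ h) := by
  rcases H with ⟨a, b⟩ | ⟨a, b⟩
  · obtain ⟨i, hi⟩ := P0_inter a b; exact not_disj i hi
  · obtain ⟨i, hi⟩ := P1_inter a b; exact not_disj i hi

lemma matching_two (hφ : Function.Injective φ) : matchingNumber (EE φ) = 2 := by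
  classical
  apply le_antisymm
  · apply csSup_le
    · exact ⟨0, ∅, ⟨by simp, by simp⟩, rfl⟩
    · rintro n ⟨M, ⟨hM, hd⟩, rfl⟩
      by_contra hlt
      push Not at hlt
      obtain ⟨x, y, z, hx, hy, hz, hxy, hxz, hyz⟩ := Finset.two_lt_card_iff.mp hlt
      have dxy := hd x hx y hy hxy
      have dxz := hd x hx z hz hxz
      have dyz := hd y hy z hz hyz
      obtain ⟨f, hf, rfl⟩ := mem_EE.mp (hM hx)
      obtain ⟨g, hg, rfl⟩ := mem_EE.mp (hM hy)
      obtain ⟨h, hh, rfl⟩ := mem_EE.mp (hM hz)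
      have a1 := fun H => same_inter (φ := φ) (g := f) (h := g) H dxy
      have a2 := fun H => same_inter (φ := φ) (g := f) (h := h) H dxz
      have a3 := fun H => same_inter (φ := φ) (g := g) (h := h) H dyz
      tauto
  · have hd : Disjoint (ed φ (xf (0 : ZMod q))) (ed φ (sf : Fn q)) := by
      by_contra h
      obtain ⟨i, hi⟩ := disj_ne hφ h
      cases i <;> simp [xf, sf] at hi
    have hne : ed φ (xf (0 : ZMod q)) ≠ ed φ (sf : Fn q) := by
      intro h
      have := not_disj (φ := φ) (g := (sf : Fn q)) (h := sf) none rfl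
      rw [h] at hd
      exact this hd
    have hm : IsMatching (EE φ) {ed φ (xf (0 : ZMod q)), ed φ (sf : Fn q)} := by
      refine ⟨?_, ?_⟩
      · intro e he
        simp only [Finset.mem_insert, Finset.mem_singleton] at he
        rcases he with rfl | rfl
        · exact mem_EE.mpr ⟨_, Or.inl (Or.inr ⟨0, rfl⟩), rfl⟩
        · exact mem_EE.mpr ⟨_, Or.inr (Or.inr rfl), rfl⟩
      · intro e he f hf hef
        simp only [Finset.mem_insert, Finset.mem_singleton] at he hf
        rcases he with rfl | rfl <;> rcases hf with rfl | rfl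
        · exact absurd rfl hef
        · exact hd
        · exact hd.symm
        · exact absurd rfl hef
    have := matching_le hm
    rwa [Finset.card_pair hne] at this

lemma cover_two (hφ : Function.Injective φ) : coverNumber (EE φ) = 2 * q := by
  classical
  apply le_antisymm
  · have hc : IsCover (EE φ) (Finset.univ.image (fun x : Bool × ZMod q => φ (none, x))) := by
      intro e he
      obtain ⟨g, -, rfl⟩ := mem_EE.mp he
      exact hit.mpr ⟨none, by simp⟩
    refine (cover_ge hc).trans (Finset.card_image_le.trans ?_)
    simp [ZMod.card]
  · apply le_csInf
    · exact ⟨_, _, (show IsCover (EE φ) (Finset.univ.image φ) from by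
        intro e he
        obtain ⟨g, -, rfl⟩ := mem_EE.mp he
        exact hit.mpr ⟨none, by simp⟩), rfl⟩
    · rintro n ⟨B, hB, rfl⟩
      have hP : ∀ g : Fn q, (P0 g ∨ P1 g) → ∃ i, φ (i, g i) ∈ B := fun g hg =>
        hit.mp (hB _ (mem_EE.mpr ⟨g, hg, rfl⟩))
      let T : Bool → Finset (Option (ZMod q) × ZMod q) := fun c =>
        Finset.univ.filter (fun p => φ (p.1, (c, p.2)) ∈ B)
      have hT : ∀ c p, p ∈ T c ↔ φ (p.1, (c, p.2)) ∈ B := by intro c p; simp [T]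
      have hcard : (T false).card + (T true).card ≤ B.card := by
        have hi : ∀ c, Function.Injective
            (fun p : Option (ZMod q) × ZMod q => φ (p.1, (c, p.2))) := by
          rintro c ⟨a, b⟩ ⟨a', b'⟩ h
          have := hφ h
          simp only [Prod.mk.injEq, true_and] at this
          ext1
          · exact this.1
          · exact this.2
        rw [← Finset.card_image_of_injective (T false) (hi false),
          ← Finset.card_image_of_injective (T true) (hi true),
          ← Finset.card_union_of_disjoint]
        · apply Finset.card_le_card
          intro n hn
          simp only [Finset.mem_union, Finset.mem_image] at hn
          rcases hn with ⟨p, hp, rfl⟩ | ⟨p, hp, rfl⟩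
          · exact (hT _ _).mp hp
          · exact (hT _ _).mp hp
        · rw [Finset.disjoint_left]
          intro n h1 h2
          simp only [Finset.mem_image] at h1 h2
          obtain ⟨p, -, rfl⟩ := h1
          obtain ⟨p', -, h⟩ := h2
          have := hφ h
          simp at this
      have h1 : q ≤ (T true).card := by
        apply L1
        intro a b
        obtain ⟨i, hi⟩ := hP (pf a b) (Or.inr (Or.inl ⟨a, b, rfl⟩))
        cases i with
        | none => left; exact (hT _ _).mpr hi
        | some s => right; exact ⟨s, (hT _ _).mpr hi⟩
      have h2 := L2 (T false) (by
        intro u v hu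
        obtain ⟨i, hi⟩ := hP (kf u v) (Or.inl (Or.inl ⟨u, v, hu, rfl⟩))
        cases i with
        | none => left; exact (hT _ _).mpr hi
        | some s => right; exact ⟨s, (hT _ _).mpr hi⟩)
      by_cases hW : ∀ i : ZMod q, ((none, i) : Option (ZMod q) × ZMod q) ∈ T true
      · obtain ⟨i, hi⟩ := hP sf (Or.inr (Or.inr rfl))
        cases i with
        | none =>
          have := h2.2 (Or.inl ((hT _ _).mpr hi))
          omega
        | some s =>
          have hs : ((some s, 0) : Option (ZMod q) × ZMod q) ∈ T true := (hT _ _).mpr hi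
          have hsub : insert (some s, 0) (Finset.univ.image
              (fun i : ZMod q => ((none, i) : Option (ZMod q) × ZMod q))) ⊆ T true := by
            intro x hx
            simp only [Finset.mem_insert, Finset.mem_image, Finset.mem_univ, true_and] at hx
            rcases hx with rfl | ⟨i, rfl⟩
            · exact hs
            · exact hW i
          have := Finset.card_le_card hsub
          rw [Finset.card_insert_of_notMem (by simp),
            Finset.card_image_of_injective _ (by intro a b hab; simpa using hab)] at this
          simp [ZMod.card] at this
          omega
      · push Not at hW
        obtain ⟨j, hj⟩ := hW
        obtain ⟨i, hi⟩ := hP (xf j) (Or.inl (Or.inr ⟨j, rfl⟩))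
        cases i with
        | none => exact absurd ((hT _ _).mpr hi) hj
        | some s =>
          have := h2.2 (Or.inr ⟨s, (hT _ _).mpr hi⟩)
          omega

lemma classify (hφ : Function.Injective φ) (hodd : Odd q) {A : Finset (Finset ℕ)}
    (hA : IsIntersectingRyserSub (q + 1) (EE φ) A) :
    (∃ i : ZMod q, ed φ (xf i) ∈ A) ∨
    (∀ i : ZMod q, ∃ a b, a + b = i ∧ ed φ (pf a b) ∈ A) := by
  classical
  obtain ⟨hsub, -, hm, ht⟩ := hA
  have hq := (Fact.out : q.Prime).two_le
  have hcov : ∀ B, IsCover A B → q ≤ B.card := by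
    intro B hB
    have := cover_ge hB
    rw [hm] at ht
    simp at ht
    omega
  have hint : ∀ e ∈ A, ∀ f ∈ A, e ≠ f → ¬ Disjoint e f := by
    intro e he f hf hne hd
    have : IsMatching A {e, f} := by
      refine ⟨?_, ?_⟩
      · intro x hx
        simp only [Finset.mem_insert, Finset.mem_singleton] at hx
        rcases hx with rfl | rfl <;> assumption
      · intro x hx y hy hxy
        simp only [Finset.mem_insert, Finset.mem_singleton] at hx hy
        rcases hx with rfl | rfl <;> rcases hy with rfl | rfl
        · exact absurd rfl hxy
        · exact hd
        · exact hd.symm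
        · exact absurd rfl hxy
    have := matching_le this
    rw [Finset.card_pair hne] at this
    omega
  by_contra hcon
  push Not at hcon
  obtain ⟨hx, i, hi⟩ := hcon
  by_cases hk : ∃ u v : ZMod q, u ≠ 0 ∧ ed φ (kf u v) ∈ A
  · obtain ⟨u, v, hu, hA⟩ := hk
    have := hcov ((Finset.univ.erase (0 : ZMod q)).image (fun u => φ (none, (false, u)))) (by
      intro e he
      have hne : ¬ Disjoint (ed φ (kf u v)) e := by
        by_cases h : ed φ (kf u v) = e
        · rw [← h]; exact not_disj none rfl
        · exact hint _ hA _ he h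
      obtain ⟨g, hg, rfl⟩ := mem_EE.mp (hsub he)
      obtain ⟨j, hj⟩ := disj_ne hφ hne
      rcases hg with (⟨u', v', hu', rfl⟩ | ⟨j', rfl⟩) | (⟨a, b, rfl⟩ | rfl)
      · refine hit.mpr ⟨none, ?_⟩
        simp only [kf, Finset.mem_image, Finset.mem_erase, Finset.mem_univ, and_true]
        exact ⟨u', hu', rfl⟩
      · exact absurd he (hx j')
      · cases j <;> simp [kf, pf] at hj
      · cases j <;> simp [kf, sf] at hj
        exact absurd hj hu)
    have h2 := this.trans Finset.card_image_le
    simp [ZMod.card] at h2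
    omega
  · push Not at hk
    have h2 : (2 : ZMod q) ≠ 0 := by
      intro h
      have h' : ((2 : ℕ) : ZMod q) = 0 := by exact_mod_cast h
      rw [ZMod.natCast_eq_zero_iff] at h'
      have := Nat.le_of_dvd (by norm_num) h'
      have : q = 2 := by omega
      subst this
      exact absurd hodd (by decide)
    set m : ZMod q := i / 2 with hmdef
    have hmi : m + m = i := by rw [hmdef]; field_simp; ring
    have hone : (1 : ZMod q) ≠ 0 := one_ne_zero
    have := hcov (insert (φ (some m, (true, 1)))
      (((Finset.univ.erase (m + 1)).erase (m - 1)).image (fun s => φ (some s, (true, 0))))) (by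
      intro e he
      have hz : ∀ s : ZMod q, s ≠ m + 1 → s ≠ m - 1 → φ (some s, (true, 0)) ∈
          insert (φ (some m, (true, 1))) (((Finset.univ.erase (m + 1)).erase (m - 1)).image
            (fun s => φ (some s, (true, 0)))) := by
        intro s h1 h2
        simp only [Finset.mem_insert, Finset.mem_image, Finset.mem_erase, Finset.mem_univ,
          and_true]
        exact Or.inr ⟨s, ⟨h2, h1⟩, rfl⟩
      obtain ⟨g, hg, rfl⟩ := mem_EE.mp (hsub he)
      rw [hit]
      rcases hg with (⟨u', v', hu', rfl⟩ | ⟨j', rfl⟩) | (⟨a, b, rfl⟩ | rfl)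
      · exact absurd he (hk u' v' hu')
      · exact absurd he (hx j')
      · have hab : a + b ≠ i := fun h => hi a b h he
        by_cases ha : a ≠ m + 1 ∧ a ≠ m - 1
        · refine ⟨some a, ?_⟩
          have := hz a ha.1 ha.2
          simpa [pf] using this
        by_cases hb : b ≠ m + 1 ∧ b ≠ m - 1
        · refine ⟨some b, ?_⟩
          have := hz b hb.1 hb.2
          simpa [pf] using this
        refine ⟨some m, ?_⟩
        have : (m - a) * (m - b) = 1 := by
          have ha' : a = m + 1 ∨ a = m - 1 := by tauto
          have hb' : b = m + 1 ∨ b = m - 1 := by tauto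
          rcases ha' with rfl | rfl <;> rcases hb' with rfl | rfl
          · ring
          · exact absurd (by rw [← hmi]; ring) hab
          · exact absurd (by rw [← hmi]; ring) hab
          · ring
        simp [pf, this]
      · refine ⟨some m, hz m ?_ ?_⟩
        · intro h; exact hone (by linear_combination -h)
        · intro h; exact hone (by linear_combination h))
    have h3 := (this.trans (Finset.card_insert_le _ _)).trans
      (Nat.add_le_add_right Finset.card_image_le 1)
    have hne : m - 1 ≠ m + 1 := by
      intro h; exact h2 (by linear_combination -h)
    rw [Finset.card_erase_of_mem (by simp [hne]), Finset.card_erase_of_mem (by simp)] at h3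
    simp [ZMod.card] at h3
    have : q ≠ 2 := by rintro rfl; exact absurd hodd (by decide)
    omega

end

end RyserAux

/-- For every odd prime `q` there exists a `(q + 1)`-partite hypergraph `H` with matching
number `2` and vertex cover number `2q` that does not contain two vertex disjoint
subhypergraphs each of which is an intersecting `(q + 1)`-Ryser hypergraph. -/
theorem statement3 (q : ℕ) (hq : q.Prime) (hodd : Odd q) :
    ∃ (V : Finset ℕ) (E : Finset (Finset ℕ)),
      IsPartite (q + 1) V E ∧
      matchingNumber E = 2 ∧
      coverNumber E = 2 * q ∧
      ¬ ∃ E₁ E₂ : Finset (Finset ℕ),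
          IsIntersectingRyserSub (q + 1) E E₁ ∧ IsIntersectingRyserSub (q + 1) E E₂ ∧
          Disjoint (E₁.sup id) (E₂.sup id) := by
  have : Fact q.Prime := ⟨hq⟩
  obtain ⟨φ, hφ⟩ := exists_injective_nat (RyserAux.Vx q)
  obtain ⟨V, hV⟩ := RyserAux.partite hφ
  refine ⟨V, RyserAux.EE φ, hV, RyserAux.matching_two hφ, RyserAux.cover_two hφ, ?_⟩
  rintro ⟨A, B, hA, hB, hd⟩
  have hdis : ∀ e ∈ A, ∀ f ∈ B, Disjoint e f := fun e he f hf =>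
    hd.mono (Finset.le_sup (f := id) he) (Finset.le_sup (f := id) hf)
  rcases RyserAux.classify hφ hodd hA with ⟨i, hi⟩ | h1 <;>
  rcases RyserAux.classify hφ hodd hB with ⟨j, hj⟩ | h2
  · exact RyserAux.not_disj (g := RyserAux.xf i) (h := RyserAux.xf j) (some 0) rfl (hdis _ hi _ hj)
  · obtain ⟨a, b, hab, hm⟩ := h2 i
    exact RyserAux.not_disj none (by simp [RyserAux.xf, RyserAux.pf, hab]) (hdis _ hi _ hm)
  · obtain ⟨a, b, hab, hm⟩ := h1 j
    exact RyserAux.not_disj none (by simp [RyserAux.xf, RyserAux.pf, hab]) (hdis _ hm _ hj)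
  · obtain ⟨a, b, hab, hm⟩ := h1 0
    obtain ⟨c, d, hcd, hn⟩ := h2 0
    exact RyserAux.not_disj none (by simp [RyserAux.pf, hab, hcd]) (hdis _ hm _ hn)
end

section
/- For every prime power q with q ≥ 4 there exists a (q + 1)-partite hypergraph H with matching number ν(H) = 2 and vertex cover number τ(H) = 2q such that H does not contain two vertex disjoint subhypergraphs each of which is an intersecting (q + 1)-Ryser hypergraph. -/
namespace RyserAux

set_option linter.unusedSectionVars false
set_option linter.unusedVariables false

section Final
variable {ι W : Type} [Fintype ι] [DecidableEq ι] [Nonempty ι] [Fintype W] [DecidableEq W]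

/-- the edge associated with a function -/
def mk (c : ι × W ↪ ℕ) (e : ι → W) : Finset ℕ := Finset.univ.image (fun i => c (i, e i))

lemma mem_mk (c : ι × W ↪ ℕ) (e : ι → W) (n : ℕ) : n ∈ mk c e ↔ ∃ i, c (i, e i) = n := by
  simp [mk]

lemma disj_mk (c : ι × W ↪ ℕ) (e f : ι → W) :
    Disjoint (mk c e) (mk c f) ↔ ∀ i, e i ≠ f i := by
  rw [Finset.disjoint_left]
  constructor
  · intro h i hi
    exact h ((mem_mk c e _).2 ⟨i, rfl⟩) ((mem_mk c f _).2 ⟨i, by rw [hi]⟩)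
  · intro h n hn hn'
    obtain ⟨i, hi⟩ := (mem_mk c e _).1 hn
    obtain ⟨j, hj⟩ := (mem_mk c f _).1 hn'
    have := c.injective (hi.trans hj.symm)
    simp only [Prod.mk.injEq] at this
    obtain ⟨rfl, h2⟩ := this
    exact h i h2

lemma cover_up (c : ι × W ↪ ℕ) (S : Finset (ι → W)) (B : Finset (ι × W))
    (h : ∀ e ∈ S, ∃ i, (i, e i) ∈ B) : coverNumber (S.image (mk c)) ≤ B.card := by
  apply Nat.sInf_le
  refine ⟨B.map c, ?_, by simp⟩
  intro e' he'
  obtain ⟨e, he, rfl⟩ := Finset.mem_image.1 he'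
  obtain ⟨i, hi⟩ := h e he
  exact ⟨c (i, e i), by
    rw [Finset.mem_inter]
    exact ⟨(mem_mk c e _).2 ⟨i, rfl⟩, Finset.mem_map_of_mem c hi⟩⟩

lemma cover_low (c : ι × W ↪ ℕ) (S : Finset (ι → W)) (k : ℕ)
    (h : ∀ B : Finset (ι × W), (∀ e ∈ S, ∃ i, (i, e i) ∈ B) → k ≤ B.card) :
    k ≤ coverNumber (S.image (mk c)) := by
  apply le_csInf
  · refine ⟨_, (Finset.univ : Finset (ι × W)).map c, ?_, rfl⟩
    intro e' he'
    obtain ⟨e, he, rfl⟩ := Finset.mem_image.1 he'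
    have i : ι := Classical.arbitrary ι
    exact ⟨c (i, e i), by
      rw [Finset.mem_inter]
      exact ⟨(mem_mk c e _).2 ⟨i, rfl⟩, Finset.mem_map_of_mem c (Finset.mem_univ _)⟩⟩
  · rintro n ⟨B, hB, rfl⟩
    have h1 := h (Finset.univ.filter (fun a => c a ∈ B)) (by
      intro e he
      obtain ⟨n, hn⟩ := hB (mk c e) (Finset.mem_image_of_mem _ he)
      rw [Finset.mem_inter] at hn
      obtain ⟨i, hi⟩ := (mem_mk c e _).1 hn.1
      exact ⟨i, by simp [hi, hn.2]⟩)
    refine h1.trans ?_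
    apply Finset.card_le_card_of_injOn c
    · intro a ha
      simpa using ha
    · exact c.injective.injOn

lemma partite_s4 (c : ι × W ↪ ℕ) (r : ℕ) (hr : Fintype.card ι = r) (S : Finset (ι → W)) :
    IsPartite r ((Finset.univ : Finset (ι × W)).map c) (S.image (mk c)) := by
  have hε : Fintype.card (Fin r) = Fintype.card ι := by simp [hr]
  obtain ⟨ε⟩ := Fintype.card_eq.1 hε
  refine ⟨?_, fun k => (Finset.univ : Finset W).image (fun w => c (ε k, w)), ?_, ?_, ?_⟩
  · intro e' he' n hn
    obtain ⟨e, he, rfl⟩ := Finset.mem_image.1 he'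
    obtain ⟨i, rfl⟩ := (mem_mk c e _).1 hn
    exact Finset.mem_map_of_mem c (Finset.mem_univ _)
  · intro i j hij
    rw [Finset.disjoint_left]
    intro n hn hn'
    simp only [Finset.mem_image, Finset.mem_univ, true_and] at hn hn'
    obtain ⟨w, rfl⟩ := hn
    obtain ⟨w', h⟩ := hn'
    have := c.injective h
    simp only [Prod.mk.injEq, EmbeddingLike.apply_eq_iff_eq] at this
    exact hij this.1.symm
  · ext n
    simp only [Finset.mem_map, Finset.mem_univ, true_and, Finset.mem_biUnion, Finset.mem_image]
    constructor
    · rintro ⟨⟨i, w⟩, rfl⟩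
      exact ⟨ε.symm i, w, by simp⟩
    · rintro ⟨k, w, rfl⟩
      exact ⟨_, rfl⟩
  · intro e' he' k
    obtain ⟨e, he, rfl⟩ := Finset.mem_image.1 he'
    rw [Finset.card_eq_one]
    refine ⟨c (ε k, e (ε k)), ?_⟩
    ext n
    simp only [Finset.mem_inter, mem_mk, Finset.mem_image, Finset.mem_univ, true_and,
      Finset.mem_singleton]
    constructor
    · rintro ⟨⟨i, rfl⟩, w, hw⟩
      have := c.injective hw
      simp only [Prod.mk.injEq] at this
      obtain ⟨rfl, -⟩ := this
      rfl
    · rintro rfl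
      exact ⟨⟨_, rfl⟩, _, rfl⟩

lemma mk_ne (c : ι × W ↪ ℕ) (e f : ι → W) (h : ∀ i, e i ≠ f i) : mk c e ≠ mk c f := by
  intro h'
  have h1 := (disj_mk c e f).2 h
  rw [← h', disjoint_self] at h1
  have i : ι := Classical.arbitrary ι
  have h2 : c (i, e i) ∈ mk c e := (mem_mk c e _).2 ⟨i, rfl⟩
  rw [h1] at h2
  simp at h2

lemma final (q : ℕ) (hι : Fintype.card ι = q + 1) (I₁ I₂ : Finset (ι → W))
    (h₁ : ∀ e ∈ I₁, ∀ f ∈ I₁, ∃ i, e i = f i) (h₂ : ∀ e ∈ I₂, ∀ f ∈ I₂, ∃ i, e i = f i)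
    (hne : ∃ e ∈ I₁, ∃ f ∈ I₂, ∀ i, e i ≠ f i)
    (hlow : ∀ B : Finset (ι × W), (∀ e ∈ I₁ ∪ I₂, ∃ i, (i, e i) ∈ B) → 2 * q ≤ B.card)
    (hup : ∃ B : Finset (ι × W), (∀ e ∈ I₁ ∪ I₂, ∃ i, (i, e i) ∈ B) ∧ B.card ≤ 2 * q)
    (hsep : ∀ E₁ ⊆ I₁, ∀ E₂ ⊆ I₂, (∀ e ∈ E₁, ∀ f ∈ E₂, ∀ i, e i ≠ f i) →
      (∃ B : Finset (ι × W), (∀ e ∈ E₁, ∃ i, (i, e i) ∈ B) ∧ B.card < q) ∨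
      (∃ B : Finset (ι × W), (∀ e ∈ E₂, ∃ i, (i, e i) ∈ B) ∧ B.card < q)) :
    ∃ (V : Finset ℕ) (E : Finset (Finset ℕ)),
      IsPartite (q + 1) V E ∧
      matchingNumber E = 2 ∧
      coverNumber E = 2 * q ∧
      ¬ ∃ E₁ E₂ : Finset (Finset ℕ),
          IsIntersectingRyserSub (q + 1) E E₁ ∧ IsIntersectingRyserSub (q + 1) E E₂ ∧
          Disjoint (E₁.sup id) (E₂.sup id) := by
  classical
  have c : ι × W ↪ ℕ := (Fintype.equivFin (ι × W)).toEmbedding.trans Fin.valEmbedding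
  refine ⟨(Finset.univ : Finset (ι × W)).map c, (I₁ ∪ I₂).image (mk c), partite_s4 c _ hι _, ?_, ?_, ?_⟩
  · apply le_antisymm
    · apply csSup_le
      · exact ⟨0, ∅, ⟨by simp, by simp⟩, by simp⟩
      · rintro n ⟨M, ⟨hM, hd⟩, rfl⟩
        by_contra hcard
        push Not at hcard
        have hcol : ∀ m ∈ M, (if ∃ e ∈ I₁, mk c e = m then 0 else 1) ∈ Finset.range 2 := by
          intro m hm
          split_ifs <;> simp
        obtain ⟨x, hx, y, hy, hxy, hc⟩ :=
          Finset.exists_ne_map_eq_of_card_lt_of_maps_to (by simpa using hcard) hcol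
        have hdis := hd x hx y hy hxy
        have key : ∀ m ∈ M, ¬ (∃ e ∈ I₁, mk c e = m) → ∃ e ∈ I₂, mk c e = m := by
          intro m hm hno
          obtain ⟨e, he, rfl⟩ := Finset.mem_image.1 (hM hm)
          rcases Finset.mem_union.1 he with h | h
          · exact absurd ⟨e, h, rfl⟩ hno
          · exact ⟨e, h, rfl⟩
        by_cases hx1 : ∃ e ∈ I₁, mk c e = x
        · by_cases hy1 : ∃ e ∈ I₁, mk c e = y
          · obtain ⟨e, he, rfl⟩ := hx1
            obtain ⟨f, hf, rfl⟩ := hy1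
            obtain ⟨i, hi⟩ := h₁ e he f hf
            exact (disj_mk c e f).1 hdis i hi
          · rw [if_pos hx1, if_neg hy1] at hc
            exact absurd hc (by norm_num)
        · by_cases hy1 : ∃ e ∈ I₁, mk c e = y
          · rw [if_neg hx1, if_pos hy1] at hc
            exact absurd hc (by norm_num)
          · obtain ⟨e, he, rfl⟩ := key x hx hx1
            obtain ⟨f, hf, rfl⟩ := key y hy hy1
            obtain ⟨i, hi⟩ := h₂ e he f hf
            exact (disj_mk c e f).1 hdis i hi
    · apply le_csSup
      · refine ⟨((I₁ ∪ I₂).image (mk c)).card, ?_⟩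
        rintro n ⟨M, ⟨hM, -⟩, rfl⟩
        exact Finset.card_le_card hM
      · obtain ⟨e, he, f, hf, hef⟩ := hne
        refine ⟨{mk c e, mk c f}, ⟨?_, ?_⟩, Finset.card_pair (mk_ne c e f hef)⟩
        · intro m hm
          simp only [Finset.mem_insert, Finset.mem_singleton] at hm
          rcases hm with rfl | rfl
          · exact Finset.mem_image_of_mem _ (Finset.mem_union_left _ he)
          · exact Finset.mem_image_of_mem _ (Finset.mem_union_right _ hf)
        · have hd := (disj_mk c e f).2 hef
          intro m hm m' hm' hmm
          simp only [Finset.mem_insert, Finset.mem_singleton] at hm hm'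
          rcases hm with rfl | rfl <;> rcases hm' with rfl | rfl
          · exact absurd rfl hmm
          · exact hd
          · exact hd.symm
          · exact absurd rfl hmm
  · apply le_antisymm
    · obtain ⟨B, hB, hBc⟩ := hup
      exact (cover_up c _ B hB).trans hBc
    · exact cover_low c _ _ hlow
  · have main : ∀ E₁ E₂ : Finset (Finset ℕ),
        E₁ ⊆ (I₁ ∪ I₂).image (mk c) → E₂ ⊆ (I₁ ∪ I₂).image (mk c) →
        q ≤ coverNumber E₁ → q ≤ coverNumber E₂ → (∀ x ∈ E₁, ∀ y ∈ E₂, Disjoint x y) →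
        (∃ y, y ∈ E₂) → (∃ e ∈ I₁, mk c e ∈ E₁) → False := by
      rintro E₁ E₂ hs1 hs2 hc1 hc2 hd ⟨y, hy⟩ ⟨e, he, heE⟩
      have a2 : ∀ y ∈ E₂, ∃ f ∈ I₂, mk c f = y := by
        intro y hy
        obtain ⟨f, hf, rfl⟩ := Finset.mem_image.1 (hs2 hy)
        rcases Finset.mem_union.1 hf with h | h
        · obtain ⟨i, hi⟩ := h₁ e he f h
          exact absurd hi ((disj_mk c e f).1 (hd _ heE _ hy) i)
        · exact ⟨f, h, rfl⟩
      obtain ⟨g, hg, rfl⟩ := a2 y hy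
      have a1 : ∀ y ∈ E₁, ∃ f ∈ I₁, mk c f = y := by
        intro y hy'
        obtain ⟨f, hf, rfl⟩ := Finset.mem_image.1 (hs1 hy')
        rcases Finset.mem_union.1 hf with h | h
        · exact ⟨f, h, rfl⟩
        · obtain ⟨i, hi⟩ := h₂ f h g hg
          exact absurd hi ((disj_mk c f g).1 (hd _ hy' _ hy) i)
      have b1 : E₁ = (I₁.filter (fun f => mk c f ∈ E₁)).image (mk c) := by
        ext y
        simp only [Finset.mem_image, Finset.mem_filter]
        constructor
        · intro h
          obtain ⟨f, hf, rfl⟩ := a1 y h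
          exact ⟨f, ⟨hf, h⟩, rfl⟩
        · rintro ⟨f, ⟨-, h⟩, rfl⟩
          exact h
      have b2 : E₂ = (I₂.filter (fun f => mk c f ∈ E₂)).image (mk c) := by
        ext y
        simp only [Finset.mem_image, Finset.mem_filter]
        constructor
        · intro h
          obtain ⟨f, hf, rfl⟩ := a2 y h
          exact ⟨f, ⟨hf, h⟩, rfl⟩
        · rintro ⟨f, ⟨-, h⟩, rfl⟩
          exact h
      rcases hsep _ (Finset.filter_subset (fun f => mk c f ∈ E₁) I₁) _
        (Finset.filter_subset (fun f => mk c f ∈ E₂) I₂) (by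
          intro e he f hf
          exact (disj_mk c e f).1
            (hd _ (Finset.mem_filter.1 he).2 _ (Finset.mem_filter.1 hf).2)) with
        ⟨B, hB, hBc⟩ | ⟨B, hB, hBc⟩
      · have := cover_up c _ B hB
        rw [← b1] at this
        omega
      · have := cover_up c _ B hB
        rw [← b2] at this
        omega
    rintro ⟨E₁, E₂, ⟨hs1, -, hm1, hc1⟩, ⟨hs2, -, hm2, hc2⟩, hd⟩
    have hdd : ∀ x ∈ E₁, ∀ y ∈ E₂, Disjoint x y := by
      intro x hx y hy
      exact Disjoint.mono (Finset.le_sup (f := id) hx) (Finset.le_sup (f := id) hy) hd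
    have nonem : ∀ E : Finset (Finset ℕ), matchingNumber E = 1 → ∃ y, y ∈ E := by
      intro E hE
      by_contra hcon
      push Not at hcon
      have : E = ∅ := Finset.eq_empty_of_forall_notMem hcon
      subst this
      have hle : matchingNumber (∅ : Finset (Finset ℕ)) ≤ 0 := by
        apply csSup_le
        · exact ⟨0, ∅, ⟨by simp, by simp⟩, by simp⟩
        · rintro n ⟨M, ⟨hM, -⟩, rfl⟩
          simpa using hM
      omega
    rw [hm1] at hc1
    rw [hm2] at hc2
    have q1 : q ≤ coverNumber E₁ := by simpa using hc1
    have q2 : q ≤ coverNumber E₂ := by simpa using hc2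
    obtain ⟨x, hx⟩ := nonem E₁ hm1
    obtain ⟨y, hy⟩ := nonem E₂ hm2
    by_cases h : ∃ e ∈ I₁, mk c e ∈ E₁
    · exact main E₁ E₂ hs1 hs2 q1 q2 hdd ⟨y, hy⟩ h
    · by_cases h' : ∃ e ∈ I₁, mk c e ∈ E₂
      · exact main E₂ E₁ hs2 hs1 q2 q1 (fun a ha b hb => (hdd b hb a ha).symm) ⟨x, hx⟩ h'
      · have k : ∀ E : Finset (Finset ℕ), E ⊆ (I₁ ∪ I₂).image (mk c) →
            ¬ (∃ e ∈ I₁, mk c e ∈ E) → ∀ x ∈ E, ∃ f ∈ I₂, mk c f = x := by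
          intro E hE hno x hx
          obtain ⟨f, hf, rfl⟩ := Finset.mem_image.1 (hE hx)
          rcases Finset.mem_union.1 hf with h | h
          · exact absurd ⟨f, h, hx⟩ hno
          · exact ⟨f, h, rfl⟩
        obtain ⟨e, he, rfl⟩ := k E₁ hs1 h x hx
        obtain ⟨f, hf, rfl⟩ := k E₂ hs2 h' y hy
        obtain ⟨i, hi⟩ := h₂ e he f hf
        exact (disj_mk c e f).1 (hdd _ hx _ hy) i hi

end Final
end RyserAux

namespace RyserAux

set_option linter.unusedSectionVars false
set_option linter.unusedVariables false

section Glue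
variable {F : Type} [Field F] [Fintype F] [DecidableEq F]

/-- pencil of lines through a point -/
def pen (x y : F) : Option F → F := fun i => i.elim x (fun μ => y - μ * x)

/-- vertical labels -/
def Vt {W : Type} [Fintype W] [DecidableEq W] (B : Finset (Option F × W)) : Finset W :=
  Finset.univ.filter (fun w => (none, w) ∈ B)

/-- nonvertical lines -/
def Ns {W : Type} [Fintype W] [DecidableEq W] (f : F → W) (B : Finset (Option F × W)) :
    Finset (F × F) :=
  Finset.univ.filter (fun n => (some n.1, f n.2) ∈ B)

lemma split_card {W : Type} [Fintype W] [DecidableEq W] (f : F → W) (hf : Function.Injective f)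
    (B : Finset (Option F × W)) : (Vt B).card + (Ns f B).card ≤ B.card := by
  rw [← Finset.card_disjSum]
  apply Finset.card_le_card_of_injOn
    (Sum.elim (fun w => (none, w)) (fun n => (some n.1, f n.2)))
  · rintro (w | n) h
    · simpa [Vt] using h
    · simpa [Ns] using h
  · rintro (w | ⟨n, n'⟩) h (w' | ⟨k, k'⟩) h' heq
    · simpa using heq
    · simp at heq
    · simp at heq
    · simp only [Sum.elim_inr, Prod.mk.injEq, Option.some.injEq] at heq
      rw [heq.1, hf heq.2]

lemma column (N : Finset (F × F)) (x : F) (T : Finset F)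
    (h : ∀ y ∈ T, ∃ n ∈ N, n.1 * x + n.2 = y) : T.card ≤ N.card := by
  refine le_trans (Finset.card_le_card (t := N.image (fun n => n.1 * x + n.2)) ?_)
    Finset.card_image_le
  intro y hy
  obtain ⟨n, hn, rfl⟩ := h y hy
  exact Finset.mem_image_of_mem _ hn

/-- requirements on the second intersecting family -/
structure Good {W : Type} [Fintype W] [DecidableEq W] (q : ℕ) (I : Finset (Option F → W))
    (P : Finset W) : Prop where
  inter : ∀ e ∈ I, ∀ f ∈ I, ∃ i, e i = f i
  ne : P.Nonempty
  cov : ∀ B : Finset (Option F × W), (∀ e ∈ I, ∃ i, (i, e i) ∈ B) → q ≤ B.card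
  covP : ∀ B : Finset (Option F × W), (∀ e ∈ I, e none ∉ P → ∃ i, (i, e i) ∈ B) →
    q + 1 ≤ B.card + P.card
  crit : ∀ v ∈ P, ∃ B : Finset (Option F × W), B.card + 1 ≤ q ∧
    ∀ e ∈ I, e none ≠ v → ∃ i, (i, e i) ∈ B

lemma J1cov (B : Finset (Option F × F))
    (h : ∀ x y : F, x ≠ 0 → ∃ i, (i, pen x y i) ∈ B) :
    Fintype.card F ≤ B.card + 1 ∧ ((∃ μ, (some μ, (0 : F)) ∈ B) → Fintype.card F ≤ B.card) := by
  have hs := split_card id Function.injective_id B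
  by_cases hx : ∃ x : F, x ≠ 0 ∧ x ∉ Vt B
  · obtain ⟨x, hx0, hxV⟩ := hx
    have := column (Ns id B) x Finset.univ (by
      intro y _
      obtain ⟨i, hi⟩ := h x y hx0
      cases i with
      | none => exact absurd (by simpa [Vt, pen] using hi) hxV
      | some μ => exact ⟨(μ, y - μ * x), by simpa [Ns, pen] using hi, by simp⟩)
    rw [Finset.card_univ] at this
    exact ⟨by omega, fun _ => by omega⟩
  · push Not at hx
    have h1 : (Finset.univ.erase (0 : F)).card ≤ (Vt B).card := by
      apply Finset.card_le_card
      intro x hx'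
      exact hx x (Finset.ne_of_mem_erase hx')
    rw [Finset.card_erase_of_mem (Finset.mem_univ _), Finset.card_univ] at h1
    refine ⟨by omega, ?_⟩
    rintro ⟨μ, hμ⟩
    have : 0 < (Ns id B).card := Finset.card_pos.2 ⟨(μ, 0), by simpa [Ns] using hμ⟩
    omega

lemma J1up {W : Type} [Fintype W] [DecidableEq W] :
    ∃ B : Finset (Option F × (F ⊕ W)), B.card + 1 ≤ Fintype.card F ∧
      ∀ x y : F, x ≠ 0 → ∃ i, (i, (Sum.inl (pen x y i) : F ⊕ W)) ∈ B := by
  refine ⟨(Finset.univ.erase (0 : F)).image (fun x => (none, Sum.inl x)), ?_, ?_⟩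
  · have := Finset.card_image_le (s := Finset.univ.erase (0 : F))
      (f := fun x => ((none : Option F), (Sum.inl x : F ⊕ W)))
    rw [Finset.card_erase_of_mem (Finset.mem_univ _), Finset.card_univ] at this
    have := Fintype.card_pos (α := F)
    omega
  · intro x y hx
    exact ⟨none, by simp [pen, hx]⟩

/-- point edges -/
def J1e (W : Type) (a : F × F) : Option F → F ⊕ W := fun i => Sum.inl (pen a.1 a.2 i)

/-- gluing edges -/
def xe {W : Type} (v : W) : Option F → F ⊕ W := fun i => i.elim (Sum.inr v) (fun _ => Sum.inl 0)

lemma glue {W : Type} [Fintype W] [DecidableEq W] (I : Finset (Option F → W)) (P : Finset W)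
    (hG : Good (Fintype.card F) I P) :
    ∃ (V : Finset ℕ) (E : Finset (Finset ℕ)),
      IsPartite (Fintype.card F + 1) V E ∧
      matchingNumber E = 2 ∧
      coverNumber E = 2 * Fintype.card F ∧
      ¬ ∃ E₁ E₂ : Finset (Finset ℕ),
          IsIntersectingRyserSub (Fintype.card F + 1) E E₁ ∧
          IsIntersectingRyserSub (Fintype.card F + 1) E E₂ ∧
          Disjoint (E₁.sup id) (E₂.sup id) := by
  classical
  set I₁ : Finset (Option F → F ⊕ W) :=
    (Finset.univ.filter (fun a : F × F => a.1 ≠ 0)).image (J1e W) ∪ P.image xe with hI₁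
  set I₂ : Finset (Option F → F ⊕ W) := I.image (fun e i => Sum.inr (e i)) with hI₂
  have m₁ : ∀ e, e ∈ I₁ ↔ (∃ x y, x ≠ 0 ∧ e = J1e W (x, y)) ∨ ∃ v ∈ P, e = xe v := by
    intro e
    simp only [hI₁, Finset.mem_union, Finset.mem_image, Finset.mem_filter, Finset.mem_univ,
      true_and, Prod.exists]
    constructor
    · rintro (⟨x, y, h, rfl⟩ | ⟨v, h, rfl⟩)
      · exact Or.inl ⟨x, y, h, rfl⟩
      · exact Or.inr ⟨v, h, rfl⟩
    · rintro (⟨x, y, h, rfl⟩ | ⟨v, h, rfl⟩)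
      · exact Or.inl ⟨x, y, h, rfl⟩
      · exact Or.inr ⟨v, h, rfl⟩
  have m₂ : ∀ e, e ∈ I₂ ↔ ∃ f ∈ I, e = fun i => Sum.inr (f i) := by
    intro e
    simp only [hI₂, Finset.mem_image, eq_comm]
  have hq1 : 1 ≤ Fintype.card F := Fintype.card_pos
  have hIne : ∃ f, f ∈ I := by
    by_contra hcon
    push Not at hcon
    have := hG.cov ∅ (fun e he => absurd he (hcon e))
    simp at this
  apply final (Fintype.card F) (by simp) I₁ I₂
  · have aux : ∀ x y v, x ≠ 0 → ∃ i, J1e W ((x, y) : F × F) i = xe v i := by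
      intro x y v hx
      exact ⟨some (y / x), by simp [J1e, pen, xe, hx]⟩
    intro e he f hf
    rcases (m₁ e).1 he with ⟨x, y, hx, rfl⟩ | ⟨v, hv, rfl⟩ <;>
    rcases (m₁ f).1 hf with ⟨x', y', hx', rfl⟩ | ⟨v', hv', rfl⟩
    · by_cases h : x = x'
      · exact ⟨none, by simp [J1e, pen, h]⟩
      · have h' : x - x' ≠ 0 := sub_ne_zero.2 h
        refine ⟨some ((y - y') / (x - x')), ?_⟩
        simp only [J1e, pen, Option.elim, Sum.inl.injEq]
        field_simp
        ring
    · exact aux x y v' hx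
    · obtain ⟨i, hi⟩ := aux x' y' v hx'
      exact ⟨i, hi.symm⟩
    · exact ⟨some 0, rfl⟩
  · intro e' he' f' hf'
    obtain ⟨e, he, rfl⟩ := (m₂ _).1 he'
    obtain ⟨f, hf, rfl⟩ := (m₂ _).1 hf'
    obtain ⟨i, hi⟩ := hG.inter e he f hf
    exact ⟨i, by simp [hi]⟩
  · obtain ⟨f, hf⟩ := hIne
    exact ⟨_, (m₁ _).2 (Or.inl ⟨1, 0, one_ne_zero, rfl⟩), _, (m₂ _).2 ⟨f, hf, rfl⟩,
      fun i => by simp [J1e]⟩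
  · intro B hB
    set B1 : Finset (Option F × F) := Finset.univ.filter (fun a => (a.1, Sum.inl a.2) ∈ B) with hB1
    set B2 : Finset (Option F × W) := Finset.univ.filter (fun a => (a.1, Sum.inr a.2) ∈ B) with hB2
    have hcard : B1.card + B2.card ≤ B.card := by
      rw [← Finset.card_disjSum]
      apply Finset.card_le_card_of_injOn
        (Sum.elim (fun a => (a.1, Sum.inl a.2)) (fun a => (a.1, Sum.inr a.2)))
      · rintro (w | n) h
        · simpa [hB1] using h
        · simpa [hB2] using h
      · rintro (⟨w, w1⟩ | ⟨n, n'⟩) h (⟨w', w2⟩ | ⟨k, k'⟩) h' heq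
        · simpa using heq
        · simp at heq
        · simp at heq
        · simpa using heq
    have c1 : ∀ x y : F, x ≠ 0 → ∃ i, (i, pen x y i) ∈ B1 := by
      intro x y hx
      obtain ⟨i, hi⟩ := hB _ (Finset.mem_union_left _ ((m₁ _).2 (Or.inl ⟨x, y, hx, rfl⟩)))
      exact ⟨i, by simpa [hB1, J1e] using hi⟩
    have c2 : ∀ e ∈ I, ∃ i, (i, e i) ∈ B2 := by
      intro e he
      obtain ⟨i, hi⟩ := hB _ (Finset.mem_union_right _ ((m₂ _).2 ⟨e, he, rfl⟩))
      exact ⟨i, by simpa [hB2] using hi⟩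
    have hJ := J1cov B1 c1
    by_cases hP : ∀ v ∈ P, (none, v) ∈ B2
    · have hsub : P.image (fun v => ((none : Option F), v)) ⊆ B2 := by
        intro a ha
        obtain ⟨v, hv, rfl⟩ := Finset.mem_image.1 ha
        exact hP v hv
      have h1 := hG.covP (B2 \ P.image (fun v => ((none : Option F), v))) (by
        intro e he hn
        obtain ⟨i, hi⟩ := c2 e he
        refine ⟨i, Finset.mem_sdiff.2 ⟨hi, ?_⟩⟩
        intro hi'
        obtain ⟨v, hv, heq⟩ := Finset.mem_image.1 hi'
        simp only [Prod.mk.injEq] at heq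
        obtain ⟨rfl, rfl⟩ := heq
        exact hn hv)
      have h2 := Finset.card_sdiff_add_card_eq_card hsub
      rw [Finset.card_image_of_injective _ (fun a b h => by simpa using h)] at h2
      omega
    · push Not at hP
      obtain ⟨v, hv, hvB⟩ := hP
      obtain ⟨i, hi⟩ := hB _ (Finset.mem_union_left _ ((m₁ _).2 (Or.inr ⟨v, hv, rfl⟩)))
      have h1 := hG.cov B2 c2
      have h2 := hJ.2 (by
        cases i with
        | none => exact absurd (by simpa [hB2, xe] using hi) hvB
        | some μ => exact ⟨μ, by simpa [hB1, xe] using hi⟩)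
      omega
  · obtain ⟨B1, hB1c, hB1⟩ := J1up (F := F) (W := W)
    obtain ⟨v, hv⟩ := hG.ne
    obtain ⟨B2, hB2c, hB2⟩ := hG.crit v hv
    refine ⟨insert (some 0, Sum.inl 0) (insert (none, Sum.inr v)
      (B1 ∪ B2.image (fun a => (a.1, Sum.inr a.2)))), ?_, ?_⟩
    · intro e he
      rcases Finset.mem_union.1 he with he | he
      · rcases (m₁ e).1 he with ⟨x, y, hx, rfl⟩ | ⟨v, hv, rfl⟩
        · obtain ⟨i, hi⟩ := hB1 x y hx
          exact ⟨i, by simp [J1e, hi]⟩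
        · exact ⟨some 0, by simp [xe]⟩
      · obtain ⟨f, hf, rfl⟩ := (m₂ e).1 he
        by_cases h : f none = v
        · exact ⟨none, by simp [h]⟩
        · obtain ⟨i, hi⟩ := hB2 f hf h
          exact ⟨i, by simp [hi]⟩
    · have a1 := Finset.card_insert_le (some 0, Sum.inl 0) (insert (none, Sum.inr v)
        (B1 ∪ B2.image (fun a => (a.1, (Sum.inr a.2 : F ⊕ W)))))
      have a2 := Finset.card_insert_le (none, Sum.inr v)
        (B1 ∪ B2.image (fun a => (a.1, (Sum.inr a.2 : F ⊕ W))))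
      have a3 := Finset.card_union_le B1 (B2.image (fun a => (a.1, (Sum.inr a.2 : F ⊕ W))))
      have a4 := Finset.card_image_le (s := B2) (f := fun a => (a.1, (Sum.inr a.2 : F ⊕ W)))
      omega
  · intro E₁ h1 E₂ h2 hd
    by_cases h : ∃ v ∈ P, xe v ∈ E₁
    · right
      obtain ⟨v, hv, hvE⟩ := h
      obtain ⟨B2, hB2c, hB2⟩ := hG.crit v hv
      refine ⟨B2.image (fun a => (a.1, Sum.inr a.2)), ?_, ?_⟩
      · intro e he
        obtain ⟨f, hf, rfl⟩ := (m₂ e).1 (h2 he)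
        obtain ⟨i, hi⟩ := hB2 f hf (by
          have := hd _ hvE _ he none
          intro h
          exact this (by simp [xe, h]))
        exact ⟨i, by simp [hi]⟩
      · have a4 := Finset.card_image_le (s := B2) (f := fun a => (a.1, (Sum.inr a.2 : F ⊕ W)))
        omega
    · left
      obtain ⟨B1, hB1c, hB1⟩ := J1up (F := F) (W := W)
      refine ⟨B1, ?_, by omega⟩
      intro e he
      rcases (m₁ e).1 (h1 he) with ⟨x, y, hx, rfl⟩ | ⟨v, hv, rfl⟩
      · exact hB1 x y hx
      · exact absurd ⟨v, hv, he⟩ h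

end Glue
end RyserAux

namespace RyserAux
set_option linter.unusedSectionVars false
set_option linter.unusedVariables false

section Core
variable {F : Type} [Field F] [Fintype F] [DecidableEq F]

lemma adj (σ a : F) (h : ∀ x : F, x ≠ 0 → x ≠ 1 → σ * x + a ≠ 0) :
    σ = 0 ∨ a = 0 ∨ σ + a = 0 := by
  by_contra hcon
  push Not at hcon
  obtain ⟨h1, h2, h3⟩ := hcon
  refine h (-a / σ) (div_ne_zero (neg_ne_zero.2 h2) h1) ?_ ?_
  · intro h4
    rw [div_eq_one_iff_eq h1] at h4
    exact h3 (by rw [← h4]; ring)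
  · field_simp
    ring

lemma nz (m σ a : F) (h : ∀ x : F, x ≠ 0 → x ≠ 1 → 1 + m * x ≠ 0 → σ * x + a ≠ 0) :
    σ = 0 ∨ a = 0 ∨ σ + a = 0 ∨ σ = m * a := by
  by_contra hcon
  push Not at hcon
  obtain ⟨h1, h2, h3, h4⟩ := hcon
  refine h (-a / σ) (div_ne_zero (neg_ne_zero.2 h2) h1) ?_ ?_ ?_
  · intro h4
    rw [div_eq_one_iff_eq h1] at h4
    exact h3 (by rw [← h4]; ring)
  · intro h5
    apply h4
    field_simp at h5
    linear_combination h5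
  · field_simp
    ring

lemma sumF (hq : 3 ≤ Fintype.card F) : ∑ x : F, x = 0 := by
  have := FiniteField.sum_pow_lt_card_sub_one F 1 (by omega)
  simpa using this

lemma key (hq : 3 ≤ Fintype.card F) {α : Type} [DecidableEq α] (S : Finset α) (f : α → F)
    (hS : S.card = Fintype.card F + 1) (hf : ∀ y, ∃ n ∈ S, f n = y) :
    ∃ p ∈ S, ∃ p' ∈ S, p ≠ p' ∧ f p = ∑ n ∈ S, f n ∧ f p' = ∑ n ∈ S, f n ∧
      ∀ a ∈ S, ∀ b ∈ S, a ≠ b → f a = f b → (a = p ∧ b = p') ∨ (a = p' ∧ b = p) := by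
  obtain ⟨p, hp, p', hp', hne, heq⟩ := Finset.exists_ne_map_eq_of_card_lt_of_maps_to
    (s := S) (t := (Finset.univ : Finset F)) (f := f) (by rw [Finset.card_univ]; omega)
    (fun _ _ => Finset.mem_univ _)
  have inj : ∀ p ∈ S, ∀ p' ∈ S, p ≠ p' → f p = f p' →
      Set.InjOn f (S.erase p) ∧ (S.erase p).image f = Finset.univ := by
    intro p hp p' hp' hne heq
    have him : (S.erase p).image f = Finset.univ := by
      apply Finset.eq_univ_of_forall
      intro y
      obtain ⟨n, hn, rfl⟩ := hf y
      by_cases h : n = p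
      · subst h
        rw [heq]
        exact Finset.mem_image_of_mem _ (Finset.mem_erase.2 ⟨hne.symm, hp'⟩)
      · exact Finset.mem_image_of_mem _ (Finset.mem_erase.2 ⟨h, hn⟩)
    refine ⟨?_, him⟩
    apply Finset.injOn_of_card_image_eq
    rw [him, Finset.card_univ, Finset.card_erase_of_mem hp, hS]
    rfl
  have i1 := inj p hp p' hp' hne heq
  have i2 := inj p' hp' p hp hne.symm heq.symm
  have hsum : ∑ n ∈ S, f n = f p := by
    rw [← Finset.add_sum_erase S f hp]
    have : ∑ n ∈ S.erase p, f n = 0 := by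
      rw [← sumF hq, ← i1.2, Finset.sum_image i1.1]
    rw [this, add_zero]
  refine ⟨p, hp, p', hp', hne, hsum.symm, by rw [hsum, heq], ?_⟩
  intro a ha b hb hab hfab
  have mem : ∀ p a : α, a ∈ S → a ≠ p → a ∈ (S.erase p : Finset α) :=
    fun p a h h' => Finset.mem_erase.2 ⟨h', h⟩
  by_cases h1 : a = p
  · left
    refine ⟨h1, ?_⟩
    subst h1
    exact i1.1 (mem _ _ hb hab.symm) (mem _ _ hp' hne.symm) (by rw [← hfab, heq])
  · by_cases h2 : b = p
    · right
      refine ⟨?_, h2⟩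
      subst h2
      exact i1.1 (mem _ _ ha h1) (mem _ _ hp' hne.symm) (by rw [hfab, heq])
    · exact absurd (i1.1 (mem _ _ ha h1) (mem _ _ hb h2) hfab) hab

lemma four (S : Finset (F × F)) (h5 : 5 ≤ S.card)
    (hadj : ∀ a ∈ S, ∀ b ∈ S, a ≠ b → a.1 = b.1 ∨ a.2 = b.2 ∨ a.1 + a.2 = b.1 + b.2)
    (p p' r : F × F) (hp : p ∈ S) (hp' : p' ∈ S) (hr : r ∈ S) (hne : p ≠ p')
    (h2 : p.2 = p'.2) (hr2 : r.2 ≠ p.2) : False := by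
  have hs : S ⊆ {(p.1, p'.1 + p'.2 - p.1), (p'.1, p.1 + p.2 - p'.1), (r.1, p.2),
      (r.1 + r.2 - p.2, p.2)} := by
    intro w hw
    have a1 := hadj w hw p hp
    have a2 := hadj w hw p' hp'
    have a3 := hadj w hw r hr
    obtain ⟨w1, w2⟩ := w
    obtain ⟨p1, p2⟩ := p
    obtain ⟨p'1, p'2⟩ := p'
    obtain ⟨r1, r2⟩ := r
    simp only [Finset.mem_insert, Finset.mem_singleton, Prod.mk.injEq, ne_eq] at *
    subst h2
    by_cases hw2 : w2 = p2
    · subst hw2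
      have := a3 (fun h => hr2 h.2.symm)
      rcases this with h | h | h
      · simp [h]
      · exact absurd h.symm hr2
      · right; right; right
        exact ⟨by rw [← h]; ring, rfl⟩
    · have b1 := a1 (fun h => hw2 h.2)
      have b2 := a2 (fun h => hw2 h.2)
      have hpp : p1 ≠ p'1 := fun h => hne ⟨h, rfl⟩
      rcases b1 with h | h | h
      · rcases b2 with h' | h' | h'
        · exact absurd (h.symm.trans h') hpp
        · exact absurd h' hw2
        · left
          exact ⟨h, by rw [← h', ← h]; ring⟩
      · exact absurd h hw2
      · rcases b2 with h' | h' | h'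
        · right; left
          exact ⟨h', by rw [← h, ← h']; ring⟩
        · exact absurd h' hw2
        · exact absurd (add_right_cancel (h.symm.trans h')) hpp
  have := (Finset.card_le_card hs).trans Finset.card_le_four
  omega

lemma core (hq : 5 ≤ Fintype.card F) (m t s : F) (hm0 : m ≠ 0) (hm1 : 1 + m ≠ 0)
    (ht0 : t ≠ 0) (ht1 : t ≠ 1) (htm : t ≠ m) (htm1 : t ≠ 1 + m)
    (hs0 : s ≠ 0) (hs1 : s ≠ 1) (hsm : 1 + m * s ≠ 0)
    (V : Finset (Option F)) (N : Finset (F × F))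
    (hJ : ∀ x y : F, x ≠ 0 → x ≠ 1 → y ≠ 0 → y ≠ 1 + m * x →
      some x ∈ V ∨ ∃ n ∈ N, n.1 * x + n.2 = y)
    (h1 : some 0 ∈ V ∨ (0, 1) ∈ N ∨ ∃ n ∈ N, n.1 ≠ 0 ∧ n.2 = 0)
    (h2 : some 1 ∈ V ∨ (m, 0) ∈ N ∨ ∃ n ∈ N, n.1 ≠ m ∧ n.2 = 1)
    (h3 : some s ∈ V ∨ ∃ n ∈ N, n.2 = 0)
    (h4 : some s ∈ V ∨ ∃ n ∈ N, n.2 = 1)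
    (h5 : none ∈ V ∨ ∃ n ∈ N, n.1 + n.2 = t)
    (hP : some s ∈ V ∨ (0, 1) ∈ N ∨ ∃ n ∈ N, n.1 ≠ 0 ∧ n.1 * s + n.2 = 0)
    (hR : some s ∈ V ∨ (m, 0) ∈ N ∨ ∃ n ∈ N, n.1 ≠ m ∧ n.1 * s + n.2 = 1 + m * s) :
    Fintype.card F ≤ V.card + N.card := by
  by_contra hc
  push Not at hc
  have colx : ∀ x : F, x ≠ 0 → x ≠ 1 → some x ∉ V → 1 + m * x ≠ 0 →
      Finset.univ \ {0, 1 + m * x} ⊆ N.image (fun n => n.1 * x + n.2) ∧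
      (Finset.univ \ {0, 1 + m * x}).card + 2 = Fintype.card F := by
    intro x hx0 hx1 hxV hx
    constructor
    · intro y hy
      simp only [Finset.mem_sdiff, Finset.mem_univ, true_and, Finset.mem_insert,
        Finset.mem_singleton, not_or] at hy
      obtain ⟨n, hn, rfl⟩ := (hJ x y hx0 hx1 hy.1 hy.2).resolve_left hxV
      exact Finset.mem_image_of_mem (fun n : F × F => n.1 * x + n.2) hn
    · have := Finset.card_sdiff_add_card_eq_card (Finset.subset_univ ({0, 1 + m * x} : Finset F))
      rw [Finset.card_pair hx.symm, Finset.card_univ] at this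
      exact this
  obtain ⟨u, hu⟩ : ∃ u : F, 1 + m * u = 0 := ⟨-1 / m, by field_simp; ring⟩
  have hu0 : u ≠ 0 := by rintro rfl; simp at hu
  have hu1 : u ≠ 1 := by rintro rfl; simp at hu; exact hm1 hu
  have huu : ∀ x, 1 + m * x = 0 → x = u := by
    intro x hx
    exact mul_left_cancel₀ hm0 (by linear_combination hx - hu)
  have colu : some u ∉ V → Finset.univ.erase 0 ⊆ N.image (fun n => n.1 * u + n.2) ∧
      (Finset.univ.erase (0 : F)).card + 1 = Fintype.card F := by
    intro huV
    constructor
    · intro y hy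
      have hy0 := Finset.ne_of_mem_erase hy
      obtain ⟨n, hn, rfl⟩ := (hJ u y hu0 hu1 hy0 (by rwa [hu])).resolve_left huV
      exact Finset.mem_image_of_mem (fun n : F × F => n.1 * u + n.2) hn
    · rw [Finset.card_erase_of_mem (Finset.mem_univ _), Finset.card_univ]
      omega
  by_cases hall : ∀ x : F, x ≠ 0 → x ≠ 1 → some x ∈ V
  · -- all columns are in V
    set D : Finset (Option F) := (Finset.univ \ {0, 1}).image some with hD
    have hDV : D ⊆ V := by
      intro a ha
      obtain ⟨x, hx, rfl⟩ := Finset.mem_image.1 ha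
      simp only [Finset.mem_sdiff, Finset.mem_univ, true_and, Finset.mem_insert,
        Finset.mem_singleton, not_or] at hx
      exact hall x hx.1 hx.2
    have hDc : D.card + 2 = Fintype.card F := by
      rw [hD, Finset.card_image_of_injective _ (Option.some_injective F)]
      have := Finset.card_sdiff_add_card_eq_card (Finset.subset_univ ({0, 1} : Finset F))
      rw [Finset.card_pair zero_ne_one, Finset.card_univ] at this
      exact this
    have hVD := Finset.card_sdiff_add_card_eq_card hDV
    have d0 : some 0 ∉ D := by simp [hD]
    have d1 : some 1 ∉ D := by simp [hD]
    have dn : none ∉ D := by simp [hD]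
    rcases Finset.eq_empty_or_nonempty N with hN | ⟨n, hn⟩
    · subst hN
      have e0 : some 0 ∈ V := by simpa using h1
      have e1 : some 1 ∈ V := by simpa using h2
      have : ({some 0, some 1} : Finset (Option F)) ⊆ V \ D := by
        intro a ha
        simp only [Finset.mem_insert, Finset.mem_singleton] at ha
        rcases ha with rfl | rfl
        · exact Finset.mem_sdiff.2 ⟨e0, d0⟩
        · exact Finset.mem_sdiff.2 ⟨e1, d1⟩
      have := Finset.card_le_card this
      rw [Finset.card_pair (by simp)] at this
      omega
    · have hNc : 0 < N.card := Finset.card_pos.2 ⟨n, hn⟩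
      have hV : V \ D = ∅ := Finset.card_eq_zero.1 (by omega)
      have hV' : V ⊆ D := Finset.sdiff_eq_empty_iff_subset.1 hV
      have hN1 : ∀ k ∈ N, k = n := by
        intro k hk
        exact Finset.card_le_one.1 (by omega) k hk n hn
      have f1 := h1.resolve_left (fun h => d0 (hV' h))
      have f2 := h2.resolve_left (fun h => d1 (hV' h))
      have f5 := h5.resolve_left (fun h => dn (hV' h))
      obtain ⟨k, hk, hk5⟩ := f5
      rw [hN1 k hk] at hk5
      have g1 : (n.1 = 0 ∧ n.2 = 1) ∨ (n.2 = 0) := by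
        rcases f1 with h | ⟨k, hk, -, hk2⟩
        · left; rw [← hN1 _ h]; simp
        · right; rw [← hN1 _ hk]; exact hk2
      have g2 : (n.1 = m ∧ n.2 = 0) ∨ (n.2 = 1) := by
        rcases f2 with h | ⟨k, hk, -, hk2⟩
        · left; rw [← hN1 _ h]; simp
        · right; rw [← hN1 _ hk]; exact hk2
      rcases g1 with ⟨h, h'⟩ | h
      · rw [h, h', zero_add] at hk5; exact ht1 hk5.symm
      · rcases g2 with ⟨g, g'⟩ | g
        · rw [g, g', add_zero] at hk5; exact htm hk5.symm
        · rw [h] at g; exact zero_ne_one g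
  · push Not at hall
    obtain ⟨x0, hx00, hx01, hx0V⟩ := hall
    have hN2 : Fintype.card F ≤ N.card + 2 := by
      by_cases hk : 1 + m * x0 = 0
      · have := huu x0 hk
        subst this
        have := colu hx0V
        have h' := (Finset.card_le_card this.1).trans Finset.card_image_le
        omega
      · have := colx x0 hx00 hx01 hx0V hk
        have h' := (Finset.card_le_card this.1).trans Finset.card_image_le
        omega
    by_cases huV : some u ∈ V
    · -- case (ii)
      have hV1 : 0 < V.card := Finset.card_pos.2 ⟨_, huV⟩
      have hVu : ∀ a ∈ V, a = some u := fun a ha => Finset.card_le_one.1 (by omega) a ha _ huV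
      have hx : ∀ x : F, 1 + m * x ≠ 0 → some x ∉ V := by
        intro x hx hxV
        have := hVu _ hxV
        simp only [Option.some.injEq] at this
        subst this
        exact hx hu
      have col : ∀ x : F, x ≠ 0 → x ≠ 1 → 1 + m * x ≠ 0 →
          (∀ a ∈ N, ∀ b ∈ N, a ≠ b → a.1 * x + a.2 ≠ b.1 * x + b.2) ∧
          ∀ a ∈ N, a.1 * x + a.2 ≠ 0 ∧ a.1 * x + a.2 ≠ 1 + m * x := by
        intro x hx0 hx1 hxm
        obtain ⟨hsub, hcd⟩ := colx x hx0 hx1 (hx x hxm) hxm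
        have hle := Finset.card_image_le (s := N) (f := fun n => n.1 * x + n.2)
        have heq := Finset.eq_of_subset_of_card_le hsub (by omega)
        have hinj : Set.InjOn (fun n : F × F => n.1 * x + n.2) N := by
          apply Finset.injOn_of_card_image_eq
          rw [← heq]
          omega
        constructor
        · intro a ha b hb hab h
          exact hab (hinj ha hb h)
        · intro a ha
          have := Finset.mem_image_of_mem (fun n : F × F => n.1 * x + n.2) ha
          rw [← heq] at this
          simpa using this
      have sV := hx s hsm
      have k1 : ((0 : F), (1 : F)) ∈ N := by
        rcases hP.resolve_left sV with h | ⟨n, hn, -, h⟩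
        · exact h
        · exact absurd h ((col s hs0 hs1 hsm).2 n hn).1
      have k0 : (m, (0 : F)) ∈ N := by
        rcases hR.resolve_left sV with h | ⟨n, hn, -, h⟩
        · exact h
        · exact absurd h ((col s hs0 hs1 hsm).2 n hn).2
      obtain ⟨n, hn, hnt⟩ := h5.resolve_left (fun h => by simpa using hVu _ h)
      obtain ⟨σ, a⟩ := n
      simp only at hnt
      have r1 := nz m σ a (fun x hx0 hx1 hxm => ((col x hx0 hx1 hxm).2 _ hn).1)
      have r2 := nz m (σ - m) (a - 1) (fun x hx0 hx1 hxm h =>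
        ((col x hx0 hx1 hxm).2 _ hn).2 (by linear_combination h))
      have r3 := nz m (σ - m) a (fun x hx0 hx1 hxm h =>
        (col x hx0 hx1 hxm).1 _ hn _ k0 (by
          intro h
          simp only [Prod.mk.injEq] at h
          exact htm (by rw [← hnt, h.1, h.2, add_zero])) (by linear_combination h))
      have r4 := nz m σ (a - 1) (fun x hx0 hx1 hxm h =>
        (col x hx0 hx1 hxm).1 _ hn _ k1 (by
          intro h
          simp only [Prod.mk.injEq] at h
          exact ht1 (by rw [← hnt, h.1, h.2, zero_add])) (by linear_combination h))
      subst hnt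
      clear hJ h1 h2 h3 h4 h5 hP hR colx colu col hN2
      grind
    · -- case (iii)
      obtain ⟨hsub, hcd⟩ := colu huV
      have hle := Finset.card_image_le (s := N) (f := fun n => n.1 * u + n.2)
      have hle2 := Finset.card_le_card hsub
      have hV0 : V = ∅ := Finset.card_eq_zero.1 (by omega)
      subst hV0
      have heq := Finset.eq_of_subset_of_card_le hsub (by omega)
      have hNu : ∀ a ∈ N, a.1 * u + a.2 ≠ 0 := by
        intro a ha
        have := Finset.mem_image_of_mem (fun n : F × F => n.1 * u + n.2) ha
        rw [← heq] at this
        simpa using this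
      have hON : ((0 : F), (0 : F)) ∉ N := fun h => hNu _ h (by simp)
      have hKN : (m, (1 : F)) ∉ N := fun h => hNu _ h (by linear_combination hu)
      have hOK : ((0 : F), (0 : F)) ≠ (m, (1 : F)) := by simp
      set C : Finset (F × F) := insert (0, 0) (insert (m, 1) N) with hC
      have hCc : C.card = Fintype.card F + 1 := by
        rw [hC, Finset.card_insert_of_notMem (by
          rw [Finset.mem_insert]; push Not; exact ⟨hOK, hON⟩),
          Finset.card_insert_of_notMem hKN]
        omega
      have hOC : ((0 : F), (0 : F)) ∈ C := by simp [hC]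
      have hKC : (m, (1 : F)) ∈ C := by simp [hC]
      have hNC : ∀ n ∈ N, n ∈ C := fun n hn => by simp [hC, hn]
      have hsurj : ∀ x : F, x ≠ 0 → x ≠ 1 → ∀ y, ∃ n ∈ C, n.1 * x + n.2 = y := by
        intro x hx0 hx1 y
        by_cases hy0 : y = 0
        · exact ⟨_, hOC, by simp [hy0]⟩
        by_cases hy1 : y = 1 + m * x
        · exact ⟨_, hKC, by rw [hy1]; ring⟩
        obtain ⟨n, hn, h⟩ := (hJ x y hx0 hx1 hy0 hy1).resolve_left (by simp)
        exact ⟨n, hNC n hn, h⟩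
      set Λ : F × F := (∑ n ∈ C, n.1, ∑ n ∈ C, n.2) with hΛ
      have hsum : ∀ x : F, ∑ n ∈ C, (n.1 * x + n.2) = Λ.1 * x + Λ.2 := by
        intro x
        rw [Finset.sum_add_distrib, ← Finset.sum_mul]
      have K : ∀ x : F, x ≠ 0 → x ≠ 1 → ∃ p ∈ C, ∃ p' ∈ C, p ≠ p' ∧
          p.1 * x + p.2 = Λ.1 * x + Λ.2 ∧ p'.1 * x + p'.2 = Λ.1 * x + Λ.2 ∧
          ∀ a ∈ C, ∀ b ∈ C, a ≠ b → a.1 * x + a.2 = b.1 * x + b.2 →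
            (a = p ∧ b = p') ∨ (a = p' ∧ b = p) := by
        intro x hx0 hx1
        have := key (by omega) C (fun n => n.1 * x + n.2) hCc (hsurj x hx0 hx1)
        simpa only [hsum] using this
      have Λu : Λ.1 * u + Λ.2 = 0 := by
        obtain ⟨p, hp, p', hp', hne, hv, hv', hall⟩ := K u hu0 hu1
        rcases hall _ hOC _ hKC hOK (by linear_combination -hu) with ⟨h, -⟩ | ⟨h, -⟩
        · rw [← hv, ← h]; simp
        · rw [← hv', ← h]; simp
      by_cases hΛC : Λ ∈ C
      · have hΛOK : Λ = (0, 0) ∨ Λ = (m, 1) := by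
          rw [hC, Finset.mem_insert, Finset.mem_insert] at hΛC
          rcases hΛC with h | h | h
          · exact Or.inl h
          · exact Or.inr h
          · exact absurd Λu (hNu _ h)
        have hadj : ∀ a ∈ C.erase Λ, ∀ b ∈ C.erase Λ, a ≠ b →
            a.1 = b.1 ∨ a.2 = b.2 ∨ a.1 + a.2 = b.1 + b.2 := by
          intro a ha b hb hab
          obtain ⟨ha1, ha2⟩ := Finset.mem_erase.1 ha
          obtain ⟨hb1, hb2⟩ := Finset.mem_erase.1 hb
          have := adj (a.1 - b.1) (a.2 - b.2) (by
            intro x hx0 hx1 hz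
            obtain ⟨p, hp, p', hp', hne, hv, hv', hall⟩ := K x hx0 hx1
            have hΛp : Λ = p ∨ Λ = p' := by
              by_contra hcon
              push Not at hcon
              rcases hall Λ hΛC p hp hcon.1 hv.symm with ⟨h, -⟩ | ⟨h, -⟩
              · exact hcon.1 h
              · exact hcon.2 h
            rcases hall a ha2 b hb2 hab (by linear_combination hz) with ⟨g, g'⟩ | ⟨g, g'⟩
            · rcases hΛp with h | h
              · exact ha1 (g.trans h.symm)
              · exact hb1 (g'.trans h.symm)
            · rcases hΛp with h | h
              · exact hb1 (g'.trans h.symm)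
              · exact ha1 (g.trans h.symm))
          rcases this with h | h | h
          · exact Or.inl (sub_eq_zero.1 h)
          · exact Or.inr (Or.inl (sub_eq_zero.1 h))
          · exact Or.inr (Or.inr (by linear_combination h))
        have hc5 : 5 ≤ (C.erase Λ).card := by
          rw [Finset.card_erase_of_mem hΛC]; omega
        obtain ⟨n3, hn3, h30⟩ := h3.resolve_left (by simp)
        obtain ⟨n4, hn4, h41⟩ := h4.resolve_left (by simp)
        have hNΛ : ∀ n ∈ N, n ∈ C.erase Λ := by
          intro n hn
          refine Finset.mem_erase.2 ⟨?_, hNC n hn⟩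
          rintro rfl
          exact hNu _ hn Λu
        rcases hΛOK with h | h
        · refine four _ hc5 hadj (m, 1) n4 n3 ?_ (hNΛ _ hn4) (hNΛ _ hn3) ?_ h41.symm ?_
          · exact Finset.mem_erase.2 ⟨by rw [h]; exact hOK.symm, hKC⟩
          · rintro rfl; exact hKN hn4
          · rw [h30]; exact zero_ne_one
        · refine four _ hc5 hadj (0, 0) n3 n4 ?_ (hNΛ _ hn3) (hNΛ _ hn4) ?_ h30.symm ?_
          · exact Finset.mem_erase.2 ⟨by rw [h]; exact hOK, hOC⟩
          · rintro rfl; exact hON hn3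
          · rw [h41]; exact one_ne_zero
      · obtain ⟨n, hn, hnt⟩ := h5.resolve_left (by simp)
        have hnO : n ≠ (0, 0) := by rintro rfl; exact hON hn
        have hnK : n ≠ (m, 1) := by rintro rfl; exact hKN hn
        -- a line of C through the same point as Z (Z = O or K) forces x = u
        have gen : ∀ Z ∈ C, Z.1 * u + Z.2 = 0 → n ≠ Z → ∀ x : F, x ≠ 0 → x ≠ 1 →
            (n.1 - Z.1) * x + (n.2 - Z.2) ≠ 0 := by
          intro Z hZ hZu hnZ x hx0 hx1 hz
          have hco : n.1 * x + n.2 = Z.1 * x + Z.2 := by linear_combination hz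
          have hxu : x ≠ u := by
            rintro rfl
            exact hNu n hn (hco.trans hZu)
          obtain ⟨p, hp, p', hp', hne, hv, hv', hall⟩ := K x hx0 hx1
          have hZΛ : Z.1 * x + Z.2 = Λ.1 * x + Λ.2 := by
            rcases hall n (hNC n hn) Z hZ hnZ hco with ⟨-, h⟩ | ⟨-, h⟩
            · rw [h]; exact hv'
            · rw [h]; exact hv
          have e1 : (Z.1 - Λ.1) * (x - u) = 0 := by linear_combination hZΛ - hZu + Λu
          have e2 : Z.1 = Λ.1 := by
            rcases mul_eq_zero.1 e1 with h | h
            · exact sub_eq_zero.1 h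
            · exact absurd (sub_eq_zero.1 h) hxu
          have e3 : Z.2 = Λ.2 := by
            rw [e2] at hZΛ
            exact add_left_cancel hZΛ
          exact hΛC (by rw [← Prod.ext e2 e3]; exact hZ)
        have r1 := adj _ _ (gen _ hOC (by simp) hnO)
        have r2 := adj _ _ (gen _ hKC (by linear_combination hu) hnK)
        obtain ⟨σ, a⟩ := n
        simp only at r1 r2 hnt
        subst hnt
        clear hJ h1 h2 h3 h4 h5 hP hR colx colu K gen
        grind

end Core
end RyserAux

namespace RyserAux
set_option linter.unusedSectionVars false
set_option linter.unusedVariables false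

section Big
variable {F : Type} [Field F] [Fintype F] [DecidableEq F]

/-- pencil with prescribed vertical label -/
def pe (l : Option F) (x y : F) : Option F → Option F :=
  fun i => i.elim l (fun μ => some (y - μ * x))

/-- pencil with prescribed vertical label and one modified slope -/
def ped (l : Option F) (x y σ c : F) : Option F → Option F :=
  fun i => i.elim l (fun μ => some (if μ = σ then c else y - μ * x))

lemma pe_pe (l l' : Option F) (x y x' y' : F) (hx : x ≠ x') :
    ∃ i, pe l x y i = pe l' x' y' i := by
  have h' : x - x' ≠ 0 := sub_ne_zero.2 hx
  refine ⟨some ((y - y') / (x - x')), ?_⟩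
  simp only [pe, Option.elim, Option.some.injEq]
  field_simp
  ring

lemma ped_pe (l l' : Option F) (x y σ c x' y' : F) (hx : x ≠ x') (h : y - y' ≠ σ * (x - x')) :
    ∃ i, ped l x y σ c i = pe l' x' y' i := by
  have h' : x - x' ≠ 0 := sub_ne_zero.2 hx
  refine ⟨some ((y - y') / (x - x')), ?_⟩
  have hne : (y - y') / (x - x') ≠ σ := by
    intro hh
    exact h ((div_eq_iff h').1 hh)
  simp only [ped, pe, Option.elim, Option.some.injEq, if_neg hne]
  field_simp
  ring

lemma pe_cov (B : Finset (Option F × Option F)) (l : Option F) (x y : F)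
    (h : ∃ i, (i, pe l x y i) ∈ B) :
    l ∈ Vt B ∨ ∃ n ∈ Ns some B, n.1 * x + n.2 = y := by
  obtain ⟨i, hi⟩ := h
  cases i with
  | none => left; simpa [Vt, pe] using hi
  | some μ => right; exact ⟨(μ, y - μ * x), by simpa [Ns, pe] using hi, by simp⟩

lemma ped_cov (B : Finset (Option F × Option F)) (l : Option F) (x y σ c : F)
    (h : ∃ i, (i, ped l x y σ c i) ∈ B) :
    l ∈ Vt B ∨ (σ, c) ∈ Ns some B ∨ ∃ n ∈ Ns some B, n.1 ≠ σ ∧ n.1 * x + n.2 = y := by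
  obtain ⟨i, hi⟩ := h
  cases i with
  | none => left; simpa [Vt, ped] using hi
  | some μ =>
    right
    by_cases hμ : μ = σ
    · left
      subst hμ
      simpa [Ns, ped] using hi
    · right
      exact ⟨(μ, y - μ * x), by simpa [Ns, ped, hμ] using hi, hμ, by simp⟩

/-- the edges -/
def IsE (m t s : F) (e : Option F → Option F) : Prop :=
  (∃ x y, x ≠ 0 ∧ x ≠ 1 ∧ y ≠ 0 ∧ y ≠ 1 + m * x ∧ e = pe (some x) x y) ∨
  e = ped (some 0) 0 0 0 1 ∨ e = ped (some 1) 0 1 m 0 ∨ e = pe (some s) 0 0 ∨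
  e = pe (some s) 0 1 ∨ e = pe none 1 t ∨ e = ped (some s) s 0 0 1 ∨
  e = ped (some s) s (1 + m * s) m 0

lemma inter_big (m t s : F) (hm0 : m ≠ 0) (hm1 : 1 + m ≠ 0)
    (ht0 : t ≠ 0) (ht1 : t ≠ 1) (htm : t ≠ m) (htm1 : t ≠ 1 + m)
    (hs0 : s ≠ 0) (hs1 : s ≠ 1) (hsm : 1 + m * s ≠ 0)
    (e f : Option F → Option F) (he : IsE m t s e) (hf : IsE m t s f) : ∃ i, e i = f i := by
  have symm : ∀ e f : Option F → Option F, (∃ i, e i = f i) → ∃ i, f i = e i :=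
    fun e f ⟨i, hi⟩ => ⟨i, hi.symm⟩
  have self : ∀ e : Option F → Option F, ∃ i, e i = e i := fun e => ⟨none, rfl⟩
  have j0 : ∀ x y x' y' : F, ∃ i, pe (some x) x y i = pe (some x') x' y' i := by
    intro x y x' y'
    by_cases h : x = x'
    · exact ⟨none, by simp [pe, h]⟩
    · exact pe_pe _ _ _ _ _ _ h
  have j1 : ∀ x y : F, x ≠ 0 → y ≠ 0 →
      ∃ i, ped (some (0 : F)) 0 0 0 1 i = pe (some x) x y i := by
    intro x y hx hy
    exact ped_pe _ _ _ _ _ _ _ _ hx.symm (by simpa using hy)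
  have j2 : ∀ x y, x ≠ 0 → y ≠ 1 + m * x →
      ∃ i, ped (some 1) 0 1 m 0 i = pe (some x) x y i := by
    intro x y hx hy
    exact ped_pe _ _ _ _ _ _ _ _ hx.symm (fun h => hy (by linear_combination -h))
  have j34 : ∀ x y z, x ≠ 0 → ∃ i, pe (some s) 0 z i = pe (some x) x y i := by
    intro x y z hx
    exact pe_pe _ _ _ _ _ _ hx.symm
  have j5 : ∀ x y, x ≠ 1 → ∃ i, pe none 1 t i = pe (some x) x y i := by
    intro x y hx
    exact pe_pe _ _ _ _ _ _ hx.symm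
  have j6 : ∀ x y, y ≠ 0 → ∃ i, ped (some s) s 0 0 1 i = pe (some x) x y i := by
    intro x y hy
    by_cases h : x = s
    · exact ⟨none, by simp [pe, ped, h]⟩
    · exact ped_pe _ _ _ _ _ _ _ _ (Ne.symm h) (by simpa using hy)
  have j7 : ∀ x y, y ≠ 1 + m * x →
      ∃ i, ped (some s) s (1 + m * s) m 0 i = pe (some x) x y i := by
    intro x y hy
    by_cases h : x = s
    · exact ⟨none, by simp [pe, ped, h]⟩
    · exact ped_pe _ _ _ _ _ _ _ _ (Ne.symm h) (fun h => hy (by linear_combination -h))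
  have a12 : ∃ i, ped (some 0) 0 0 0 1 i = ped (some (1 : F)) 0 1 m 0 i :=
    ⟨some 0, by simp [ped, hm0.symm]⟩
  have a13 : ∃ i, ped (some 0) 0 0 0 1 i = pe (some s) 0 0 i :=
    ⟨some m, by simp [ped, pe, hm0]⟩
  have a14 : ∃ i, ped (some 0) 0 0 0 1 i = pe (some s) 0 1 i :=
    ⟨some 0, by simp [ped, pe]⟩
  have a15 : ∃ i, ped (some 0) 0 0 0 1 i = pe none 1 t i :=
    ped_pe _ _ _ _ _ _ _ _ zero_ne_one (by simpa using ht0)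
  have a16 : ∃ i, ped (some 0) 0 0 0 1 i = ped (some s) s 0 0 1 i :=
    ⟨some 0, by simp [ped]⟩
  have a17 : ∃ i, ped (some 0) 0 0 0 1 i = ped (some s) s (1 + m * s) m 0 i :=
    ⟨some m, by simp [ped, hm0]⟩
  have a23 : ∃ i, ped (some 1) 0 1 m 0 i = pe (some s) 0 0 i :=
    ⟨some m, by simp [ped, pe]⟩
  have a24 : ∃ i, ped (some 1) 0 1 m 0 i = pe (some s) 0 1 i :=
    ⟨some 0, by simp [ped, pe, hm0.symm]⟩
  have a25 : ∃ i, ped (some 1) 0 1 m 0 i = pe none 1 t i :=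
    ped_pe _ _ _ _ _ _ _ _ zero_ne_one (fun h => htm1 (by linear_combination -h))
  have a26 : ∃ i, ped (some 1) 0 1 m 0 i = ped (some s) s 0 0 1 i :=
    ⟨some 0, by simp [ped, hm0.symm]⟩
  have a27 : ∃ i, ped (some 1) 0 1 m 0 i = ped (some s) s (1 + m * s) m 0 i :=
    ⟨some m, by simp [ped]⟩
  have a34 : ∃ i, pe (some s) 0 0 i = pe (some s) 0 1 i := ⟨none, rfl⟩
  have a35 : ∃ i, pe (some s) 0 0 i = pe none 1 t i := pe_pe _ _ _ _ _ _ zero_ne_one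
  have a36 : ∃ i, pe (some s) 0 0 i = ped (some s) s 0 0 1 i := ⟨none, rfl⟩
  have a37 : ∃ i, pe (some s) 0 0 i = ped (some s) s (1 + m * s) m 0 i := ⟨none, rfl⟩
  have a45 : ∃ i, pe (some s) 0 1 i = pe none 1 t i := pe_pe _ _ _ _ _ _ zero_ne_one
  have a46 : ∃ i, pe (some s) 0 1 i = ped (some s) s 0 0 1 i := ⟨none, rfl⟩
  have a47 : ∃ i, pe (some s) 0 1 i = ped (some s) s (1 + m * s) m 0 i := ⟨none, rfl⟩
  have a65 : ∃ i, ped (some s) s 0 0 1 i = pe none 1 t i :=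
    ped_pe _ _ _ _ _ _ _ _ hs1 (by simpa using ht0)
  have a75 : ∃ i, ped (some s) s (1 + m * s) m 0 i = pe none 1 t i :=
    ped_pe _ _ _ _ _ _ _ _ hs1 (fun h => htm1 (by linear_combination -h))
  have a67 : ∃ i, ped (some s) s 0 0 1 i = ped (some s) s (1 + m * s) m 0 i := ⟨none, rfl⟩
  rcases he with ⟨x, y, hx0, hx1, hy0, hy1, rfl⟩ | rfl | rfl | rfl | rfl | rfl | rfl | rfl <;>
  rcases hf with ⟨x', y', hx0', hx1', hy0', hy1', rfl⟩ | rfl | rfl | rfl | rfl | rfl | rfl | rfl <;>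
  first
  | exact self _
  | assumption
  | (apply symm; assumption)
  | exact j0 _ _ _ _
  | exact j1 _ _ (by assumption) (by assumption)
  | exact j2 _ _ (by assumption) (by assumption)
  | exact j34 _ _ _ (by assumption)
  | exact j5 _ _ (by assumption)
  | exact j6 _ _ (by assumption)
  | exact j7 _ _ (by assumption)
  | exact symm _ _ (j1 _ _ (by assumption) (by assumption))
  | exact symm _ _ (j2 _ _ (by assumption) (by assumption))
  | exact symm _ _ (j34 _ _ _ (by assumption))
  | exact symm _ _ (j5 _ _ (by assumption))
  | exact symm _ _ (j6 _ _ (by assumption))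
  | exact symm _ _ (j7 _ _ (by assumption))

lemma good_big (hq : 5 ≤ Fintype.card F) :
    ∃ (I : Finset (Option F → Option F)) (P : Finset (Option F)), Good (Fintype.card F) I P := by
  classical
  have pick : ∀ A : Finset F, A.card ≤ 4 → ∃ x, x ∉ A := by
    intro A hA
    by_contra hcon
    push Not at hcon
    have := Finset.card_le_card (fun x _ => hcon x : Finset.univ ⊆ A)
    rw [Finset.card_univ] at this
    omega
  obtain ⟨m, hm⟩ := pick {0, -1, 0, 0} Finset.card_le_four
  obtain ⟨t, ht⟩ := pick {0, 1, m, 1 + m} Finset.card_le_four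
  obtain ⟨s, hs⟩ := pick {0, 1, -1 / m, 0} Finset.card_le_four
  simp only [Finset.mem_insert, Finset.mem_singleton, not_or] at hm ht hs
  obtain ⟨hm0, hm1, -, -⟩ := hm
  obtain ⟨ht0, ht1, htm, htm1⟩ := ht
  obtain ⟨hs0, hs1, hsm, -⟩ := hs
  have hm1 : 1 + m ≠ 0 := fun h => hm1 (by linear_combination h)
  have hsm : 1 + m * s ≠ 0 := by
    intro h
    apply hsm
    rw [eq_div_iff hm0]
    linear_combination h
  set I : Finset (Option F → Option F) := Finset.univ.filter (IsE m t s) with hI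
  have mI : ∀ e, e ∈ I ↔ IsE m t s e := fun e => by simp [hI]
  have D0 : ∃ D : Finset (Option F × Option F), D.card + 2 ≤ Fintype.card F ∧
      ∀ x : F, x ≠ 0 → x ≠ 1 → (none, some x) ∈ D := by
    refine ⟨(Finset.univ \ {0, 1}).image (fun x => (none, some x)), ?_, ?_⟩
    · have h1 := Finset.card_image_le (s := (Finset.univ \ {0, 1} : Finset F))
        (f := fun x => ((none : Option F), some x))
      have := Finset.card_sdiff_add_card_eq_card (Finset.subset_univ ({0, 1} : Finset F))
      rw [Finset.card_pair zero_ne_one, Finset.card_univ] at this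
      omega
    · intro x h0 h1
      simp [h0, h1]
  have crit : ∀ v, ∀ z : Option F × Option F,
      (some 0 ≠ v → (z.1, ped (some 0) 0 0 0 1 z.1) = z) →
      (some 1 ≠ v → (z.1, ped (some 1) 0 1 m 0 z.1) = z) →
      (none ≠ v → (z.1, pe none 1 t z.1) = z) →
      ∃ B : Finset (Option F × Option F), B.card + 1 ≤ Fintype.card F ∧
        ∀ e ∈ I, e none ≠ v → ∃ i, (i, e i) ∈ B := by
    intro v z z1 z2 z5
    obtain ⟨D, hDc, hD⟩ := D0
    refine ⟨insert z D, ?_, ?_⟩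
    · have := Finset.card_insert_le z D
      omega
    · intro e he hv
      rcases (mI e).1 he with ⟨x, y, hx0, hx1, hy0, hy1, rfl⟩ | rfl | rfl | rfl | rfl | rfl |
        rfl | rfl
      · exact ⟨none, Finset.mem_insert_of_mem (hD x hx0 hx1)⟩
      · exact ⟨z.1, by rw [z1 hv]; exact Finset.mem_insert_self _ _⟩
      · exact ⟨z.1, by rw [z2 hv]; exact Finset.mem_insert_self _ _⟩
      · exact ⟨none, Finset.mem_insert_of_mem (hD s hs0 hs1)⟩
      · exact ⟨none, Finset.mem_insert_of_mem (hD s hs0 hs1)⟩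
      · exact ⟨z.1, by rw [z5 hv]; exact Finset.mem_insert_self _ _⟩
      · exact ⟨none, Finset.mem_insert_of_mem (hD s hs0 hs1)⟩
      · exact ⟨none, Finset.mem_insert_of_mem (hD s hs0 hs1)⟩
  refine ⟨I, {some 0, some 1, none}, ?_⟩
  constructor
  · intro e he f hf
    exact inter_big m t s hm0 hm1 ht0 ht1 htm htm1 hs0 hs1 hsm e f ((mI e).1 he) ((mI f).1 hf)
  · exact ⟨none, by simp⟩
  · intro B hB
    have hB' : ∀ e, IsE m t s e → ∃ i, (i, e i) ∈ B := fun e he => hB e ((mI e).2 he)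
    refine le_trans ?_ (split_card some (Option.some_injective F) B)
    apply core hq m t s hm0 hm1 ht0 ht1 htm htm1 hs0 hs1 hsm
    · intro x y hx0 hx1 hy0 hy1
      exact pe_cov B _ _ _ (hB' _ (Or.inl ⟨x, y, hx0, hx1, hy0, hy1, rfl⟩))
    · simpa using ped_cov B _ _ _ _ _ (hB' (ped (some 0) 0 0 0 1) (by simp [IsE]))
    · simpa using ped_cov B _ _ _ _ _ (hB' (ped (some 1) 0 1 m 0) (by simp [IsE]))
    · simpa using pe_cov B _ _ _ (hB' (pe (some s) 0 0) (by simp [IsE]))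
    · simpa using pe_cov B _ _ _ (hB' (pe (some s) 0 1) (by simp [IsE]))
    · simpa using pe_cov B _ _ _ (hB' (pe none 1 t) (by simp [IsE]))
    · exact ped_cov B _ _ _ _ _ (hB' (ped (some s) s 0 0 1) (by simp [IsE]))
    · exact ped_cov B _ _ _ _ _ (hB' (ped (some s) s (1 + m * s) m 0) (by simp [IsE]))
  · intro B hB
    have hP3 : ({some 0, some 1, none} : Finset (Option F)).card = 3 := by
      rw [Finset.card_eq_three]
      exact ⟨_, _, _, by simp, by simp, by simp, rfl⟩
    rw [hP3]
    have hsp := split_card some (Option.some_injective F) B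
    by_cases hall : ∀ x : F, x ≠ 0 → x ≠ 1 → some x ∈ Vt B
    · have hsub : (Finset.univ \ {0, 1}).image some ⊆ Vt B := by
        intro a ha
        obtain ⟨x, hx, rfl⟩ := Finset.mem_image.1 ha
        simp only [Finset.mem_sdiff, Finset.mem_univ, true_and, Finset.mem_insert,
          Finset.mem_singleton, not_or] at hx
        exact hall x hx.1 hx.2
      have h1 := Finset.card_le_card hsub
      rw [Finset.card_image_of_injective _ (Option.some_injective F)] at h1
      have := Finset.card_sdiff_add_card_eq_card (Finset.subset_univ ({0, 1} : Finset F))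
      rw [Finset.card_pair zero_ne_one, Finset.card_univ] at this
      omega
    · push Not at hall
      obtain ⟨x, hx0, hx1, hxV⟩ := hall
      have h1 := column (Ns some B) x (Finset.univ \ {0, 1 + m * x}) (by
        intro y hy
        simp only [Finset.mem_sdiff, Finset.mem_univ, true_and, Finset.mem_insert,
          Finset.mem_singleton, not_or] at hy
        refine (pe_cov B (some x) x y (hB _ ((mI _).2
          (Or.inl ⟨x, y, hx0, hx1, hy.1, hy.2, rfl⟩)) ?_)).resolve_left hxV
        simp [pe, hx0, hx1])
      have := Finset.card_sdiff_add_card_eq_card (Finset.subset_univ ({0, 1 + m * x} : Finset F))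
      rw [Finset.card_univ] at this
      have := Finset.card_le_two (a := (0 : F)) (b := 1 + m * x)
      omega
  · intro v hv
    simp only [Finset.mem_insert, Finset.mem_singleton] at hv
    rcases hv with rfl | rfl | rfl
    · apply crit _ (some (t - 1), some 1)
      · simp
      · have : t - 1 ≠ m := fun h => htm1 (by linear_combination h)
        simp [ped, this]
      · simp [pe]
    · apply crit _ (some t, some 0)
      · simp [ped, ht0]
      · simp
      · simp [pe]
    · apply crit _ (some 0, some 1)
      · simp [ped]
      · simp [ped, Ne.symm hm0]
      · simp

end Big
end RyserAux

namespace RyserAux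
set_option linter.unusedSectionVars false
set_option linter.unusedVariables false

section Four

/-- the edges for `q = 4` -/
def T4 : List (Fin 5 → Fin 5) :=
  [![2, 1, 3, 2, 0], ![2, 2, 0, 1, 3], ![2, 3, 1, 0, 2], ![3, 1, 2, 0, 3], ![3, 2, 1, 3, 0],
   ![3, 3, 0, 2, 1], ![0, 2, 1, 2, 3], ![1, 1, 1, 1, 1], ![2, 0, 1, 0, 1], ![4, 2, 3, 0, 1]]

/-- no cover of size at most `k` -/
def noCov : ℕ → List (Fin 5 → Fin 5) → Bool
  | _, [] => false
  | 0, _ :: _ => true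
  | k + 1, e :: es => decide (∀ i : Fin 5, noCov k (es.filter (fun f => decide (f i ≠ e i))) = true)

lemma noCov_spec (k : ℕ) : ∀ (es : List (Fin 5 → Fin 5)), noCov k es = true →
    ∀ B : Finset (Fin 5 × Fin 5), (∀ e ∈ es, ∃ i, (i, e i) ∈ B) → k < B.card := by
  induction k with
  | zero =>
    intro es h B hB
    cases es with
    | nil => simp [noCov] at h
    | cons e es =>
      obtain ⟨i, hi⟩ := hB e (by simp)
      exact Finset.card_pos.2 ⟨_, hi⟩
  | succ k ih =>
    intro es h B hB
    cases es with
    | nil => simp [noCov] at h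
    | cons e es =>
      obtain ⟨i, hi⟩ := hB e (by simp)
      rw [noCov, decide_eq_true_eq] at h
      have := ih _ (h i) (B.erase (i, e i)) (by
        intro f hf
        rw [List.mem_filter, decide_eq_true_eq] at hf
        obtain ⟨j, hj⟩ := hB f (by simp [hf.1])
        refine ⟨j, Finset.mem_erase.2 ⟨?_, hj⟩⟩
        intro h
        simp only [Prod.mk.injEq] at h
        obtain ⟨rfl, h⟩ := h
        exact hf.2 h)
      rw [Finset.card_erase_of_mem hi] at this
      omega

lemma cov4 : noCov 3 T4 = true := by decide +kernel

lemma covP4 : noCov 1 (T4.filter (fun e => decide (e 0 ∉ ({0, 1, 4} : Finset (Fin 5))))) = true := by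
  decide +kernel

lemma inter4 : ∀ e ∈ T4, ∀ f ∈ T4, ∃ i, e i = f i := by
  have h : (T4.all fun e => T4.all fun f => decide (∃ i, e i = f i)) = true := by decide +kernel
  intro e he f hf
  exact of_decide_eq_true (List.all_eq_true.1 (List.all_eq_true.1 h e he) f hf)

lemma crit4 : ∀ v ∈ ({0, 1, 4} : Finset (Fin 5)), ∃ z : Fin 5 × Fin 5,
    ∀ e ∈ T4, e 0 ≠ v → ∃ i, (i, e i) ∈ ({(0, 2), (0, 3), z} : Finset (Fin 5 × Fin 5)) := by
  have red : ∀ v : Fin 5, ∀ z : Fin 5 × Fin 5, (T4.all fun e => decide (e 0 = v ∨ e 0 = 2 ∨ e 0 = 3 ∨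
      e z.1 = z.2)) = true → ∀ e ∈ T4, e 0 ≠ v →
      ∃ i, (i, e i) ∈ ({(0, 2), (0, 3), z} : Finset (Fin 5 × Fin 5)) := by
    intro v z h e he hv
    rcases of_decide_eq_true (List.all_eq_true.1 h e he) with h | h | h | h
    · exact absurd h hv
    · exact ⟨0, by simp [h]⟩
    · exact ⟨0, by simp [h]⟩
    · exact ⟨z.1, by simp [h]⟩
  intro v hv
  simp only [Finset.mem_insert, Finset.mem_singleton] at hv
  rcases hv with rfl | rfl | rfl
  · exact ⟨(4, 1), red _ _ (by decide +kernel)⟩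
  · exact ⟨(1, 2), red _ _ (by decide +kernel)⟩
  · exact ⟨(2, 1), red _ _ (by decide +kernel)⟩

lemma good_four {F : Type} [Field F] [Fintype F] [DecidableEq F] (hq : Fintype.card F = 4) :
    ∃ (I : Finset (Option F → Fin 5)) (P : Finset (Fin 5)), Good (Fintype.card F) I P := by
  classical
  obtain ⟨φ, hφ⟩ : ∃ φ : Option F ≃ Fin 5, φ none = 0 := by
    obtain ⟨ψ⟩ := Fintype.card_eq.1 (show Fintype.card (Option F) = Fintype.card (Fin 5) by simp [hq])
    exact ⟨ψ.trans (Equiv.swap (ψ none) 0), by simp⟩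
  rw [hq]
  refine ⟨(T4.toFinset).image (fun e i => e (φ i)), {0, 1, 4}, ?_⟩
  have mI : ∀ g, g ∈ (T4.toFinset).image (fun e (i : Option F) => e (φ i)) ↔
      ∃ e ∈ T4, (fun i => e (φ i)) = g := by
    intro g
    simp only [Finset.mem_image, List.mem_toFinset]
  have push : ∀ (B : Finset (Option F × Fin 5)) (e : Fin 5 → Fin 5),
      (∃ i, (i, e (φ i)) ∈ B) → ∃ i, (i, e i) ∈ B.image (fun a => (φ a.1, a.2)) := by
    rintro B e ⟨i, hi⟩
    exact ⟨φ i, Finset.mem_image.2 ⟨_, hi, rfl⟩⟩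
  constructor
  · intro e' he' f' hf'
    obtain ⟨e, he, rfl⟩ := (mI _).1 he'
    obtain ⟨f, hf, rfl⟩ := (mI _).1 hf'
    obtain ⟨i, hi⟩ := inter4 e he f hf
    exact ⟨φ.symm i, by simpa using hi⟩
  · exact ⟨0, by simp⟩
  · intro B hB
    have h1 := noCov_spec 3 T4 cov4 (B.image (fun a => (φ a.1, a.2))) (by
      intro e he
      exact push B e (hB _ ((mI _).2 ⟨e, he, rfl⟩)))
    have := Finset.card_image_le (s := B) (f := fun a => (φ a.1, a.2))
    omega
  · intro B hB
    have h1 := noCov_spec 1 _ covP4 (B.image (fun a => (φ a.1, a.2))) (by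
      intro e he
      rw [List.mem_filter, decide_eq_true_eq] at he
      exact push B e (hB _ ((mI _).2 ⟨e, he.1, rfl⟩) (by simpa only [hφ] using he.2)))
    have := Finset.card_image_le (s := B) (f := fun a => (φ a.1, a.2))
    have h3 : ({0, 1, 4} : Finset (Fin 5)).card = 3 := by decide
    omega
  · intro v hv
    obtain ⟨z, hz⟩ := crit4 v hv
    refine ⟨({(0, 2), (0, 3), z} : Finset (Fin 5 × Fin 5)).image (fun a => (φ.symm a.1, a.2)), ?_, ?_⟩
    · have := Finset.card_image_le (s := ({(0, 2), (0, 3), z} : Finset (Fin 5 × Fin 5)))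
        (f := fun a => (φ.symm a.1, a.2))
      have h3 := Finset.card_le_three (a := ((0 : Fin 5), (2 : Fin 5))) (b := (0, 3)) (c := z)
      omega
    · intro e' he' hv'
      obtain ⟨e, he, rfl⟩ := (mI _).1 he'
      simp only [hφ] at hv'
      obtain ⟨i, hi⟩ := hz e he hv'
      exact ⟨φ.symm i, Finset.mem_image.2 ⟨_, hi, by simp⟩⟩

end Four

lemma main {F : Type} [Field F] [Fintype F] (hq : 4 ≤ Fintype.card F) :
    ∃ (V : Finset ℕ) (E : Finset (Finset ℕ)),
      IsPartite (Fintype.card F + 1) V E ∧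
      matchingNumber E = 2 ∧
      coverNumber E = 2 * Fintype.card F ∧
      ¬ ∃ E₁ E₂ : Finset (Finset ℕ),
          IsIntersectingRyserSub (Fintype.card F + 1) E E₁ ∧
          IsIntersectingRyserSub (Fintype.card F + 1) E E₂ ∧
          Disjoint (E₁.sup id) (E₂.sup id) := by
  classical
  rcases Nat.lt_or_ge 4 (Fintype.card F) with h | h
  · obtain ⟨I, P, hG⟩ := good_big (F := F) h
    exact glue I P hG
  · obtain ⟨I, P, hG⟩ := good_four (F := F) (le_antisymm h hq)
    exact glue I P hG

end RyserAux

/-- For every prime power `q ≥ 4` there exists a `(q + 1)`-partite hypergraph `H` with matching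
number `2` and vertex cover number `2q` that does not contain two vertex disjoint
subhypergraphs each of which is an intersecting `(q + 1)`-Ryser hypergraph. -/
theorem statement4 (q : ℕ) (hpp : ∃ p k : ℕ, p.Prime ∧ 1 ≤ k ∧ q = p ^ k) (hq : 4 ≤ q) :
    ∃ (V : Finset ℕ) (E : Finset (Finset ℕ)),
      IsPartite (q + 1) V E ∧
      matchingNumber E = 2 ∧
      coverNumber E = 2 * q ∧
      ¬ ∃ E₁ E₂ : Finset (Finset ℕ),
          IsIntersectingRyserSub (q + 1) E E₁ ∧ IsIntersectingRyserSub (q + 1) E E₂ ∧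
          Disjoint (E₁.sup id) (E₂.sup id) := by
  obtain ⟨p, k, hp, hk, rfl⟩ := hpp
  have : Fact p.Prime := ⟨hp⟩
  have hk0 : k ≠ 0 := by omega
  have : Fintype (GaloisField p k) := Fintype.ofFinite _
  have hc : Fintype.card (GaloisField p k) = p ^ k := by
    rw [← Nat.card_eq_fintype_card, GaloisField.card p k hk0]
  have := RyserAux.main (F := GaloisField p k) (by rw [hc]; exact hq)
  rw [hc] at this
  exact this
end

section
/- A blocking set in a projective plane of order n has size exactly n + 1 if and only if it is the set of points of some line of the plane. -/
/-- A blocking set in a projective plane of order `n` has size exactly `n + 1` if and only if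
it is the set of points of some line of the plane. -/
theorem statement6 (P L : Type) [Membership P L] [Finite P] [Finite L]
    [Configuration.ProjectivePlane P L] (n : ℕ)
    (horder : Configuration.ProjectivePlane.order P L = n)
    (B : Set P) (hB : ∀ l : L, ∃ p ∈ B, p ∈ l) :
    B.ncard = n + 1 ↔ ∃ l : L, B = {p : P | p ∈ l} := by
  have hline : ∀ l : L, ({p : P | p ∈ l} : Set P).ncard = n + 1 := by
    intro l
    have h := Configuration.ProjectivePlane.pointCount_eq P l
    rw [horder] at h
    exact h
  constructor
  · intro hc
    have h1 : 1 < n := by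
      have := Configuration.ProjectivePlane.one_lt_order P L
      omega
    obtain ⟨a, ha, b, hb, hab⟩ := (Set.one_lt_ncard_iff_nontrivial (s := B)).1 (by omega)
    obtain ⟨hal, hbl⟩ := Configuration.HasLines.mkLine_ax (L := L) hab
    generalize (Configuration.HasLines.mkLine hab : L) = l at hal hbl
    refine ⟨l, ?_⟩
    symm
    apply Set.eq_of_subset_of_ncard_le _ (by rw [hline, hc]) (Set.toFinite _)
    intro q hq
    by_contra hqB
    have hq' : q ∈ l := hq
    choose f hfB hfl using hB
    let g : {m : L // q ∈ m} → B := fun m => ⟨f m.1, hfB m.1⟩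
    have key : ∀ (p : P) (m m' : L), p ∈ B → q ∈ m → q ∈ m' → p ∈ m → p ∈ m' → m = m' := by
      intro p m m' hp h1 h2 h3 h4
      rcases Configuration.Nondegenerate.eq_or_eq h1 h3 h2 h4 with h | h
      · exact absurd (h ▸ hp) hqB
      · exact h
    have ginj : Function.Injective g := by
      rintro ⟨m, hm⟩ ⟨m', hm'⟩ h
      have h' : f m = f m' := congrArg Subtype.val h
      exact Subtype.ext (key (f m) m m' (hfB m) hm hm' (hfl m) (h' ▸ hfl m'))
    have hcard : Nat.card {m : L // q ∈ m} = Nat.card B := by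
      have h := Configuration.ProjectivePlane.lineCount_eq L q
      rw [horder] at h
      exact h.trans hc.symm
    have gbij : Function.Bijective g := (Nat.bijective_iff_injective_and_card g).2 ⟨ginj, hcard⟩
    have hall : ∀ p ∈ B, p ∈ l → f l = p := by
      intro p hp hpl
      obtain ⟨⟨m, hm⟩, h⟩ := gbij.2 ⟨p, hp⟩
      have h' : f m = p := congrArg Subtype.val h
      have : m = l := key p m l hp hm hq' (h' ▸ hfl m) hpl
      rw [← this, h']
    exact hab ((hall a ha hal).symm.trans (hall b hb hbl))
  · rintro ⟨l, rfl⟩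
    exact hline l
end

section
/- Let C be a set of exactly q + 1 points in a projective plane of order q, let Q be a point of C, and let B be a set of points with Q ∉ B that meets every line of the plane which does not pass through Q and contains at least one point of C \ {Q}. Then |B| ≥ q. -/
/-- Let `C` be a set of exactly `q + 1` points in a projective plane of order `q`, let `Q ∈ C`,
and let `B` be a set of points with `Q ∉ B` meeting every line of the plane which does not pass
through `Q` and contains at least one point of `C \ {Q}`. Then `|B| ≥ q`. -/
theorem statement8 (P L : Type) [Membership P L] [Finite P] [Finite L]
    [Configuration.ProjectivePlane P L] (q : ℕ)
    (horder : Configuration.ProjectivePlane.order P L = q)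
    (C B : Set P) (Q : P) (hC : C.ncard = q + 1) (hQC : Q ∈ C) (hQB : Q ∉ B)
    (hB : ∀ l : L, Q ∉ l → (∃ p ∈ C \ {Q}, p ∈ l) → ∃ b ∈ B, b ∈ l) :
    q ≤ B.ncard := by
  by_cases hsub : C \ {Q} ⊆ B
  · have h1 := Set.ncard_le_ncard hsub (Set.toFinite B)
    have h2 := Set.ncard_sdiff_singleton_add_one hQC (Set.toFinite C)
    omega
  · obtain ⟨p, hp, hpB⟩ := Set.not_subset.mp hsub
    have hpQ : p ≠ Q := fun h => hp.2 h
    have key : ∀ l : L, p ∈ l → ∃ x ∈ insert Q B, x ∈ l := by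
      intro l hl
      by_cases hQ : Q ∈ l
      · exact ⟨Q, Set.mem_insert _ _, hQ⟩
      · obtain ⟨b, hb, hbl⟩ := hB l hQ ⟨p, hp, hl⟩
        exact ⟨b, Set.mem_insert_of_mem _ hb, hbl⟩
    have key2 : ∀ l : {l : L // p ∈ l}, ∃ x : (insert Q B : Set P), (x : P) ∈ l.1 := by
      rintro ⟨l, hl⟩
      obtain ⟨x, hx, hxl⟩ := key l hl
      exact ⟨⟨x, hx⟩, hxl⟩
    choose f hf using key2
    have hinj : Function.Injective f := by
      intro l m h
      have hne : p ≠ (f l : P) := by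
        intro hh
        have := (f l).2
        rw [← hh] at this
        rcases this with h | h
        · exact hpQ h
        · exact hpB h
      have hm : (f l : P) ∈ m.1 := h ▸ hf m
      exact Subtype.ext
        ((Configuration.Nondegenerate.eq_or_eq l.2 (hf l) m.2 hm).resolve_left hne)
    have h1 := Nat.card_le_card_of_injective f hinj
    have h2 : Nat.card {l : L // p ∈ l} = q + 1 := by
      rw [← horder]
      exact Configuration.ProjectivePlane.lineCount_eq (L := L) (p := p)
    rw [h2, Nat.card_coe_set_eq, Set.ncard_insert_of_notMem hQB (Set.toFinite B)] at h1
    omega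
end

section
/- Let Q be a point of a projective plane of order n and let B be a set of points of the plane with Q ∉ B that meets every line of the plane not passing through Q. Then |B| ≥ n, and if |B| = n then B = ℓ \ {Q} for some line ℓ of the plane passing through Q. -/
open Configuration in
theorem key_aux (P L : Type) [Membership P L] [Finite P] [Finite L]
    [Configuration.ProjectivePlane P L]
    (Q : P) (B : Set P)
    (hB : ∀ l : L, Q ∉ l → ∃ b ∈ B, b ∈ l) (p : P) (hpQ : p ≠ Q) (hpB : p ∉ B)
    (m : L) (hpm : p ∈ m) (hQm : Q ∈ m) :
    Configuration.ProjectivePlane.order P L ≤ (B \ {x | x ∈ m}).ncard := by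
  have h1 : ({l : L | p ∈ l} \ {m}).ncard = Configuration.ProjectivePlane.order P L := by
    have h := ProjectivePlane.lineCount_eq (L := L) p
    have h2 : {l : L | p ∈ l}.ncard = lineCount L p := rfl
    rw [Set.ncard_sdiff_singleton_of_mem (show m ∈ {l : L | p ∈ l} from hpm)]
    omega
  have hQ : ∀ l ∈ ({l : L | p ∈ l} \ {m}), Q ∉ l := by
    rintro l ⟨hl, hlm⟩ hQl
    rcases Nondegenerate.eq_or_eq (show p ∈ l from hl) hQl hpm hQm with h | h
    · exact hpQ h
    · exact hlm h
  haveI : Nonempty P := ⟨p⟩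
  choose! f hf using hB
  rw [← h1]
  refine Set.ncard_le_ncard_of_injOn f ?_ ?_ (Set.toFinite _)
  · intro l hl
    refine ⟨(hf l (hQ l hl)).1, fun hm => ?_⟩
    rcases Nondegenerate.eq_or_eq (show p ∈ l from hl.1) (hf l (hQ l hl)).2 hpm hm with h | h
    · exact hpB (h ▸ (hf l (hQ l hl)).1)
    · exact hl.2 h
  · intro l hl k hk h
    have a := hf l (hQ l hl)
    have b := hf k (hQ k hk)
    rw [← h] at b
    rcases Nondegenerate.eq_or_eq (show p ∈ l from hl.1) a.2 (show p ∈ k from hk.1) b.2 with h | h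
    · exact absurd (h ▸ a.1) hpB
    · exact h

open Configuration in
/-- Let `Q` be a point of a projective plane of order `n` and let `B` be a set of points with
`Q ∉ B` meeting every line not passing through `Q`. Then `|B| ≥ n`, and if `|B| = n` then
`B = ℓ \ {Q}` for some line `ℓ` through `Q`. -/
theorem statement9 (P L : Type) [Membership P L] [Finite P] [Finite L]
    [Configuration.ProjectivePlane P L] (n : ℕ)
    (horder : Configuration.ProjectivePlane.order P L = n)
    (Q : P) (B : Set P) (hQB : Q ∉ B)
    (hB : ∀ l : L, Q ∉ l → ∃ b ∈ B, b ∈ l) :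
    n ≤ B.ncard ∧ (B.ncard = n → ∃ l : L, Q ∈ l ∧ B = {p : P | p ∈ l} \ {Q}) := by
  have hn := ProjectivePlane.one_lt_order P L
  have hline : ∀ l : L, Q ∈ l → ({p : P | p ∈ l} \ {Q}).ncard = n := by
    intro l hl
    have h := ProjectivePlane.pointCount_eq P l
    have h2 : {p : P | p ∈ l}.ncard = pointCount P l := rfl
    rw [Set.ncard_sdiff_singleton_of_mem (show Q ∈ {p : P | p ∈ l} from hl)]
    omega
  constructor
  · by_cases h : ∃ p, p ≠ Q ∧ p ∉ B
    · obtain ⟨p, hpQ, hpB⟩ := h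
      have hm := HasLines.mkLine_ax (L := L) hpQ
      have := key_aux P L Q B hB p hpQ hpB _ hm.1 hm.2
      rw [horder] at this
      exact this.trans (Set.ncard_le_ncard Set.sdiff_subset (Set.toFinite _))
    · push Not at h
      have h2 := ProjectivePlane.lineCount_eq (L := L) Q
      have h3 : {l : L | Q ∈ l}.ncard = lineCount L Q := rfl
      obtain ⟨l, hl⟩ := Set.nonempty_of_ncard_ne_zero (s := {l : L | Q ∈ l}) (by omega)
      rw [← hline l hl]
      exact Set.ncard_le_ncard (fun x hx => h x hx.2) (Set.toFinite _)
  · intro hc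
    obtain ⟨b, hb⟩ := Set.nonempty_of_ncard_ne_zero (s := B) (by omega)
    have hbQ : b ≠ Q := fun h => hQB (h ▸ hb)
    obtain ⟨hbm, hQm⟩ := HasLines.mkLine_ax (L := L) hbQ
    refine ⟨_, hQm, ?_⟩
    symm
    refine Set.eq_of_subset_of_ncard_le ?_ (by rw [hline _ hQm, hc]) (Set.toFinite _)
    rintro x ⟨hx, hxQ⟩
    by_contra hxB
    have h1 := key_aux P L Q B hB x hxQ hxB _ hx hQm
    have h2 := Set.ncard_lt_ncard (s := B \ {x | x ∈ (HasLines.mkLine hbQ : L)}) (t := B)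
      ⟨Set.sdiff_subset, fun h => (h hb).2 hbm⟩ (Set.toFinite _)
    omega
end

section
/- Let B be a blocking set in a projective plane of order q that does not contain the full point set of any line of the plane. Then |B| ≥ q + √q + 1 (as an inequality of real numbers). -/
open Configuration in
theorem aux_pair {P L : Type} [Membership P L] [Fintype P] [Fintype L] [DecidableEq P]
    [∀ (p : P) (l : L), Decidable (p ∈ l)] [ProjectivePlane P L] (p p' : P) :
    (∑ l : L, (if p ∈ l then (1:ℝ) else 0) * (if p' ∈ l then (1:ℝ) else 0))
      = 1 + (if p' = p then (ProjectivePlane.order P L : ℝ) else 0) := by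
  classical
  by_cases h : p' = p
  · subst h
    have h1 := ProjectivePlane.lineCount_eq (L := L) p'
    rw [lineCount, Nat.card_eq_fintype_card, Fintype.card_subtype] at h1
    simp only [ite_mul, one_mul, zero_mul, ← ite_and, and_self, Finset.sum_boole, h1, if_true]
    push_cast; ring
  · have h2 := HasLines.existsUnique_line P L p p' (Ne.symm h)
    obtain ⟨l, hl, hu⟩ := h2
    rw [Finset.sum_eq_single l]
    · simp [hl.1, hl.2, h]
    · intro m _ hm
      by_cases h1 : p ∈ m
      · by_cases h2 : p' ∈ m
        · exact absurd (hu m ⟨h1, h2⟩) hm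
        · simp [h2]
      · simp [h1]
    · simp

open Configuration in
/-- (Bruen) Let `B` be a blocking set in a projective plane of order `q` that does not contain
the full point set of any line of the plane. Then `|B| ≥ q + √q + 1` as real numbers. -/
theorem statement12 (P L : Type) [Membership P L] [Finite P] [Finite L]
    [Configuration.ProjectivePlane P L] (q : ℕ)
    (horder : Configuration.ProjectivePlane.order P L = q)
    (B : Set P) (hB : ∀ l : L, ∃ p ∈ B, p ∈ l)
    (hline : ∀ l : L, ¬ {p : P | p ∈ l} ⊆ B) :
    (q : ℝ) + Real.sqrt q + 1 ≤ (B.ncard : ℝ) := by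
  classical
  have := Fintype.ofFinite P
  have := Fintype.ofFinite L
  obtain ⟨S, rfl⟩ : ∃ S : Finset P, (S : Set P) = B := ⟨B.toFinset, by simp⟩
  rw [Set.ncard_coe_finset]
  have hq : 1 < q := horder ▸ ProjectivePlane.one_lt_order P L
  have hq' : (1:ℝ) < q := by exact_mod_cast hq
  have hcL : (Fintype.card L : ℝ) = (q:ℝ)^2 + q + 1 := by
    rw [ProjectivePlane.card_lines P L, horder]; push_cast; ring
  let k : L → ℝ := fun l => ∑ p ∈ S, if p ∈ l then (1:ℝ) else 0
  set b : ℝ := (S.card : ℝ) with hb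
  have hk1 : ∀ l, 1 ≤ k l := by
    intro l
    obtain ⟨p, hp, hpl⟩ := hB l
    have := Finset.single_le_sum (f := fun p => if p ∈ l then (1:ℝ) else 0)
      (fun i _ => by split_ifs <;> norm_num) (Finset.mem_coe.1 hp)
    simpa [k, hpl] using this
  have hpt : ∀ p : P, ∑ l : L, (if p ∈ l then (1:ℝ) else 0) * k l
      = b + if p ∈ S then (q:ℝ) else 0 := by
    intro p
    simp only [k, Finset.mul_sum]
    rw [Finset.sum_comm]
    simp only [aux_pair, horder, Finset.sum_add_distrib]
    simp [hb]
  have hdeg : ∀ p : P, ∑ l : L, (if p ∈ l then (1:ℝ) else 0) = q + 1 := by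
    intro p
    have := aux_pair (L := L) p p
    simp only [mul_ite, mul_one, mul_zero, ← ite_and, and_self, if_true, horder] at this
    rw [this]; ring
  have hkn : ∀ l, k l ≤ b - q := by
    intro l
    obtain ⟨p, hpl, hpS⟩ := Set.not_subset.1 (hline l)
    have hpl : p ∈ l := hpl
    have hpS : p ∉ S := by simpa using hpS
    have h1 := hpt p
    have h2 := hdeg p
    have h3 := Finset.single_le_sum (f := fun l => (if p ∈ l then (1:ℝ) else 0) * (k l - 1))
      (fun i _ => mul_nonneg (by split_ifs <;> norm_num) (by linarith [hk1 i]))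
      (Finset.mem_univ l)
    simp only [mul_sub, Finset.sum_sub_distrib, mul_one, h1, h2, hpl, hpS, if_true, if_false] at h3
    linarith
  have hs1 : ∑ l, k l = b * (q + 1) := by
    simp only [k]
    rw [Finset.sum_comm]
    simp [hdeg, hb]; ring
  have hs2 : ∑ l, k l * k l = b * (b + q) := by
    have : ∀ l, k l * k l = ∑ p ∈ S, (if p ∈ l then (1:ℝ) else 0) * k l := by
      intro l; rw [← Finset.sum_mul]
    simp only [this]
    rw [Finset.sum_comm, Finset.sum_congr rfl (fun p hp => by rw [hpt p, if_pos hp])]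
    simp [hb]; ring
  have hmain : 0 ≤ ∑ l, (k l - 1) * ((b - q) - k l) :=
    Finset.sum_nonneg fun l _ => mul_nonneg (by linarith [hk1 l]) (by linarith [hkn l])
  have hexp : ∑ l, (k l - 1) * ((b - q) - k l)
      = (b - q + 1) * (b * (q + 1)) - b * (b + q) - (b - q) * ((q:ℝ)^2 + q + 1) := by
    rw [← hs1, ← hs2, ← hcL, Finset.mul_sum, ← Finset.sum_sub_distrib]
    have : (b - q) * (Fintype.card L : ℝ) = ∑ l : L, (b - q) := by simp; ring
    rw [this, ← Finset.sum_sub_distrib]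
    exact Finset.sum_congr rfl fun l _ => by ring
  rw [hexp] at hmain
  have hfin : 0 ≤ (q:ℝ) * ((b - q - 1)^2 - q) := by linarith
  have h5 : (q:ℝ) ≤ (b - q - 1)^2 := by
    have := nonneg_of_mul_nonneg_right hfin (by linarith)
    linarith
  obtain ⟨p0⟩ : Nonempty L := by
    have : (0:ℝ) < Fintype.card L := by rw [hcL]; positivity
    exact Fintype.card_pos_iff.1 (by exact_mod_cast this)
  have h6 : 0 ≤ b - q - 1 := by linarith [hk1 p0, hkn p0]
  have := Real.sqrt_le_iff.2 ⟨h6, h5⟩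
  linarith
end

section
/- Let p be a prime and let B be a blocking set in PG(2, p) that does not contain the full point set of any line. Then 2|B| ≥ 3(p + 1). -/
open scoped LinearAlgebra.Projectivization
section Aux
open Polynomial

lemma mv_deg_aux {F : Type*} [Field F] {ι : Type*} (U : Finset ι) (l : ι → MvPolynomial (Fin 2) F)
    (hl : ∀ u ∈ U, (l u).totalDegree ≤ 1) : (∏ u ∈ U, l u).totalDegree ≤ U.card := by
  refine (MvPolynomial.totalDegree_finsetProd _ _).trans ?_
  calc _ ≤ ∑ u ∈ U, 1 := Finset.sum_le_sum hl
    _ = _ := by simp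

lemma lin_deg_aux {F : Type*} [Field F] (a b c : F) :
    (MvPolynomial.C c * MvPolynomial.X 0 + MvPolynomial.C a * MvPolynomial.X 1
      + MvPolynomial.C b : MvPolynomial (Fin 2) F).totalDegree ≤ 1 := by
  refine (MvPolynomial.totalDegree_add _ _).trans (max_le ?_ (by simp))
  refine (MvPolynomial.totalDegree_add _ _).trans (max_le ?_ ?_) <;>
  · refine (MvPolynomial.totalDegree_mul _ _).trans ?_
    simp [MvPolynomial.totalDegree_X]

lemma coeff_aux {F : Type*} [Field F] [DecidableEq F] (U : Finset (F × F)) :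
    ∀ m : Fin 2 →₀ ℕ, m 0 + m 1 = U.card →
    MvPolynomial.coeff m (∏ u ∈ U, (MvPolynomial.C 1 * MvPolynomial.X 0
      + MvPolynomial.C u.1 * MvPolynomial.X 1 + MvPolynomial.C u.2 : MvPolynomial (Fin 2) F))
      = (∏ u ∈ U, (X + C u.1 : F[X])).coeff (m 0) := by
  induction U using Finset.induction_on with
  | empty =>
    intro m hm
    have h0 : m 0 = 0 := by simp at hm; omega
    have h1 : m 1 = 0 := by simp at hm; omega
    have : m = 0 := by ext i; fin_cases i <;> simp [h0, h1]
    simp [this]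
  | insert u U hu ih =>
    intro m hm
    rw [Finset.card_insert_of_notMem hu] at hm
    rw [Finset.prod_insert hu, Finset.prod_insert hu]
    set Q := ∏ u ∈ U, (MvPolynomial.C 1 * MvPolynomial.X 0
      + MvPolynomial.C u.1 * MvPolynomial.X 1 + MvPolynomial.C u.2 : MvPolynomial (Fin 2) F) with hQ
    set q := ∏ u ∈ U, (X + C u.1 : F[X]) with hq
    have hQd : Q.totalDegree ≤ U.card := mv_deg_aux _ _ (fun u _ => lin_deg_aux _ _ _)
    have hqd : q.natDegree ≤ U.card := by
      refine (natDegree_prod_le _ _).trans ?_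
      simp
    have hz : MvPolynomial.coeff m Q = 0 := by
      apply MvPolynomial.coeff_eq_zero_of_totalDegree_lt
      have : ∑ i ∈ m.support, m i = m 0 + m 1 := by
        have := Finsupp.sum_fintype m (fun _ x => x) (by simp)
        simpa [Finsupp.sum] using this
      rw [this]; omega
    simp only [map_one, one_mul, add_mul, MvPolynomial.coeff_add, mul_assoc,
      MvPolynomial.coeff_C_mul, hz, mul_zero, add_zero, Polynomial.coeff_add, Polynomial.coeff_C_mul]
    rw [MvPolynomial.coeff_X_mul', MvPolynomial.coeff_X_mul']
    congr 1
    · rcases h : m 0 with _ | i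
      · simp [h]
      · rw [if_pos (by simp [h]), ih]
        · simp [h]
        · simp [h]; omega
    · congr 1
      rcases h : m 1 with _ | i
      · rw [if_neg (by simp [h]), Polynomial.coeff_eq_zero_of_natDegree_lt]
        omega
      · rw [if_pos (by simp [h]), ih]
        · simp
        · simp [h]; omega

lemma lacunary_aux (p : ℕ) [Fact p.Prime] (U : Finset (ZMod p × ZMod p))
    (h1 : ∀ x y : ZMod p, ∃ u ∈ U, y + u.1 * x + u.2 = 0) (i : ℕ) (hi : i < p)
    (hiU : U.card < p + i) :
    (∏ u ∈ U, (X + C u.1 : (ZMod p)[X])).coeff i = 0 := by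
  by_contra hne
  have hile : i ≤ U.card := by
    by_contra hlt
    apply hne
    apply Polynomial.coeff_eq_zero_of_natDegree_lt
    refine lt_of_le_of_lt ((natDegree_prod_le _ _).trans (by simp)) (not_le.mp hlt)
  let m : Fin 2 →₀ ℕ := Finsupp.equivFunOnFinite.symm ![i, U.card - i]
  have hm0 : m 0 = i := rfl
  have hm1 : m 1 = U.card - i := rfl
  have hc := coeff_aux U m (by rw [hm0, hm1]; omega)
  rw [hm0] at hc
  have hd := mv_deg_aux U (fun u => (MvPolynomial.C 1 * MvPolynomial.X 0
      + MvPolynomial.C u.1 * MvPolynomial.X 1 + MvPolynomial.C u.2 : MvPolynomial (Fin 2) (ZMod p)))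
      (fun u _ => lin_deg_aux _ _ _)
  have hmdeg : m.degree = U.card := by
    rw [Finsupp.degree_eq_sum]; simp [hm0, hm1]; omega
  rw [← hc] at hne
  have hle := MvPolynomial.le_totalDegree (MvPolynomial.mem_support_iff.mpr hne)
  have hsm : (m.sum fun _ e => e) = m.degree := rfl
  obtain ⟨s, -, hs⟩ := MvPolynomial.combinatorial_nullstellensatz_exists_eval_nonzero _ m hne
    (by rw [hmdeg]; rw [hsm, hmdeg] at hle; exact le_antisymm hd hle)
    (fun _ => (Finset.univ : Finset (ZMod p))) (by
      intro j
      fin_cases j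
      · simp [hm0, hi]
      · simp [hm1]; omega)
  obtain ⟨u, hu, h⟩ := h1 (s 1) (s 0)
  apply hs
  rw [map_prod]
  exact Finset.prod_eq_zero hu (by simpa using h)

lemma jamison_aux (p : ℕ) [Fact p.Prime] (U : Finset (ZMod p × ZMod p))
    (h1 : ∀ x y : ZMod p, ∃ u ∈ U, y + u.1 * x + u.2 = 0)
    (h2 : ∀ c : ZMod p, ∃ u ∈ U, u.1 = c) : 2 * (p - 1) + 1 ≤ U.card := by
  classical
  obtain ⟨u0, hu0, -⟩ := h2 0
  by_contra hlt
  have hp := (Fact.out : p.Prime).pos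
  set f : MvPolynomial (Fin 2) (ZMod p) := ∏ u ∈ U.erase u0, (MvPolynomial.C (u.1 - u0.1) * MvPolynomial.X 0
      + MvPolynomial.C (u.2 - u0.2) * MvPolynomial.X 1 + MvPolynomial.C 1) with hf
  have hd : f.totalDegree ≤ _ := mv_deg_aux _ _ (fun u _ => lin_deg_aux _ _ _)
  rw [Finset.card_erase_of_mem hu0] at hd
  have hU : 0 < U.card := Finset.card_pos.mpr ⟨_, hu0⟩
  have := MvPolynomial.sum_eval_eq_zero f (by simp [ZMod.card]; omega)
  rw [Finset.sum_eq_single (0 : Fin 2 → ZMod p)] at this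
  · simp [hf, map_prod] at this
  · intro s _ hs
    rw [hf, map_prod]
    have key : ∃ u ∈ U, (u.1 - u0.1) * s 0 + (u.2 - u0.2) * s 1 + 1 = 0 := by
      by_cases hy : s 1 = 0
      · have hx : s 0 ≠ 0 := by
          intro hx; apply hs; ext i; fin_cases i <;> simp [hx, hy]
        obtain ⟨u, hu, h⟩ := h2 (u0.1 - (s 0)⁻¹)
        refine ⟨u, hu, ?_⟩
        rw [h, hy]; field_simp; ring
      · obtain ⟨u, hu, h⟩ := h1 (s 0 / s 1) ((1 - u0.1 * s 0 - u0.2 * s 1) / s 1)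
        refine ⟨u, hu, ?_⟩
        field_simp at h
        linear_combination h
    obtain ⟨u, hu, h⟩ := key
    refine Finset.prod_eq_zero (i := u) (Finset.mem_erase.mpr ⟨?_, hu⟩) (by simpa using h)
    rintro rfl
    simp at h
  · simp

lemma fiber_aux (p : ℕ) [Fact p.Prime] (U : Finset (ZMod p × ZMod p))
    (h2 : ∀ c : ZMod p, ∃ b, (c, b) ∉ U) (c : ZMod p) :
    (U.filter (fun u => u.1 = c)).card < p := by
  obtain ⟨b0, hb0⟩ := h2 c
  have hp := (Fact.out : p.Prime).pos
  have hsub : U.filter (fun u => u.1 = c) ⊆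
      ((Finset.univ : Finset (ZMod p)).erase b0).image (fun b => (c, b)) := by
    rintro ⟨a, b⟩ hu
    simp only [Finset.mem_filter] at hu
    obtain ⟨hu, rfl⟩ := hu
    simp only [Finset.mem_image, Finset.mem_erase, Finset.mem_univ, and_true]
    refine ⟨b, ?_, rfl⟩
    rintro rfl
    exact hb0 hu
  have := (Finset.card_le_card hsub).trans Finset.card_image_le
  rw [Finset.card_erase_of_mem (Finset.mem_univ _), Finset.card_univ, ZMod.card] at this
  omega

lemma mult_aux (p : ℕ) [Fact p.Prime] (U : Finset (ZMod p × ZMod p)) (c : ZMod p)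
    (h : (X + C c : (ZMod p)[X]) ^ p ∣ ∏ u ∈ U, (X + C u.1 : (ZMod p)[X])) :
    p ≤ (U.filter (fun u => u.1 = c)).card := by
  have e : ∏ u ∈ U, (X + C u.1 : (ZMod p)[X])
      = ((U.val.map (fun u => -u.1)).map (fun a => X - C a)).prod := by
    rw [Multiset.map_map]; simp [Function.comp_def]
  have hne : ∏ u ∈ U, (X + C u.1 : (ZMod p)[X]) ≠ 0 :=
    Finset.prod_ne_zero_iff.mpr (fun u _ => X_add_C_ne_zero _)
  have h' : (X - C (-c) : (ZMod p)[X]) ^ p ∣ ∏ u ∈ U, (X + C u.1 : (ZMod p)[X]) := by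
    simpa using h
  rw [← le_rootMultiplicity_iff hne, ← count_roots, e, roots_multiset_prod_X_sub_C,
    Multiset.count_map] at h'
  refine h'.trans (le_of_eq ?_)
  rw [Finset.card_def, Finset.filter_val]
  congr 1
  apply Multiset.filter_congr
  intro x _
  rw [neg_inj, eq_comm]

lemma wronskian_aux (p : ℕ) [Fact p.Prime] (f g : (ZMod p)[X]) (k : ℕ) (hk : k < p)
    (hf : f.Monic) (hfk : f.natDegree = k) (hg : g ≠ 0) (hgk : g.natDegree < k)
    (hw : wronskian f g = 0) : False := by
  rw [wronskian, sub_eq_zero] at hw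
  obtain ⟨k', rfl⟩ : ∃ k', k = k' + 1 := ⟨k - 1, by omega⟩
  have hf1 : f.coeff (k' + 1) = 1 := by rw [← hfk]; exact hf
  have hlg : g.coeff g.natDegree ≠ 0 := by simpa using hg
  have hdf : (derivative f).natDegree ≤ k' := by
    have := natDegree_derivative_le f; omega
  have e1 := coeff_mul_add_eq_of_natDegree_le hdf (le_refl g.natDegree)
  rw [coeff_derivative, hf1, one_mul] at e1
  rcases hj : g.natDegree with _ | j
  · have h0 : derivative g = 0 := derivative_of_natDegree_zero hj
    rw [h0, mul_zero] at hw
    rw [← hw, coeff_zero] at e1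
    have : ((k' + 1 : ℕ) : ZMod p) = 0 := by
      push_cast
      rcases mul_eq_zero.mp e1.symm with h | h
      · exact h
      · exact absurd h hlg
    rw [ZMod.natCast_eq_zero_iff] at this
    exact absurd (Nat.le_of_dvd (by omega) this) (by omega)
  · have hdg : (derivative g).natDegree ≤ j := by
      have := natDegree_derivative_le g; omega
    have e2 := coeff_mul_add_eq_of_natDegree_le (hfk.le) hdg
    rw [coeff_derivative, hf1, one_mul] at e2
    rw [hj] at e1 hlg
    rw [hw, show k' + 1 + j = k' + (j + 1) by ring, e1] at e2
    have : ((k' + 1 : ℕ) : ZMod p) = ((j + 1 : ℕ) : ZMod p) := by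
      push_cast
      apply mul_right_cancel₀ hlg
      rw [e2]; ring
    rw [ZMod.natCast_eq_natCast_iff, Nat.ModEq, Nat.mod_eq_of_lt (by omega),
      Nat.mod_eq_of_lt (by omega)] at this
    omega

lemma affine_thm (p : ℕ) [Fact p.Prime] (U : Finset (ZMod p × ZMod p))
    (h1 : ∀ x y : ZMod p, ∃ u ∈ U, y + u.1 * x + u.2 = 0)
    (h2 : ∀ c : ZMod p, ∃ b, (c, b) ∉ U) : 3 * (p + 1) ≤ 2 * (U.card + 1) := by
  by_contra hlt
  have hp2 := (Fact.out : p.Prime).two_le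
  have hn : p ≤ U.card := by
    have : (Finset.univ : Finset (ZMod p)) ⊆ U.image (fun u => u.2) := by
      intro y _
      obtain ⟨u, hu, h⟩ := h1 0 (-y)
      rw [Finset.mem_image]
      refine ⟨u, hu, ?_⟩
      linear_combination h
    have := (Finset.card_le_card this).trans Finset.card_image_le
    simpa [ZMod.card] using this
  obtain ⟨k, hk⟩ : ∃ k, U.card = p + k := ⟨U.card - p, by omega⟩
  have hkp : k < p := by omega
  set h : (ZMod p)[X] := ∏ u ∈ U, (X + C u.1 : (ZMod p)[X]) with hh
  have hmon : h.Monic := monic_prod_of_monic _ _ (fun u _ => monic_X_add_C _)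
  have hdeg : h.natDegree = p + k := by
    rw [hh, natDegree_prod_of_monic _ _ (fun u _ => monic_X_add_C _)]
    simp [hk]
  have hXm : (X ^ p : (ZMod p)[X]).Monic := monic_X_pow p
  set f := h /ₘ (X ^ p) with hf
  set g := h %ₘ (X ^ p) with hg
  have hfg : g + X ^ p * f = h := modByMonic_add_div h (X ^ p)
  have hgdeg : g.natDegree < p := by
    have := natDegree_modByMonic_lt h hXm (by
      intro h1
      have := congrArg natDegree h1
      simp at this; omega)
    simpa using this
  have hfdeg : f.natDegree = k := by
    rw [hf, natDegree_divByMonic _ hXm, hdeg]; simp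
  have hfm : f.Monic := by
    have := leadingCoeff_divByMonic_of_monic (p := h) hXm (by
      rw [degree_eq_natDegree hXm.ne_zero, degree_eq_natDegree hmon.ne_zero, hdeg, natDegree_X_pow]
      exact_mod_cast Nat.le_add_right p k)
    rw [Monic, hf, this]; exact hmon
  have hgk : g.natDegree ≤ k := by
    rw [natDegree_le_iff_coeff_eq_zero]
    intro i hi
    by_cases hip : i < p
    · have := lacunary_aux p U h1 i hip (by omega)
      rw [← hh, ← hfg, coeff_add, coeff_X_pow_mul', if_neg (by omega), add_zero] at this
      exact this
    · exact coeff_eq_zero_of_natDegree_lt (by omega)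
  -- case: X f + g = 0
  have hne1 : X * f + g ≠ 0 := by
    intro h0
    have h3 : ∀ c : ZMod p, ∃ u ∈ U, u.1 = c := by
      intro c
      have : h.eval (-c) = 0 := by
        rw [← hfg]
        have h0' := congrArg (eval (-c)) h0
        simp only [eval_add, eval_mul, eval_X, eval_zero, eval_pow] at h0' ⊢
        rw [ZMod.pow_card]
        linear_combination h0'
      rw [hh, eval_prod, Finset.prod_eq_zero_iff] at this
      obtain ⟨u, hu, h⟩ := this
      refine ⟨u, hu, ?_⟩
      simp at h
      linear_combination h
    have hj := jamison_aux p U h1 h3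
    have hp : p = 2 := by omega
    have hU : U.card = 3 := by omega
    obtain ⟨c, -, hc⟩ := Finset.exists_lt_card_fiber_of_mul_lt_card_of_maps_to
      (s := U) (t := (Finset.univ : Finset (ZMod p))) (f := fun u => u.1) (n := 1)
      (fun _ _ => Finset.mem_univ _) (by simp [ZMod.card]; omega)
    have := fiber_aux p U h2 c
    omega
  set c := g.coeff k with hc
  set g1 := g - C c * f with hg1
  have hw : wronskian f g1 = wronskian f g := by
    simp only [wronskian, hg1, derivative_sub, derivative_mul, derivative_C]
    ring
  by_cases hg0 : g1 = 0
  · -- h = f * (X + c)^p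
    have hgc : g = C c * f := sub_eq_zero.mp hg0
    have hdvd : (X + C c : (ZMod p)[X]) ^ p ∣ h := by
      refine ⟨f, ?_⟩
      rw [add_pow_char, ← C_pow, ZMod.pow_card, ← hfg, hgc]
      ring
    have := mult_aux p U c hdvd
    have := fiber_aux p U h2 c
    omega
  have hfk : f.coeff k = 1 := by rw [← hfdeg]; exact hfm
  have hg1k : g1.natDegree < k := by
    have hle : g1.natDegree ≤ k := by
      refine (natDegree_sub_le _ _).trans (max_le hgk ?_)
      exact (natDegree_C_mul_le _ _).trans hfdeg.le
    refine lt_of_le_of_ne hle ?_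
    intro he
    apply hg0
    rw [← leadingCoeff_eq_zero, leadingCoeff, he, hg1]
    simp [hfk, hc]
  have hW : wronskian f g1 ≠ 0 := fun h0 => wronskian_aux p f g1 k hkp hfm hfdeg hg0 hg1k h0
  have hWd := natDegree_wronskian_lt_add hW
  -- divisibility
  have hd1 : h ∣ (X * f + g) * derivative h := by
    conv_rhs => rw [hh, derivative_prod_finset, Finset.mul_sum]
    refine Finset.dvd_sum ?_
    intro u hu
    have hu0 : X + C u.1 ∣ X * f + g := by
      have : h.eval (-u.1) = 0 := by
        rw [hh, eval_prod]
        exact Finset.prod_eq_zero hu (by simp)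
      rw [← hfg] at this
      simp only [eval_add, eval_mul, eval_X, eval_pow, ZMod.pow_card] at this
      have e : X + C u.1 = X - C (-u.1) := by simp
      rw [e, dvd_iff_isRoot, IsRoot.def]
      simp only [eval_add, eval_mul, eval_X]
      linear_combination this
    rw [hh, ← Finset.mul_prod_erase U _ hu]
    exact mul_dvd_mul hu0 (Dvd.intro _ rfl)
  have hWh : wronskian f g1 = f * derivative h - derivative f * h := by
    rw [hw, wronskian, ← hfg]
    simp only [derivative_add, derivative_mul, derivative_X_pow, CharP.cast_eq_zero, C_0]
    ring
  have hd2 : h ∣ (X * f + g) * wronskian f g1 := by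
    rw [hWh, mul_sub]
    refine dvd_sub ?_ ?_
    · rw [mul_left_comm]; exact hd1.mul_left _
    · rw [← mul_assoc]; exact Dvd.intro_left _ rfl
  have hfin := natDegree_le_of_dvd hd2 (mul_ne_zero hne1 hW)
  rw [natDegree_mul hne1 hW, hdeg] at hfin
  have hXfg : (X * f + g).natDegree ≤ k + 1 := by
    refine (natDegree_add_le _ _).trans (max_le ?_ (by omega))
    refine natDegree_mul_le.trans ?_
    rw [natDegree_X]; omega
  omega

end Aux

theorem statement13 (p : ℕ) [Fact p.Prime]
    (B : Set (ℙ (ZMod p) (Fin 3 → ZMod p)))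
    (hblock : ∀ W : Submodule (ZMod p) (Fin 3 → ZMod p), Module.finrank (ZMod p) W = 2 →
      ∃ x ∈ B, x.submodule ≤ W)
    (hline : ∀ W : Submodule (ZMod p) (Fin 3 → ZMod p), Module.finrank (ZMod p) W = 2 →
      ¬ {x : ℙ (ZMod p) (Fin 3 → ZMod p) | x.submodule ≤ W} ⊆ B) :
    3 * (p + 1) ≤ 2 * B.ncard := by
  classical
  have hfin : Finite (ℙ (ZMod p) (Fin 3 → ZMod p)) := Quotient.finite _
  have hmemmk : ∀ (v : Fin 3 → ZMod p) (hv : v ≠ 0) (W : Submodule (ZMod p) (Fin 3 → ZMod p)),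
      (Projectivization.mk (ZMod p) v hv).submodule ≤ W ↔ v ∈ W := by
    intro v hv W
    rw [Projectivization.submodule_mk, Submodule.span_singleton_le_iff_mem]
  have hmemrep : ∀ (x : ℙ (ZMod p) (Fin 3 → ZMod p)) (W : Submodule (ZMod p) (Fin 3 → ZMod p)),
      x.submodule ≤ W ↔ x.rep ∈ W := by
    intro x W
    rw [Projectivization.submodule_eq, Submodule.span_singleton_le_iff_mem]
  -- linear forms in a basis
  have hker : ∀ φ : (Fin 3 → ZMod p) →ₗ[ZMod p] ZMod p, φ ≠ 0 →
      Module.finrank (ZMod p) (LinearMap.ker φ) = 2 := by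
    intro φ hφ
    have := Module.Dual.finrank_ker_add_one_of_ne_zero (f := φ) hφ
    simp at this
    exact this
  -- minimal blocking subset
  obtain ⟨B', hB'⟩ := Set.Finite.exists_minimal
    (s := {A : Set (ℙ (ZMod p) (Fin 3 → ZMod p)) | A ⊆ B ∧ ∀ W : Submodule (ZMod p) (Fin 3 → ZMod p),
      Module.finrank (ZMod p) W = 2 → ∃ x ∈ A, x.submodule ≤ W}) (Set.toFinite _) ⟨B, subset_rfl, hblock⟩
  obtain ⟨hBB, hbl⟩ := hB'.prop
  obtain ⟨P, hP⟩ : B'.Nonempty := by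
    obtain ⟨x, hx, -⟩ := hbl (LinearMap.ker (LinearMap.proj 0)) (hker _ (by
      intro h
      have := congrArg (fun φ => φ (fun _ => 1)) h
      simp at this))
    exact ⟨x, hx⟩
  -- tangent line
  obtain ⟨W0, hW0, htan⟩ : ∃ W : Submodule (ZMod p) (Fin 3 → ZMod p),
      Module.finrank (ZMod p) W = 2 ∧ ∀ x ∈ B', x.submodule ≤ W → x = P := by
    by_contra hcon
    push Not at hcon
    have hm := hB'.le_of_le (y := B' \ {P}) ⟨Set.sdiff_subset.trans hBB, fun W hW => by
      obtain ⟨x, hx, hxW, hne⟩ := hcon W hW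
      exact ⟨x, ⟨hx, hne⟩, hxW⟩⟩ Set.sdiff_subset
    exact (hm hP).2 rfl
  have hPW : P.rep ∈ W0 := by
    obtain ⟨x, hx, hxW⟩ := hbl W0 hW0
    rw [htan x hx hxW] at hxW
    exact (hmemrep _ _).mp hxW
  set v0 := P.rep with hv0
  have hv0ne : v0 ≠ 0 := P.rep_nonzero
  obtain ⟨v1, hv1W, hv1⟩ : ∃ v1 ∈ W0, v1 ∉ Submodule.span (ZMod p) {v0} := by
    by_contra hcon
    push Not at hcon
    have := Submodule.finrank_mono (show W0 ≤ Submodule.span (ZMod p) {v0} from hcon)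
    rw [hW0, finrank_span_singleton hv0ne] at this
    omega
  obtain ⟨v2, hv2⟩ : ∃ v2, v2 ∉ W0 := by
    by_contra hcon
    push Not at hcon
    have : W0 = ⊤ := by ext x; simp [hcon x]
    rw [this] at hW0
    simp at hW0
  have hli : LinearIndependent (ZMod p) ![v0, v1, v2] := by
    rw [Fintype.linearIndependent_iff]
    intro c hc
    simp only [Fin.sum_univ_three, Matrix.cons_val] at hc
    have c2 : c 2 = 0 := by
      by_contra h
      apply hv2
      have : v2 = -(c 2)⁻¹ • (c 0 • v0 + c 1 • v1) := by
        rw [eq_neg_of_add_eq_zero_left hc]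
        simp [smul_smul, h]
      rw [this]
      exact W0.smul_mem _ (W0.add_mem (W0.smul_mem _ hPW) (W0.smul_mem _ hv1W))
    rw [c2, zero_smul, add_zero] at hc
    have c1 : c 1 = 0 := by
      by_contra h
      apply hv1
      rw [Submodule.mem_span_singleton]
      refine ⟨-(c 1)⁻¹ * c 0, ?_⟩
      rw [mul_smul, eq_neg_of_add_eq_zero_left hc]
      simp [smul_smul, h]
    rw [c1, zero_smul, add_zero] at hc
    have c0 : c 0 = 0 := (smul_eq_zero.mp hc).resolve_right hv0ne
    intro i
    fin_cases i <;> assumption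
  let b := basisOfLinearIndependentOfCardEqFinrank hli (by simp)
  have hb0 : b 0 = v0 := by simp [b]
  have hb1 : b 1 = v1 := by simp [b]
  have hb2 : b 2 = v2 := by simp [b]
  have hrepr : ∀ v, v = b.repr v 0 • v0 + b.repr v 1 • v1 + b.repr v 2 • v2 := by
    intro v
    conv_lhs => rw [← b.sum_repr v]
    rw [Fin.sum_univ_three, hb0, hb1, hb2]
  -- affine points
  let w : ZMod p × ZMod p → (Fin 3 → ZMod p) := fun u => u.2 • v0 + u.1 • v1 + v2
  have hwW : ∀ u, w u ∉ W0 := by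
    intro u h
    apply hv2
    have := W0.sub_mem h (W0.add_mem (W0.smul_mem u.2 hPW) (W0.smul_mem u.1 hv1W))
    simpa [w] using this
  have hw0 : ∀ u, w u ≠ 0 := fun u h => hwW u (h ▸ W0.zero_mem)
  have hwr0 : ∀ u, b.repr (w u) 0 = u.2 := by
    intro u; simp [w, ← hb0, ← hb1, ← hb2]
  have hwr1 : ∀ u, b.repr (w u) 1 = u.1 := by
    intro u; simp [w, ← hb0, ← hb1, ← hb2]
  have hwr2 : ∀ u, b.repr (w u) 2 = 1 := by
    intro u; simp [w, ← hb0, ← hb1, ← hb2]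
  let pt : ZMod p × ZMod p → ℙ (ZMod p) (Fin 3 → ZMod p) :=
    fun u => Projectivization.mk (ZMod p) (w u) (hw0 u)
  have hptinj : Function.Injective pt := by
    intro u u' h
    obtain ⟨t, ht⟩ := (Projectivization.mk_eq_mk_iff' _ _ _ _ _).mp h
    have e2 := congrArg (fun v => b.repr v 2) ht
    have e1 := congrArg (fun v => b.repr v 1) ht
    have e0 := congrArg (fun v => b.repr v 0) ht
    simp only [map_smul, Finsupp.smul_apply, smul_eq_mul, hwr0, hwr1, hwr2, mul_one] at e0 e1 e2
    rw [e2, one_mul] at e0 e1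
    exact Prod.ext e1.symm e0.symm
  have hptP : ∀ u, pt u ≠ P := by
    intro u h
    apply hwW u
    rw [← hmemmk (w u) (hw0 u) W0]
    change (pt u).submodule ≤ W0
    rw [h, hmemrep]
    exact hPW
  -- every point off P is affine
  have haff : ∀ x ∈ B', x ≠ P → ∃ u, pt u = x := by
    intro x hx hxP
    have hxW : x.rep ∉ W0 := fun h => hxP (htan x hx ((hmemrep _ _).mpr h))
    have h2 : b.repr x.rep 2 ≠ 0 := by
      intro h
      apply hxW
      rw [hrepr x.rep, h, zero_smul, add_zero]
      exact W0.add_mem (W0.smul_mem _ hPW) (W0.smul_mem _ hv1W)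
    refine ⟨(b.repr x.rep 1 / b.repr x.rep 2, b.repr x.rep 0 / b.repr x.rep 2), ?_⟩
    conv_rhs => rw [← x.mk_rep]
    rw [Projectivization.mk_eq_mk_iff']
    refine ⟨(b.repr x.rep 2)⁻¹, ?_⟩
    conv_lhs => arg 2; rw [hrepr x.rep]
    simp only [w, smul_add, smul_smul, inv_mul_cancel₀ h2, one_smul, div_eq_inv_mul]
  let U : Finset (ZMod p × ZMod p) := Finset.univ.filter (fun u => pt u ∈ B')
  have hUcard : U.card + 1 ≤ B'.ncard := by
    have hsub : insert P (pt '' (U : Set (ZMod p × ZMod p))) ⊆ B' := by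
      rintro x (rfl | ⟨u, hu, rfl⟩)
      · exact hP
      · simpa [U] using hu
    have := Set.ncard_le_ncard hsub (Set.toFinite _)
    rw [Set.ncard_insert_of_notMem (by rintro ⟨u, -, h⟩; exact hptP u h) (Set.toFinite _),
      Set.ncard_image_of_injective _ hptinj, Set.ncard_coe_finset] at this
    exact this
  have hBle : B'.ncard ≤ B.ncard := Set.ncard_le_ncard hBB (Set.toFinite _)
  have hmain := affine_thm p U ?_ ?_
  · omega
  · intro x y
    let φ : (Fin 3 → ZMod p) →ₗ[ZMod p] ZMod p := b.coord 0 + x • b.coord 1 + y • b.coord 2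
    have hφ : ∀ v, φ v = b.repr v 0 + x * b.repr v 1 + y * b.repr v 2 := by
      intro v; simp [φ]
    have hφ0 : φ v0 = 1 := by rw [hφ, ← hb0]; simp
    obtain ⟨z, hz, hzW⟩ := hbl (LinearMap.ker φ) (hker φ (by
      intro h; rw [h] at hφ0; simp at hφ0))
    have hzP : z ≠ P := by
      rintro rfl
      rw [hmemrep, LinearMap.mem_ker, ← hv0, hφ0] at hzW
      exact one_ne_zero hzW
    obtain ⟨u, rfl⟩ := haff z hz hzP
    refine ⟨u, by simpa [U] using hz, ?_⟩
    have := (hmemmk _ _ _).mp hzW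
    rw [LinearMap.mem_ker, hφ, hwr0, hwr1, hwr2] at this
    linear_combination this
  · intro c
    by_contra hcon
    push Not at hcon
    let φ : (Fin 3 → ZMod p) →ₗ[ZMod p] ZMod p := b.coord 1 - c • b.coord 2
    have hφ : ∀ v, φ v = b.repr v 1 - c * b.repr v 2 := by
      intro v; simp [φ]
    have hφ1 : φ v1 = 1 := by rw [hφ, ← hb1]; simp
    apply hline (LinearMap.ker φ) (hker φ (by
      intro h; rw [h] at hφ1; simp at hφ1))
    intro x hx
    have hx' : φ x.rep = 0 := by
      rw [Set.mem_ofPred_eq, hmemrep, LinearMap.mem_ker] at hx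
      exact hx
    rw [hφ] at hx'
    by_cases h2 : b.repr x.rep 2 = 0
    · have h1 : b.repr x.rep 1 = 0 := by rw [h2] at hx'; simpa using hx'
      have hr := hrepr x.rep
      rw [h1, h2, zero_smul, zero_smul, add_zero, add_zero] at hr
      have : x = P := by
        rw [← x.mk_rep, ← P.mk_rep, Projectivization.mk_eq_mk_iff']
        exact ⟨_, hr.symm⟩
      rw [this]
      exact hBB hP
    · have : pt (c, b.repr x.rep 0 / b.repr x.rep 2) = x := by
        conv_rhs => rw [← x.mk_rep]
        rw [Projectivization.mk_eq_mk_iff']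
        refine ⟨(b.repr x.rep 2)⁻¹, ?_⟩
        conv_lhs => arg 2; rw [hrepr x.rep]
        have h1 : (b.repr x.rep 2)⁻¹ * b.repr x.rep 1 = c := by
          rw [sub_eq_zero.mp hx']; field_simp
        simp only [w, smul_add, smul_smul, inv_mul_cancel₀ h2, one_smul, div_eq_inv_mul, h1]
      have hm := hcon (b.repr x.rep 0 / b.repr x.rep 2)
      rw [← this]
      apply hBB
      simpa [U] using hm
end

section
/- Let p be a prime and let B be a blocking set in PG(2, p^3) that does not contain the full point set of any line. Then |B| ≥ p^3 + p^2 + 1. -/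
open scoped LinearAlgebra.Projectivization

section Aux
open Polynomial

lemma step_deg {F : Type*} [Field F] [DecidableEq F] (p : ℕ) [CharP F p] (Q : ℕ) (hpQ : p ∣ Q)
    (g h T : F[X]) (hs : (X ^ Q * g + h).Splits) (hf : X ^ Q * g + h ≠ 0) (hT : T ≠ 0)
    (hroot : ∀ a, (X ^ Q * g + h).eval a = 0 → T.eval a = 0)
    (hW : wronskian g h ≠ 0) :
    (X ^ Q * g + h).natDegree ≤ T.natDegree + (wronskian g h).natDegree := by
  set f := X ^ Q * g + h with hfdef
  have hder : derivative f = X ^ Q * derivative g + derivative h := by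
    have : (Q : F[X]) = 0 := by
      have := (CharP.cast_eq_zero_iff F[X] p Q).2 hpQ
      exact this
    simp [hfdef, derivative_mul, derivative_X_pow, this]
  have hWf : wronskian g h = g * derivative f - derivative g * f := by
    rw [hder, wronskian, hfdef]; ring
  rw [← natDegree_mul hT hW]
  apply natDegree_le_of_dvd _ (mul_ne_zero hT hW)
  apply hs.dvd_of_roots_le_roots hf
  rw [Multiset.le_iff_count]
  intro a
  rw [count_roots, count_roots, le_rootMultiplicity_iff (mul_ne_zero hT hW)]
  obtain ⟨r, hr⟩ := pow_rootMultiplicity_dvd f a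
  generalize rootMultiplicity a f = μ at *
  rcases μ with _ | m
  · simp
  · rw [pow_succ']
    apply mul_dvd_mul
    · rw [dvd_iff_isRoot]
      apply hroot
      rw [hr]; simp
    · rw [hWf]
      have h1 : (X - C a) ^ m ∣ f := ⟨(X - C a) * r, by rw [hr]; ring⟩
      have h2 : (X - C a) ^ m ∣ derivative f := by
        rw [hr, derivative_mul, derivative_X_sub_C_pow]
        refine dvd_add ?_ ?_
        · simp only [Nat.add_sub_cancel]
          exact Dvd.intro_left (C ((m+1 : ℕ):F)) rfl |>.mul_right _
        · exact (pow_dvd_pow _ (Nat.le_succ m)).mul_right _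
      exact dvd_sub (h2.mul_left _) (h1.mul_left _)

lemma pth_root {F : Type*} [Field F] [Finite F] (p : ℕ) [Fact p.Prime] [CharP F p]
    (g : F[X]) (hg : derivative g = 0) : ∃ g1 : F[X], g = g1 ^ p := by
  refine ⟨(contract p g).map (frobeniusEquiv F p).symm.toRingHom, ?_⟩
  rw [← map_frobenius_expand, ← map_expand, expand_contract p hg (Fact.out : p.Prime).ne_zero, map_map]
  have : (frobenius F p).comp (frobeniusEquiv F p).symm.toRingHom = RingHom.id F := by
    ext x; simp
  rw [this, map_id]

lemma natDegree_lac {F : Type*} [Field F] (Q : ℕ) (hQ : 0 < Q) (g h : F[X]) (hg : g ≠ 0)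
    (hh : h.natDegree ≤ g.natDegree) : (X ^ Q * g + h).natDegree = Q + g.natDegree := by
  have : (X ^ Q * g).natDegree = Q + g.natDegree := by
    rw [natDegree_mul (by simp) hg]; simp
  rw [natDegree_add_eq_left_of_natDegree_lt, this]
  omega

lemma lac_core {F : Type*} [Field F] [Fintype F] (p : ℕ) [Fact p.Prime] [CharP F p]
    (hF : Fintype.card F = p ^ 3) (f g h : F[X]) (hs : f.Splits) (hfe : f = X ^ (p^3) * g + h)
    (hg : g ≠ 0) (hh : h.natDegree ≤ g.natDegree) (hna : ∃ a, f.eval a ≠ 0)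
    (hm : ∀ a, ¬ (X - C a) ^ (p^3) ∣ f) : p ^ 2 ≤ g.natDegree := by
  classical
  have hp : p.Prime := Fact.out
  have hp2 := hp.two_le
  have hf0 : f ≠ 0 := by rintro rfl; simp at hna
  obtain ⟨d, g0, h0, hcop, hg0, hh0⟩ : ∃ d g0 h0 : F[X], IsCoprime g0 h0 ∧ g = d * g0 ∧ h = d * h0 := by
    have := isCoprime_div_gcd_div_gcd (p := h) (q := g) hg
    refine ⟨gcd h g, _, _, this.symm, ?_, ?_⟩
    · exact (EuclideanDomain.mul_div_cancel' (by simp [hg]) (GCDMonoid.gcd_dvd_right _ _)).symm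
    · exact (EuclideanDomain.mul_div_cancel' (by simp [hg]) (GCDMonoid.gcd_dvd_left _ _)).symm
  have hd0 : d ≠ 0 := by rintro rfl; simp at hg0; exact hg hg0
  have hg00 : g0 ≠ 0 := by rintro rfl; simp at hg0; exact hg hg0
  have hdg : g.natDegree = d.natDegree + g0.natDegree := by rw [hg0, natDegree_mul hd0 hg00]
  have hdh : h0.natDegree ≤ g0.natDegree := by
    by_cases h00 : h0 = 0
    · simp [h00]
    · rw [hh0, hdg, natDegree_mul hd0 h00] at hh
      omega
  suffices p ^ 2 ≤ g0.natDegree by omega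
  have hff : f = d * (X ^ (p^3) * g0 + h0) := by rw [hfe, hg0, hh0]; ring
  obtain ⟨f0, hf0e⟩ : ∃ f0, f0 = X ^ (p^3) * g0 + h0 := ⟨_, rfl⟩
  rw [← hf0e] at hff
  have hdvd : f0 ∣ f := ⟨d, by rw [hff]; ring⟩
  have hs0 : f0.Splits := hs.of_dvd hf0 hdvd
  have hf00 : f0 ≠ 0 := by rintro rfl; simp at hff; exact hf0 hff
  have hpc : ∀ a : F, a ^ (p ^ 3) = a := fun a => by rw [← hF]; exact FiniteField.pow_card a
  -- degree zero case
  have hk : 1 ≤ g0.natDegree := by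
    by_contra hlt
    have e1 : g0 = C (g0.coeff 0) := eq_C_of_natDegree_eq_zero (by omega)
    have e2 : h0 = C (h0.coeff 0) := eq_C_of_natDegree_eq_zero (by omega)
    have hc : g0.coeff 0 ≠ 0 := by intro h; rw [h] at e1; simp at e1; exact hg00 e1
    generalize g0.coeff 0 = c at *
    generalize h0.coeff 0 = b at *
    apply hm (-(b / c))
    refine dvd_trans ⟨C c, ?_⟩ hdvd
    rw [hf0e, e1, e2, C_neg, sub_neg_eq_add, add_pow_char_pow, ← C_pow, hpc, add_mul, ← C_mul,
      div_mul_cancel₀ _ hc]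
  obtain ⟨T, hTe⟩ : ∃ T : F[X], T = X * g0 + h0 := ⟨_, rfl⟩
  have hTe' : ∀ a, T.eval a = f0.eval a := by
    intro a; rw [hTe, hf0e]; simp [hpc]
  have hT : T ≠ 0 := by
    rintro rfl
    obtain ⟨a, ha⟩ := hna
    apply ha
    rw [hff, eval_mul, ← hTe']; simp
  have hTd : T.natDegree = 1 + g0.natDegree := by
    have := natDegree_lac 1 one_pos g0 h0 hg00 hdh
    rwa [pow_one, ← hTe] at this
  by_cases hW : wronskian g0 h0 = 0
  swap
  · have h1 := step_deg p (p^3) (dvd_pow_self p (by norm_num)) g0 h0 T (hf0e ▸ hs0) (hf0e ▸ hf00) hT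
      (fun a ha => by rw [hTe', hf0e]; exact ha) hW
    rw [natDegree_lac _ (by positivity) _ _ hg00 hdh, hTd] at h1
    have h2 := natDegree_wronskian_lt_add hW
    nlinarith [Nat.pow_le_pow_left hp2 2, pow_succ p 2]
  obtain ⟨dg, dh⟩ := hcop.wronskian_eq_zero_iff.mp hW
  obtain ⟨g1, rfl⟩ := pth_root p g0 dg
  obtain ⟨h1, rfl⟩ := pth_root p h0 dh
  have hg1 : g1 ≠ 0 := by rintro rfl; simp [hp.ne_zero] at hg00
  rw [natDegree_pow] at *
  rw [natDegree_pow] at hdh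
  have hd1 : h1.natDegree ≤ g1.natDegree := Nat.le_of_mul_le_mul_left hdh hp.pos
  have hcop1 : IsCoprime g1 h1 := (IsCoprime.pow_iff hp.pos hp.pos).mp hcop
  have hf1 : f0 = (X ^ (p^2) * g1 + h1) ^ p := by
    rw [hf0e, add_pow_char, mul_pow, ← pow_mul]; rfl
  by_cases hW1 : wronskian g1 h1 = 0
  swap
  · have hs1 : (X ^ (p^2) * g1 + h1).Splits := hs0.of_dvd hf00 (hf1 ▸ dvd_pow_self _ hp.ne_zero)
    have h10 : (X ^ (p^2) * g1 + h1) ≠ 0 := by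
      intro h; rw [h] at hf1; simp [hp.ne_zero] at hf1; exact hf00 hf1
    have h3 := step_deg p (p^2) (dvd_pow_self p (by norm_num)) g1 h1 T hs1 h10 hT
      (fun a ha => by rw [hTe', hf1, eval_pow, ha]; simp [hp.ne_zero]) hW1
    rw [natDegree_lac _ (by positivity) _ _ hg1 hd1, hTd] at h3
    have h2 := natDegree_wronskian_lt_add hW1
    have : p ≤ g1.natDegree := by
      by_contra hlt
      have : g1.natDegree + 1 ≤ p := by omega
      nlinarith
    nlinarith
  obtain ⟨dg1, dh1⟩ := hcop1.wronskian_eq_zero_iff.mp hW1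
  obtain ⟨g2, rfl⟩ := pth_root p g1 dg1
  rw [natDegree_pow] at *
  have : 1 ≤ g2.natDegree := by
    by_contra hlt
    have : g2.natDegree = 0 := by omega
    simp [this] at hk
  nlinarith [Nat.mul_le_mul_left (p*p) this]

lemma biv_coeff {F ι : Type*} [Field F] [DecidableEq ι] (S : Finset ι) (α β : ι → F) :
    ∀ i j, (S.card < i + j → ((∏ x ∈ S, (X + C (C (α x) * X - C (β x)) : F[X][X])).coeff i).coeff j = 0) ∧
      (i + j = S.card → ((∏ x ∈ S, (X + C (C (α x) * X - C (β x)) : F[X][X])).coeff i).coeff j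
        = (∏ x ∈ S, (X + C (α x))).coeff i) := by
  induction S using Finset.induction_on with
  | empty =>
    intro i j
    constructor
    · intro h
      simp only [Finset.card_empty, Finset.prod_empty, coeff_one] at *
      split_ifs with hi
      · rw [coeff_one, if_neg (by omega)]
      · simp
    · intro h
      simp only [Finset.card_empty, Finset.prod_empty] at *
      obtain ⟨rfl, rfl⟩ : i = 0 ∧ j = 0 := by omega
      simp
  | insert x S hx ih =>
    intro i j
    have hfd : (∏ x ∈ S, (X + C (α x))).natDegree = S.card := by
      rw [natDegree_prod_of_monic _ _ fun x _ => monic_X_add_C _]; simp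
    rw [Finset.prod_insert hx, Finset.prod_insert hx, Finset.card_insert_of_notMem hx]
    generalize (∏ x ∈ S, (X + C (C (α x) * X - C (β x)) : F[X][X])) = R at *
    generalize (∏ x ∈ S, (X + C (α x))) = f at *
    have key : ∀ i j, ((R.coeff i) * (C (α x) * X - C (β x))).coeff j
        = (if j = 0 then 0 else α x * (R.coeff i).coeff (j-1)) - β x * (R.coeff i).coeff j := by
      intro i j
      rw [mul_sub, coeff_sub, coeff_mul_C, ← mul_assoc]
      rcases j with _ | j
      · simp [mul_comm]
      · rw [coeff_mul_X, coeff_mul_C]; simp [mul_comm]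
    rw [add_mul, add_mul, coeff_add, coeff_add, coeff_add, coeff_C_mul, coeff_C_mul, mul_comm (_ - _), key]
    constructor
    · intro h
      rw [(ih i j).1 (by omega)]
      have a1 : (if j = 0 then 0 else α x * (R.coeff i).coeff (j-1)) = 0 := by
        split_ifs
        · rfl
        · rw [(ih i (j-1)).1 (by omega)]; simp
      rw [a1]
      rcases i with _ | i
      · simp
      · rw [coeff_X_mul, (ih i j).1 (by omega)]; simp
    · intro h
      rw [(ih i j).1 (by omega)]
      have a1 : (if j = 0 then 0 else α x * (R.coeff i).coeff (j-1)) = α x * f.coeff i := by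
        split_ifs with hj
        · rw [coeff_eq_zero_of_natDegree_lt (by omega), mul_zero]
        · rw [(ih i (j-1)).2 (by omega)]
      rw [a1]
      rcases i with _ | i
      · simp
      · rw [coeff_X_mul, coeff_X_mul, (ih i j).2 (by omega)]; simp

lemma lac_exists {F ι : Type*} [Field F] [Fintype F] [DecidableEq ι] (S : Finset ι) (α β : ι → F)
    (hb : ∀ u v : F, ∃ x ∈ S, β x = u * α x + v) (k : ℕ) (hk : S.card = Fintype.card F + k)
    (hkq : k + 1 < Fintype.card F) :
    ∃ g h : F[X], (∏ x ∈ S, (X + C (α x))) = X ^ (Fintype.card F) * g + h ∧ g ≠ 0 ∧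
      g.natDegree = k ∧ h.natDegree ≤ k := by
  classical
  obtain ⟨q, hq⟩ : ∃ q, q = Fintype.card F := ⟨_, rfl⟩
  have hq1 : 1 < q := hq ▸ Fintype.one_lt_card
  set f : F[X] := ∏ x ∈ S, (X + C (α x)) with hf
  have hfm : f.Monic := monic_prod_of_monic _ _ fun x _ => monic_X_add_C _
  have hfd : f.natDegree = q + k := by
    rw [hf, natDegree_prod_of_monic _ _ fun x _ => monic_X_add_C _]; simp [hk, hq]
  have hcoef : ∀ i, k + 1 ≤ i → i < q → f.coeff i = 0 := by
    intro i hi1 hi2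
    set R : F[X][X] := ∏ x ∈ S, (X + C (C (α x) * X - C (β x))) with hR
    have hRu : ∀ u : F, (R.coeff i).eval u = if i = k + 1 then -1 else 0 := by
      intro u
      have e1 : (R.coeff i).eval u = (R.map (evalRingHom u)).coeff i := by rw [coeff_map]; rfl
      have e2 : R.map (evalRingHom u) = ∏ x ∈ S, (X + C (α x * u - β x)) := by
        rw [hR, Polynomial.map_prod]; simp
      rw [e1, e2]
      set G : F[X] := ∏ x ∈ S, (X + C (α x * u - β x)) with hG
      have hGm : G.Monic := monic_prod_of_monic _ _ fun x _ => monic_X_add_C _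
      have hGd : G.natDegree = q + k := by
        rw [hG, natDegree_prod_of_monic _ _ fun x _ => monic_X_add_C _]
        simp only [natDegree_X_add_C]; simp [hk, hq]
      have hXd : (X ^ q - X : F[X]).natDegree = q := FiniteField.X_pow_card_sub_X_natDegree_eq F hq1
      have hXm : (X ^ q - X : F[X]).Monic := monic_X_pow_sub (by simpa using hq1)
      have hroots : (X ^ q - X : F[X]).roots = Finset.univ.val := by
        rw [hq]; exact FiniteField.roots_X_pow_card_sub_X F
      have hsp : (X ^ q - X : F[X]).Splits := by
        rw [splits_iff_card_roots, hroots, hXd, hq]; rfl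
      obtain ⟨Q, hQ⟩ : (X ^ q - X : F[X]) ∣ G := by
        apply hsp.dvd_of_roots_le_roots hXm.ne_zero
        rw [hroots, Multiset.le_iff_subset Finset.univ.nodup]
        intro v _
        rw [mem_roots hGm.ne_zero, IsRoot, hG, eval_prod]
        obtain ⟨x, hx, hxe⟩ := hb u v
        apply Finset.prod_eq_zero hx
        simp [hxe]; ring
      have hQm : Q.Monic := hXm.of_mul_monic_left (hQ ▸ hGm)
      have hQd : Q.natDegree = k := by
        have := hXm.natDegree_mul hQm
        rw [← hQ] at this; omega
      rw [hQ, sub_mul, coeff_sub, coeff_X_pow_mul', if_neg (by omega)]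
      obtain ⟨i, rfl⟩ : ∃ i', i = i' + 1 := ⟨i - 1, by omega⟩
      rw [coeff_X_mul]
      split_ifs with h
      · have : i = Q.natDegree := by omega
        rw [this, hQm.coeff_natDegree]; simp
      · rw [coeff_eq_zero_of_natDegree_lt (by omega)]; simp
    have hz : R.coeff i - C (if i = k + 1 then -1 else 0) = 0 := by
      apply eq_zero_of_natDegree_lt_card_of_eval_eq_zero' _ Finset.univ
      · intro u _
        rw [eval_sub, hRu, eval_C, sub_self]
      · rw [Finset.card_univ, ← hq]
        refine lt_of_le_of_lt (b := q - 1) ?_ (by omega)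
        rw [natDegree_sub_C, natDegree_le_iff_coeff_eq_zero]
        intro j hj
        exact (biv_coeff S α β i j).1 (by omega)
    have h1 := (biv_coeff S α β i (q + k - i)).2 (by omega)
    rw [← hR, sub_eq_zero.mp hz, coeff_C, if_neg (by omega)] at h1
    exact h1.symm
  have hXm : (X ^ q : F[X]).Monic := monic_X_pow q
  have hdecomp := modByMonic_add_div f (X ^ q)
  have hgd : (f /ₘ X ^ q).natDegree = k := by
    rw [natDegree_divByMonic f hXm, hfd]; simp
  refine ⟨f /ₘ X ^ q, f %ₘ X ^ q, ?_, ?_, hgd, ?_⟩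
  · rw [← hq, add_comm]; exact hdecomp.symm
  · intro h
    rw [h, mul_zero, add_zero] at hdecomp
    have := natDegree_modByMonic_lt f hXm (by intro h; have := congrArg natDegree h; simp at this; omega)
    rw [hdecomp, hfd] at this; simp at this
  · rw [natDegree_le_iff_coeff_eq_zero]
    intro i hi
    by_cases hiq : i < q
    · have := congrArg (fun P => coeff P i) hdecomp
      simp only [coeff_add, coeff_X_pow_mul', if_neg (not_le.mpr hiq), add_zero] at this
      rw [this]; exact hcoef i hi hiq
    · apply coeff_eq_zero_of_natDegree_lt
      have := natDegree_modByMonic_lt f hXm (by intro h; have := congrArg natDegree h; simp at this; omega)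
      simp at this; omega

lemma jamison {F ι : Type*} [Field F] [Fintype F] [DecidableEq ι] (S : Finset ι) (α β : ι → F)
    (hb : ∀ u v : F, ∃ x ∈ S, β x = u * α x + v) (hs : ∀ a, ∃ x ∈ S, α x = a) :
    2 * (Fintype.card F - 1) < S.card := by
  classical
  by_contra hlt
  obtain ⟨x, hx, -⟩ := hs 0
  set P : MvPolynomial (Fin 2) F := ∏ y ∈ S.erase x, (MvPolynomial.C (α y - α x) * MvPolynomial.X 0 +
    MvPolynomial.C (β y - β x) * MvPolynomial.X 1 + 1) with hP
  have hdeg : P.totalDegree ≤ (S.erase x).card := by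
    refine (MvPolynomial.totalDegree_finsetProd _ _).trans ?_
    refine (Finset.sum_le_card_nsmul _ _ 1 ?_).trans (by simp)
    intro y _
    refine (MvPolynomial.totalDegree_add _ _).trans (max_le ?_ (by simp))
    refine (MvPolynomial.totalDegree_add _ _).trans (max_le ?_ ?_) <;>
    exact (MvPolynomial.totalDegree_mul _ _).trans
      (by rw [MvPolynomial.totalDegree_C, MvPolynomial.totalDegree_X])
  have hc : (S.erase x).card + 1 = S.card := Finset.card_erase_add_one hx
  have h0 := MvPolynomial.sum_eval_eq_zero P (by
    simp only [Fintype.card_fin]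
    omega)
  rw [Fintype.sum_eq_single 0] at h0
  · rw [hP, map_prod] at h0
    simp at h0
  · intro w hw
    rw [hP, map_prod]
    obtain ⟨y, hy, hye⟩ : ∃ y ∈ S, (α y - α x) * w 0 + (β y - β x) * w 1 + 1 = 0 := by
      by_cases h1 : w 1 = 0
      · have h0 : w 0 ≠ 0 := by
          intro h0; apply hw; ext i; fin_cases i <;> simp [h0, h1]
        obtain ⟨y, hy, e⟩ := hs (α x - 1 / w 0)
        refine ⟨y, hy, ?_⟩
        rw [e, h1]; field_simp; ring
      · obtain ⟨y, hy, e⟩ := hb (-(w 0 / w 1)) (β x + (α x * w 0 - 1) / w 1)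
        refine ⟨y, hy, ?_⟩
        rw [e]; field_simp; ring
    have hyx : y ≠ x := by rintro rfl; simp at hye
    apply Finset.prod_eq_zero (Finset.mem_erase.mpr ⟨hyx, hy⟩)
    simpa using hye

lemma affine_core {F ι : Type*} [Field F] [Fintype F] [DecidableEq ι] [DecidableEq F]
    (p : ℕ) [Fact p.Prime] [CharP F p]
    (hF : Fintype.card F = p ^ 3) (S : Finset ι) (α β : ι → F)
    (hb : ∀ u v : F, ∃ x ∈ S, β x = u * α x + v)
    (hm : ∀ a : F, (S.filter (fun x => α x = a)).card < p ^ 3) : p ^ 3 + p ^ 2 ≤ S.card := by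
  have hp : p.Prime := Fact.out
  have hp2 := hp.two_le
  by_contra hlt
  have hge : p ^ 3 ≤ S.card := by
    rw [← hF, ← Finset.card_univ]
    refine (Finset.card_le_card (t := S.image β) ?_).trans Finset.card_image_le
    intro v _
    obtain ⟨x, hx, e⟩ := hb 0 v
    exact Finset.mem_image.mpr ⟨x, hx, by rw [e]; ring⟩
  obtain ⟨k, hk⟩ := Nat.exists_eq_add_of_le hge
  have hkp : k < p ^ 2 := by omega
  have h32 : 2 * p ^ 2 ≤ p ^ 3 := by rw [pow_succ p 2, mul_comm]; exact Nat.mul_le_mul_left _ hp2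
  have h4 : 2 ^ 2 ≤ p ^ 2 := Nat.pow_le_pow_left hp2 2
  obtain ⟨g, h, hfe, hg, hgd, hhd⟩ := lac_exists S α β hb k (by rw [hF, hk]) (by rw [hF]; omega)
  rw [hF] at hfe
  have hfm : (∏ x ∈ S, (X + C (α x))).Monic := monic_prod_of_monic _ _ fun x _ => monic_X_add_C _
  have := lac_core p hF _ g h (Splits.prod fun x _ => Splits.X_add_C _) hfe hg (by omega) ?_ ?_
  · omega
  · by_contra hall
    push Not at hall
    have := jamison S α β hb (fun a => by
      have h1 := hall (-a)
      rw [eval_prod, Finset.prod_eq_zero_iff] at h1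
      obtain ⟨x, hx, e⟩ := h1
      refine ⟨x, hx, ?_⟩
      simp at e
      linear_combination e)
    rw [hF] at this
    omega
  · intro a hdvd
    rw [← le_rootMultiplicity_iff hfm.ne_zero, ← count_roots] at hdvd
    have e : (∏ x ∈ S, (X + C (α x))) = ((S.val.map (fun x => - α x)).map (fun a => X - C a)).prod := by
      rw [Multiset.map_map]; simp
    rw [e, roots_multiset_prod_X_sub_C, Multiset.count_map] at hdvd
    have h2 := hm (-a)
    have e3 : (S.filter (fun x => α x = -a)).card = (Multiset.filter (fun x => a = - α x) S.val).card := by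
      rw [Finset.card_def, Finset.filter_val]
      congr 1
      apply Multiset.filter_congr
      intro x _
      constructor
      · intro h; rw [h]; simp
      · intro h; rw [h]; simp
    omega

open scoped LinearAlgebra.Projectivization

lemma finrank_ker_two {F E : Type*} [Field F] [AddCommGroup E] [Module F E] [Module.Finite F E]
    (h3 : Module.finrank F E = 3)
    (φ : E →ₗ[F] F) (hφ : φ ≠ 0) : Module.finrank F (LinearMap.ker φ) = 2 := by
  have h1 := LinearMap.finrank_range_add_finrank_ker φ
  rw [LinearMap.range_eq_top.mpr (LinearMap.surjective hφ), finrank_top, h3, Module.finrank_self] at h1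
  omega

lemma sub_le_iff {F E : Type*} [Field F] [AddCommGroup E] [Module F E] (x : ℙ F E)
    (W : Submodule F E) : x.submodule ≤ W ↔ x.rep ∈ W := by
  rw [Projectivization.submodule_eq, Submodule.span_singleton_le_iff_mem]

lemma proj_core {F E : Type*} [Field F] [Fintype F] [AddCommGroup E] [Module F E] [Module.Finite F E]
    (h3 : Module.finrank F E = 3) (p : ℕ) [Fact p.Prime] [CharP F p]
    (hF : Fintype.card F = p ^ 3) (B : Set (ℙ F E))
    (hblock : ∀ W : Submodule F E, Module.finrank F W = 2 → ∃ x ∈ B, x.submodule ≤ W)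
    (hline : ∀ W : Submodule F E, Module.finrank F W = 2 → ¬ {x : ℙ F E | x.submodule ≤ W} ⊆ B) :
    p ^ 3 + p ^ 2 + 1 ≤ B.ncard := by
  classical
  haveI : Finite E := Module.finite_of_finite F
  haveI : Finite (ℙ F E) := inferInstance
  haveI : Fintype (ℙ F E) := Fintype.ofFinite _
  obtain ⟨B0, hB0, hmin⟩ := exists_minimal_le_of_wellFoundedLT
    (fun B : Set (ℙ F E) => ∀ W : Submodule F E, Module.finrank F W = 2 → ∃ x ∈ B, x.submodule ≤ W)
    B hblock
  have hblock0 := hmin.prop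
  refine le_trans ?_ (Set.ncard_le_ncard hB0 (Set.toFinite _))
  have b0 := Module.finBasisOfFinrankEq F E h3
  obtain ⟨x0, hx0, -⟩ := hblock0 _ (finrank_ker_two h3 (b0.coord 0) (by
    intro h; have := congrArg (fun φ => φ (b0 0)) h; simp at this))
  obtain ⟨W, hW, hWx⟩ : ∃ W : Submodule F E, Module.finrank F W = 2 ∧
      ∀ x ∈ B0, x.submodule ≤ W → x = x0 := by
    by_contra hcon
    push Not at hcon
    have := hmin.le_of_le (y := B0 \ {x0}) (fun W hW => by
      obtain ⟨x, hx, hxW, hne⟩ := hcon W hW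
      exact ⟨x, ⟨hx, hne⟩, hxW⟩) Set.diff_subset
    exact (this hx0).2 rfl
  have hx0W : x0.rep ∈ W := by
    obtain ⟨x, hx, hxW⟩ := hblock0 W hW
    rw [← hWx x hx hxW, ← sub_le_iff]; exact hxW
  obtain ⟨w1, hw1, hw1'⟩ : ∃ w ∈ W, w ∉ Submodule.span F {x0.rep} := by
    by_contra hcon
    push Not at hcon
    have := Submodule.finrank_mono (show W ≤ Submodule.span F {x0.rep} from hcon)
    rw [hW, finrank_span_singleton x0.rep_nonzero] at this
    omega
  obtain ⟨w2, hw2⟩ : ∃ w, w ∉ W := by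
    by_contra hcon
    push Not at hcon
    have : W = ⊤ := Submodule.eq_top_iff'.mpr hcon
    rw [this, finrank_top] at hW; omega
  have hli : LinearIndependent F ![x0.rep, w1, w2] := by
    rw [Fintype.linearIndependent_iff]
    intro c hc
    rw [Fin.sum_univ_three] at hc
    simp only [Matrix.cons_val] at hc
    have c2 : c 2 = 0 := by
      by_contra h
      apply hw2
      rw [← Submodule.smul_mem_iff W h]
      have : c 2 • w2 = -(c 0 • x0.rep + c 1 • w1) := by
        rw [eq_neg_iff_add_eq_zero, add_comm]; exact hc
      rw [this]
      exact W.neg_mem (W.add_mem (W.smul_mem _ hx0W) (W.smul_mem _ hw1))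
    rw [c2, zero_smul, add_zero] at hc
    have c1 : c 1 = 0 := by
      by_contra h
      apply hw1'
      rw [← Submodule.smul_mem_iff _ h]
      have : c 1 • w1 = -(c 0 • x0.rep) := by
        rw [eq_neg_iff_add_eq_zero, add_comm]; exact hc
      rw [this]
      exact Submodule.neg_mem _ (Submodule.smul_mem _ _ (Submodule.mem_span_singleton_self _))
    rw [c1, zero_smul, add_zero] at hc
    have c0 : c 0 = 0 := (smul_eq_zero.mp hc).resolve_right x0.rep_nonzero
    intro i; fin_cases i <;> assumption
  let b := basisOfLinearIndependentOfCardEqFinrank hli (by simp [h3])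
  have hb : ∀ i, b i = ![x0.rep, w1, w2] i := fun i => by simp [b]
  obtain ⟨l, hl⟩ : ∃ l : Fin 3 → E →ₗ[F] F, l = b.coord := ⟨_, rfl⟩
  have hrep : ∀ w, w = l 0 w • x0.rep + l 1 w • w1 + l 2 w • w2 := by
    intro w
    have := (b.sum_repr w).symm
    rw [Fin.sum_univ_three, hb, hb, hb] at this
    simpa [hl] using this
  have l0 : l 0 x0.rep = 1 := by have := hb 0; simp at this; rw [← this]; simp [hl]
  have l1 : l 1 x0.rep = 0 := by have := hb 0; simp at this; rw [← this]; simp [hl]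
  have l2 : l 2 x0.rep = 0 := by have := hb 0; simp at this; rw [← this]; simp [hl]
  have l12 : l 1 w1 = 1 := by have := hb 1; simp at this; rw [← this]; simp [hl]
  have l22 : l 2 w1 = 0 := by have := hb 1; simp at this; rw [← this]; simp [hl]
  have hker : ∀ w, l 2 w = 0 → w ∈ W := by
    intro w h
    rw [hrep w, h, zero_smul, add_zero]
    exact W.add_mem (W.smul_mem _ hx0W) (W.smul_mem _ hw1)
  have hprop : ∀ (x y : ℙ F E) (c : F), x.rep = c • y.rep → x = y := by
    intro x y c h
    rw [← x.mk_rep, ← y.mk_rep, Projectivization.mk_eq_mk_iff']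
    exact ⟨c, h.symm⟩
  set S : Finset (ℙ F E) := (B0 \ {x0}).toFinset with hS
  have hSmem : ∀ x, x ∈ S ↔ x ∈ B0 ∧ x ≠ x0 := by intro x; simp [hS]
  have hcard : S.card + 1 = B0.ncard := by
    rw [← Set.ncard_diff_singleton_add_one hx0 (Set.toFinite _), hS, Set.ncard_eq_toFinset_card']
  have hS2 : ∀ x ∈ S, l 2 x.rep ≠ 0 := by
    intro x hx h
    rw [hSmem] at hx
    exact hx.2 (hWx x hx.1 ((sub_le_iff _ _).2 (hker _ h)))
  rw [← hcard]
  apply Nat.succ_le_succ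
  have hinj : ∀ x y : ℙ F E, l 2 x.rep ≠ 0 → l 2 y.rep ≠ 0 →
      l 1 x.rep / l 2 x.rep = l 1 y.rep / l 2 y.rep →
      l 0 x.rep / l 2 x.rep = l 0 y.rep / l 2 y.rep → x = y := by
    intro x y hx hy h1 h0
    obtain ⟨c, hc⟩ : ∃ c, c = l 2 x.rep / l 2 y.rep := ⟨_, rfl⟩
    apply hprop x y c
    rw [hrep x.rep]
    conv_rhs => rw [hrep y.rep]
    rw [smul_add, smul_add, smul_smul, smul_smul, smul_smul]
    rw [div_eq_div_iff hx hy] at h1 h0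
    congr 1
    · congr 1
      · congr 1; rw [hc]; field_simp; linear_combination h0
      · congr 1; rw [hc]; field_simp; linear_combination h1
    · congr 1; rw [hc]; field_simp
  apply affine_core p hF S (fun x => l 1 x.rep / l 2 x.rep) (fun x => l 0 x.rep / l 2 x.rep)
  · intro u v
    obtain ⟨x, hx, hxW⟩ := hblock0 _ (finrank_ker_two h3 (l 0 - u • l 1 - v • l 2) (by
      intro h; have := congrArg (fun φ => φ x0.rep) h; simp [l0, l1, l2] at this))
    rw [sub_le_iff, LinearMap.mem_ker] at hxW
    simp only [LinearMap.sub_apply, LinearMap.smul_apply, smul_eq_mul] at hxW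
    have hxS : x ∈ S := by
      rw [hSmem]
      refine ⟨hx, ?_⟩
      rintro rfl
      simp [l0, l1, l2] at hxW
    have := hS2 x hxS
    refine ⟨x, hxS, ?_⟩
    field_simp
    linear_combination hxW
  · intro a
    by_contra hge
    have hφ : (l 1 - a • l 2) ≠ 0 := by
      intro h; have := congrArg (fun φ => φ w1) h; simp [l12, l22] at this
    apply hline _ (finrank_ker_two h3 _ hφ)
    refine Set.Subset.trans ?_ hB0
    intro x hx
    simp only [Set.mem_setOf_eq] at hx
    rw [sub_le_iff, LinearMap.mem_ker] at hx
    simp only [LinearMap.sub_apply, LinearMap.smul_apply, smul_eq_mul] at hx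
    by_cases h2 : l 2 x.rep = 0
    · have h1 : l 1 x.rep = 0 := by rw [h2] at hx; simpa using hx
      have : x = x0 := by
        apply hprop x x0 (l 0 x.rep)
        conv_lhs => rw [hrep x.rep, h1, h2]
        simp
      rw [this]; exact hx0
    · set A := S.filter (fun x => l 1 x.rep / l 2 x.rep = a) with hA
      have himg : A.image (fun x => l 0 x.rep / l 2 x.rep) = Finset.univ := by
        rw [← Finset.card_eq_iff_eq_univ, hF]
        apply le_antisymm
        · rw [← hF]; exact Finset.card_le_univ _
        · rw [Finset.card_image_of_injOn]
          · omega
          · intro y hy z hz hyz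
            simp only [hA, Finset.coe_filter, Set.mem_setOf_eq] at hy hz
            exact hinj y z (hS2 y hy.1) (hS2 z hz.1) (hy.2.trans hz.2.symm) hyz
      have hmem := Finset.mem_univ (l 0 x.rep / l 2 x.rep)
      rw [← himg, Finset.mem_image] at hmem
      obtain ⟨y, hy, hyx⟩ := hmem
      rw [hA, Finset.mem_filter] at hy
      have : y = x := by
        apply hinj y x (hS2 y hy.1) h2 _ hyx
        rw [hy.2, eq_div_iff h2]
        linear_combination -hx
      rw [← this]
      exact ((hSmem y).1 hy.1).1


end Aux

/-- (Blokhuis) Let `p` be a prime and let `B` be a blocking set in `PG(2, p³)` (points are the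
1-dimensional subspaces of `F_{p³}^3`, lines are the 2-dimensional subspaces) that does not
contain the full point set of any line. Then `|B| ≥ p³ + p² + 1`. -/
theorem statement14 (p : ℕ) [Fact p.Prime]
    (B : Set (ℙ (GaloisField p 3) (Fin 3 → GaloisField p 3)))
    (hblock : ∀ W : Submodule (GaloisField p 3) (Fin 3 → GaloisField p 3),
      Module.finrank (GaloisField p 3) W = 2 → ∃ x ∈ B, x.submodule ≤ W)
    (hline : ∀ W : Submodule (GaloisField p 3) (Fin 3 → GaloisField p 3),
      Module.finrank (GaloisField p 3) W = 2 →
      ¬ {x : ℙ (GaloisField p 3) (Fin 3 → GaloisField p 3) | x.submodule ≤ W} ⊆ B) :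
    p ^ 3 + p ^ 2 + 1 ≤ B.ncard := by
  haveI : Fintype (GaloisField p 3) := Fintype.ofFinite _
  refine proj_core (by simp) p ?_ B hblock hline
  rw [← Nat.card_eq_fintype_card]
  exact GaloisField.card p 3 (by norm_num)
end

section
/- Consider the hypergraph G1 whose vertex set is {1,...,6} × {1,...,4} (vertex (i, j) being the i-th vertex of side j), and whose edges are the fourteen 4-element sets encoded by the vectors 1111, 1333, 1444, 5314, 6341, 6413, 2222, 2155, 3162, 4652, 4265, 2666, 2562, 1211, where the vector abcd encodes the edge {(a,1), (b,2), (c,3), (d,4)}. Then G1 is a 4-partite hypergraph (with sides {1,...,6} × {j} for j = 1, 2, 3, 4) whose matching number is ν(G1) = 2 and whose vertex cover number is τ(G1) = 6; in particular G1 is a 4-Ryser hypergraph. -/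
/-- The edge of the hypergraph `G1` encoded by the vector `abcd`:
it contains the `a`-th vertex of side 1, the `b`-th vertex of side 2,
the `c`-th vertex of side 3 and the `d`-th vertex of side 4. -/
def enc (a b c d : ℕ) : Finset (ℕ × ℕ) := {(a, 1), (b, 2), (c, 3), (d, 4)}

/-- The edge set of the hypergraph `G1` of Abu-Khazneh. -/
def G1 : Finset (Finset (ℕ × ℕ)) :=
  {enc 1 1 1 1, enc 1 3 3 3, enc 1 4 4 4, enc 5 3 1 4, enc 6 3 4 1, enc 6 4 1 3,
   enc 2 2 2 2, enc 2 1 5 5, enc 3 1 6 2, enc 4 6 5 2, enc 4 2 6 5, enc 2 6 6 6,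
   enc 2 5 6 2, enc 1 2 1 1}

/-- The vertex set of `G1`: `{1,...,6} × {1,...,4}`. -/
def G1V : Finset (ℕ × ℕ) := Finset.Icc 1 6 ×ˢ Finset.Icc 1 4

/-- The `j`-th side of `G1`: `{1,...,6} × {j}`. -/
def G1side (j : Fin 4) : Finset (ℕ × ℕ) := Finset.Icc 1 6 ×ˢ {(j : ℕ) + 1}

def noCover : ℕ → List (List (ℕ × ℕ)) → Bool
  | 0, E => !E.isEmpty
  | k+1, E => match E with
    | [] => false
    | e :: E' => e.all fun v => noCover k (E'.filter fun f => !(f.elem v))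

theorem noCover_spec : ∀ (k : ℕ) (E : List (List (ℕ × ℕ))), noCover k E = true →
    ∀ B : Finset (ℕ × ℕ), (∀ e ∈ E, ∃ v ∈ e, v ∈ B) → k < B.card := by
  intro k
  induction k with
  | zero =>
    intro E h B hB
    cases E with
    | nil => simp [noCover] at h
    | cons e E =>
      obtain ⟨v, _, hv⟩ := hB e (by simp)
      exact Finset.card_pos.2 ⟨v, hv⟩
  | succ k ih =>
    intro E h B hB
    cases E with
    | nil => simp [noCover] at h
    | cons e E =>
      obtain ⟨v, hve, hv⟩ := hB e (by simp)
      rw [noCover, List.all_eq_true] at h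
      have h1 := ih _ (h v hve) (B.erase v) (by
        intro f hf
        rw [List.mem_filter] at hf
        obtain ⟨w, hw, hwB⟩ := hB f (by simp [hf.1])
        refine ⟨w, hw, Finset.mem_erase.2 ⟨?_, hwB⟩⟩
        rintro rfl
        have := hf.2
        simp at this
        exact this hw)
      rw [Finset.card_erase_of_mem hv] at h1
      omega

def encL (a b c d : ℕ) : List (ℕ × ℕ) := [(a, 1), (b, 2), (c, 3), (d, 4)]

def G1L : List (List (ℕ × ℕ)) :=
  [encL 1 1 1 1, encL 1 3 3 3, encL 1 4 4 4, encL 5 3 1 4, encL 6 3 4 1, encL 6 4 1 3,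
   encL 2 2 2 2, encL 2 1 5 5, encL 3 1 6 2, encL 4 6 5 2, encL 4 2 6 5, encL 2 6 6 6,
   encL 2 5 6 2, encL 1 2 1 1]

theorem noCover_G1L : noCover 5 G1L = true := by decide +kernel

theorem G1L_mem : ∀ e ∈ G1L, e.toFinset ∈ G1 := by decide +kernel

theorem G1_triple : ∀ a ∈ G1, ∀ b ∈ G1, Disjoint a b → ∀ c ∈ G1, Disjoint a c →
    ¬ Disjoint b c := by decide +kernel

theorem G1_cover : coverNumber G1 = 6 := by
  have hc : IsCover G1 {(1, 1), (1, 2), (1, 3), (1, 4), (2, 1), (4, 1)} := by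
    unfold IsCover; decide +kernel
  apply le_antisymm
  · exact Nat.sInf_le ⟨_, hc, by decide⟩
  · refine le_csInf ⟨_, _, hc, rfl⟩ ?_
    rintro n ⟨B, hB, rfl⟩
    refine noCover_spec 5 G1L noCover_G1L B ?_
    intro e he
    obtain ⟨v, hv⟩ := hB _ (G1L_mem e he)
    rw [Finset.mem_inter, List.mem_toFinset] at hv
    exact ⟨v, hv⟩

theorem G1_matching : matchingNumber G1 = 2 := by
  have hm : IsMatching G1 {enc 1 1 1 1, enc 2 2 2 2} := by
    unfold IsMatching; decide +kernel
  have hub : ∀ n ∈ {n | ∃ M : Finset (Finset (ℕ × ℕ)), IsMatching G1 M ∧ M.card = n}, n ≤ 2 := by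
    rintro n ⟨M, ⟨hM, hd⟩, rfl⟩
    by_contra! h
    obtain ⟨a, b, c, ha, hb, hc, hab, hac, hbc⟩ := Finset.two_lt_card_iff.1 h
    exact G1_triple a (hM ha) b (hM hb) (hd a ha b hb hab) c (hM hc) (hd a ha c hc hac)
      (hd b hb c hc hbc)
  apply le_antisymm
  · exact csSup_le ⟨_, _, hm, rfl⟩ hub
  · exact le_csSup ⟨2, hub⟩ ⟨_, hm, by decide +kernel⟩

/-- The hypergraph `G1` with vertex set `{1,...,6} × {1,...,4}` and the fourteen edges encoded by
`1111, 1333, 1444, 5314, 6341, 6413, 2222, 2155, 3162, 4652, 4265, 2666, 2562, 1211` is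
`4`-partite with sides `{1,...,6} × {j}` for `j = 1, 2, 3, 4`, has matching number `2` and
vertex cover number `6`; in particular it is a `4`-Ryser hypergraph. -/
theorem statement18 :
    (∀ i j : Fin 4, i ≠ j → Disjoint (G1side i) (G1side j)) ∧
    G1V = Finset.univ.biUnion G1side ∧
    (∀ e ∈ G1, e ⊆ G1V) ∧
    (∀ e ∈ G1, ∀ j : Fin 4, (e ∩ G1side j).card = 1) ∧
    IsPartite 4 G1V G1 ∧
    matchingNumber G1 = 2 ∧
    coverNumber G1 = 6 ∧
    (4 - 1) * matchingNumber G1 ≤ coverNumber G1 := by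
  have h1 : ∀ i j : Fin 4, i ≠ j → Disjoint (G1side i) (G1side j) := by decide +kernel
  have h2 : G1V = Finset.univ.biUnion G1side := by decide +kernel
  have h3 : ∀ e ∈ G1, e ⊆ G1V := by decide +kernel
  have h4 : ∀ e ∈ G1, ∀ j : Fin 4, (e ∩ G1side j).card = 1 := by decide +kernel
  refine ⟨h1, h2, h3, h4, ⟨h3, G1side, h1, h2, h4⟩, G1_matching, G1_cover, ?_⟩
  rw [G1_matching, G1_cover]
end
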